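/- arXiv:2405.04234 — 2 statements merged into one kernel-verified Lean document; each statement's English description precedes it below -/
import Mathlib

section
/- Suppose C(x,y) = y₁·F(x₁,…,x_r) + Σ_{j=1}^{m} x_j q_j(y) + R(y) with F a nonsingular positive definite integral quadratic form in r variables, 5 ≤ r ≤ m, matrix M and determinant Δ, and suppose y₁ divides q_i(y) in ℤ[y] for every 1 ≤ i ≤ r. For z = (z₂,…,z_h) write (1,z) = (1,z₂,…,z_h) and set s(z) = (q₁(1,z),…,q_r(1,z)); let F^{−1} denote the quadratic form with matrix M^{−1} and adj M the adjugate of M. Assume that either (i) r < m and there exist z ∈ ℝ^{h−1} and r+1 ≤ j ≤ m with q_j(0,z) ≠ 0, or (ii) r = m and there exists z ∈ ℝ^{h−1} with R(0,z) ≠ 0. Then there exist c > 0 and B₀ such that for every B ≥ B₀ there is a set 𝒞 ⊆ (ℤ^{m−r} × ℤ^{h−1}) ∩ [−B,B]^{n−r−1} with |𝒞| ≥ c·B^{(2/3)(n−r−1)} such that for every (w_{r+1},…,w_m, z₂,…,z_h) ∈ 𝒞: (a) Σ_{i=r+1}^{m} w_i q_i(1,z) − Δ·R(1,z) ≥ B²/4,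 and (b) there exists x ∈ ℤ^r with F(x + (adj M)·s(z)) = Δ²·(F^{−1}(s(z)) − 4R(1,z)) + Δ·Σ_{i=r+1}^{m} w_i q_i(1,z). -/
open Matrix MvPolynomial

noncomputable def gs (q : ℕ) [NeZero q] (a l h m : ℤ) : ℂ :=
  ∑ b : ZMod q, ZMod.stdAddChar ((h * (a * b ^ 2 + l * b) + m * b : ZMod q))

lemma gs_normSq (q : ℕ) [NeZero q] (a l h m : ℤ) :
    ‖gs q a l h m‖ ^ 2 ≤ q * ((Finset.univ.filter (fun u : ZMod q => 2 * (h:ZMod q) * a * u = 0)).card : ℝ) := by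
  classical
  have h1 : gs q a l h m * (starRingEnd ℂ) (gs q a l h m) =
      ∑ u : ZMod q, ZMod.stdAddChar ((h * (a * u ^ 2 + l * u) + m * u : ZMod q)) *
        ∑ c : ZMod q, ZMod.stdAddChar (c * (2 * (h:ZMod q) * (a:ZMod q) * u)) := by
    unfold gs
    rw [map_sum, Finset.sum_mul_sum]
    simp_rw [Finset.mul_sum]
    refine Finset.sum_comm.trans (Eq.trans ?_ Finset.sum_comm)
    apply Finset.sum_congr rfl
    intro c _
    rw [← Equiv.sum_comp (Equiv.addLeft c)]
    apply Finset.sum_congr rfl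
    intro u _
    have : (starRingEnd ℂ) (ZMod.stdAddChar ((h * (a * c ^ 2 + l * c) + m * c : ZMod q))) =
        ZMod.stdAddChar (-(h * (a * c ^ 2 + l * c) + m * c : ZMod q)) := by
      rw [AddChar.map_neg_eq_conj]
    rw [this, ← AddChar.map_add_eq_mul, ← AddChar.map_add_eq_mul]
    congr 1
    simp only [Equiv.coe_addLeft]
    ring
  have h2 : ((‖gs q a l h m‖ ^ 2 : ℝ) : ℂ) = gs q a l h m * (starRingEnd ℂ) (gs q a l h m) := by
    rw [Complex.mul_conj, Complex.normSq_eq_norm_sq]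
  have h3 : ‖gs q a l h m‖ ^ 2 = ‖gs q a l h m * (starRingEnd ℂ) (gs q a l h m)‖ := by
    rw [← h2, Complex.norm_real, Real.norm_of_nonneg (by positivity)]
  rw [h3, h1]
  refine (norm_sum_le _ _).trans ?_
  have : ∀ u : ZMod q, ‖ZMod.stdAddChar ((h * (a * u ^ 2 + l * u) + m * u : ZMod q)) *
        ∑ c : ZMod q, ZMod.stdAddChar (c * (2 * (h:ZMod q) * (a:ZMod q) * u))‖ ≤
        if 2 * (h:ZMod q) * a * u = 0 then (q:ℝ) else 0 := by
    intro u
    rw [AddChar.sum_mulShift _ (ZMod.isPrimitive_stdAddChar q), norm_mul]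
    rw [AddChar.norm_apply, one_mul]
    split_ifs <;> simp [ZMod.card]
  refine (Finset.sum_le_sum (fun u _ => this u)).trans ?_
  rw [← Finset.sum_filter, Finset.sum_const, nsmul_eq_mul, mul_comm]

lemma card_le_two_a (q : ℕ) [NeZero q] (a h : ℤ) (ha : 0 < a) (hh : IsCoprime h (q:ℤ)) :
    ((Finset.univ.filter (fun u : ZMod q => 2 * (h:ZMod q) * a * u = 0)).card : ℝ) ≤ 2 * a := by
  classical
  have hu : IsUnit (h : ZMod q) := by
    obtain ⟨x, y, hxy⟩ := hh
    refine IsUnit.of_mul_eq_one (x : ZMod q) ?_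
    have := congrArg (fun t : ℤ => (t : ZMod q)) hxy
    push_cast at this
    simpa [mul_comm] using this
  have key : (Finset.univ.filter (fun u : ZMod q => 2 * (h:ZMod q) * a * u = 0)).card ≤
      (Finset.Ico (0:ℤ) (2 * a)).card := by
    apply Finset.card_le_card_of_injOn (fun u : ZMod q => (2 * a * u.val) / q)
    · intro u hu'
      have hq : (0:ℤ) < q := by exact_mod_cast Nat.pos_of_ne_zero (NeZero.ne q)
      have hv : ((u.val : ℕ) : ℤ) < q := by exact_mod_cast ZMod.val_lt u
      simp only [Finset.coe_Ico, Set.mem_Ico]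
      constructor
      · positivity
      · apply Int.ediv_lt_of_lt_mul hq
        nlinarith
    · intro u hu1 v hv1 huv
      have hdv : ∀ u : ZMod q, 2 * (h:ZMod q) * a * u = 0 → (q:ℤ) ∣ 2 * a * u.val := by
        intro u h0
        rw [← ZMod.intCast_zmod_eq_zero_iff_dvd]
        push_cast
        rw [ZMod.natCast_val, ZMod.cast_id', id]
        have : (h:ZMod q) * (2 * a * u) = 0 := by rw [← h0]; ring
        exact (hu.mul_right_eq_zero).1 this
      simp only [Finset.coe_filter, Finset.mem_univ, true_and, Set.mem_ofPred_eq] at hu1 hv1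
      have e1 := Int.ediv_mul_cancel (hdv u hu1)
      have e2 := Int.ediv_mul_cancel (hdv v hv1)
      simp only at huv
      rw [huv, e2] at e1
      have : ((u.val : ℕ) : ℤ) = v.val := by
        have h2a : (2 * a : ℤ) ≠ 0 := by positivity
        exact (mul_left_cancel₀ h2a e1).symm
      exact ZMod.val_injective q (by exact_mod_cast this)
  rw [Int.card_Ico] at key
  have : ((2 * a - 0).toNat : ℤ) = 2 * a := by
    rw [Int.toNat_of_nonneg] <;> linarith
  have h3 : ((2 * a - 0).toNat : ℝ) = 2 * a := by exact_mod_cast this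
  rw [← h3]
  exact_mod_cast key

lemma gs_bound (q : ℕ) [NeZero q] (a l h m : ℤ) (ha : 0 < a) (hh : IsCoprime h (q:ℤ)) :
    ‖gs q a l h m‖ ≤ Real.sqrt (q * (2 * a)) := by
  apply Real.le_sqrt_of_sq_le
  exact (gs_normSq q a l h m).trans (mul_le_mul_of_nonneg_left (card_le_two_a q a h ha hh) (by positivity))

lemma gs_bound_coprime (q : ℕ) [NeZero q] (a l h m : ℤ) (hh : IsCoprime h (q:ℤ))
    (ha : IsCoprime (2 * a) (q:ℤ)) :
    ‖gs q a l h m‖ ≤ Real.sqrt q := by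
  apply Real.le_sqrt_of_sq_le
  refine (gs_normSq q a l h m).trans ?_
  have hu : IsUnit (2 * (h : ZMod q) * a) := by
    have hc := hh.mul_left ha
    obtain ⟨x, y, hxy⟩ := hc
    refine IsUnit.of_mul_eq_one (x : ZMod q) ?_
    have := congrArg (fun t : ℤ => (t : ZMod q)) hxy
    push_cast at this
    simp only [CharP.cast_eq_zero, mul_zero, add_zero] at this
    rw [← this]; ring
  have : (Finset.univ.filter (fun u : ZMod q => 2 * (h:ZMod q) * a * u = 0)) = {0} := by
    ext u
    simp only [Finset.mem_filter, Finset.mem_univ, true_and, Finset.mem_singleton]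
    exact hu.mul_right_eq_zero
  rw [this]; simp

lemma gs_vanish (q : ℕ) [NeZero q] (a l h : ℤ) (hh : IsCoprime h (q:ℤ)) (p : ℕ) (hp : p.Prime)
    (hpq : p ∣ q) (hpa : (p:ℤ) ∣ a) (hpl : ¬ (p:ℤ) ∣ l) : gs q a l h 0 = 0 := by
  obtain ⟨d, rfl⟩ := hpq
  obtain ⟨a', rfl⟩ := hpa
  set ψ := (ZMod.stdAddChar : AddChar (ZMod (p*d)) ℂ)
  have hpd : (p : ZMod (p*d)) * d = 0 := by
    have : ((p*d : ℕ) : ZMod (p*d)) = 0 := CharP.cast_eq_zero _ _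
    exact_mod_cast this
  have h1 : gs (p*d) (p*a') l h 0 = ψ (h * l * d) * gs (p*d) (p*a') l h 0 := by
    conv_lhs => unfold gs
    rw [← Equiv.sum_comp (Equiv.addRight (d : ZMod (p*d)))]
    unfold gs
    rw [Finset.mul_sum]
    apply Finset.sum_congr rfl
    intro b _
    rw [← AddChar.map_add_eq_mul]
    congr 1
    simp only [Equiv.coe_addRight]
    push_cast
    linear_combination (h * a' * (2 * b + d) : ZMod (p*d)) * hpd
  have h2 : ψ (h * l * d) ≠ 1 := by
    intro hc
    rw [← AddChar.map_zero_eq_one ψ] at hc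
    have := ZMod.injective_stdAddChar hc
    have h3 : ((p*d : ℕ):ℤ) ∣ h * l * d := by
      rw [← ZMod.intCast_zmod_eq_zero_iff_dvd]
      push_cast; exact this
    have hd : (d:ℤ) ≠ 0 := by
      have := NeZero.ne (p*d)
      intro h0; apply this; simp_all
    push_cast at h3
    have h4 := Int.dvd_of_mul_dvd_mul_right hd h3
    rcases (Nat.prime_iff_prime_int.1 hp).dvd_or_dvd h4 with h5 | h5
    · have : IsUnit (p:ℤ) := hh.isUnit_of_dvd' h5 (by push_cast; exact Dvd.intro _ rfl)
      exact (Nat.prime_iff_prime_int.1 hp).not_isUnit this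
    · exact hpl h5
  have h6 : (ψ (h * l * d) - 1) * gs (p*d) (p*a') l h 0 = 0 := by
    rw [sub_mul, ← h1]; ring
  rcases mul_eq_zero.1 h6 with h7 | h7
  · exact absurd (sub_eq_zero.1 h7) h2
  · exact h7

noncomputable def th (a l : ℤ) (w : ℂ) : ℂ := jacobiTheta₂ (l * w) (2 * a * w)

lemma th_term (a l : ℤ) (w : ℂ) (t : ℤ) : jacobiTheta₂_term t (l * w) (2 * a * w) =
    Complex.exp (2 * Real.pi * Complex.I * w * (a * t ^ 2 + l * t)) := by
  unfold jacobiTheta₂_term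
  congr 1; ring

lemma sum_fin_zmod (q : ℕ) [NeZero q] (f : ZMod q → ℂ) :
    ∑ b : Fin q, f ((b : ℕ) : ZMod q) = ∑ b : ZMod q, f b := by
  apply Fintype.sum_bijective (fun b : Fin q => ((b : ℕ) : ZMod q))
  · rw [Fintype.bijective_iff_injective_and_card]
    constructor
    · intro x y hxy
      simp only at hxy
      rw [ZMod.natCast_eq_natCast_iff'] at hxy
      rw [Nat.mod_eq_of_lt x.2, Nat.mod_eq_of_lt y.2] at hxy
      exact Fin.ext hxy
    · simp [ZMod.card]
  · intro x; rfl

lemma th_major (a l : ℤ) (ha : 0 < a) (q : ℕ) [NeZero q] (h : ℤ) (w : ℂ) (hw : 0 < w.im) :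
    HasSum (fun m : ℤ => Complex.exp (2 * Real.pi * Complex.I * (m * l / (2 * a * q))
        - Real.pi * Complex.I * m ^ 2 / (2 * a * q ^ 2 * w)) * gs q a l h m)
      ((-Complex.I * (2 * a * q ^ 2 * w)) ^ (1 / 2 : ℂ) *
       Complex.exp (Real.pi * Complex.I * w * l ^ 2 / (2 * a)) * th a l (h / q + w)) := by
  have hq0 : (q : ℂ) ≠ 0 := by exact_mod_cast NeZero.ne q
  have ha0 : (a : ℂ) ≠ 0 := by exact_mod_cast ha.ne'
  have hw0 : w ≠ 0 := by rintro rfl; simp at hw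
  set τ : ℂ := 2 * a * q ^ 2 * w with hτ
  have hτim : 0 < τ.im := by
    have : τ = ((2 * a * q ^ 2 : ℝ) : ℂ) * w := by rw [hτ]; push_cast; ring
    rw [this, Complex.im_ofReal_mul]
    have : (0:ℝ) < a := by exact_mod_cast ha
    have : (0:ℝ) < q := by exact_mod_cast Nat.pos_of_ne_zero (NeZero.ne q)
    positivity
  have hτ0 : τ ≠ 0 := by intro h0; rw [h0] at hτim; simp at hτim
  set z : ℕ → ℂ := fun b => w * (2 * a * b * q + l * q) with hz
  -- splitting
  let e : ℤ ≃ Fin q × ℤ := (Int.divModEquiv q).trans (Equiv.prodComm _ _)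
  have hsum : Summable (fun t : ℤ => jacobiTheta₂_term t (l * (h / q + w)) (2 * a * (h / q + w))) := by
    rw [summable_jacobiTheta₂_term_iff]
    have : (2 * a * (h / q + w) : ℂ) = ((2 * a : ℝ) : ℂ) * (((h / q : ℝ) : ℂ) + w) := by push_cast; ring
    rw [this, Complex.im_ofReal_mul, Complex.add_im, Complex.ofReal_im, zero_add]
    have : (0:ℝ) < a := by exact_mod_cast ha
    positivity
  have hexp : ∀ t : ℤ, ∀ P : ℤ, Complex.exp (2 * Real.pi * Complex.I * (P / q)) = ZMod.stdAddChar ((P : ℤ) : ZMod q) := by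
    intro t P
    rw [ZMod.stdAddChar_coe]
    congr 1; ring
  have hterm : ∀ p : Fin q × ℤ, jacobiTheta₂_term (e.symm p) (l * (h / q + w)) (2 * a * (h / q + w)) =
      ZMod.stdAddChar ((h * (a * ((p.1 : ℕ) : ZMod q) ^ 2 + l * ((p.1 : ℕ) : ZMod q)) : ZMod q)) *
      (Complex.exp (2 * Real.pi * Complex.I * w * (a * (p.1 : ℕ) ^ 2 + l * (p.1 : ℕ))) *
        jacobiTheta₂_term p.2 (z p.1) τ) := by
    rintro ⟨b, c⟩
    have he : e.symm (b, c) = c * q + (b : ℕ) := rfl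
    rw [he, th_term]
    have h1 : ZMod.stdAddChar ((h * (a * ((b : ℕ) : ZMod q) ^ 2 + l * ((b : ℕ) : ZMod q)) : ZMod q)) =
        Complex.exp (2 * Real.pi * Complex.I * ((h * (a * (c * q + (b:ℕ)) ^ 2 + l * (c * q + (b:ℕ))) : ℤ) / q)) := by
      rw [hexp 0]
      congr 1
      push_cast
      simp
    rw [h1]
    unfold jacobiTheta₂_term
    rw [← Complex.exp_add, ← Complex.exp_add]
    congr 1
    simp only [hz, hτ]
    push_cast
    field_simp
    ring
  have hsumP : Summable (fun p : Fin q × ℤ => jacobiTheta₂_term (e.symm p) (l * (h / q + w)) (2 * a * (h / q + w))) :=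
    (Equiv.summable_iff e.symm).2 hsum
  have hth : th a l (h / q + w) = ∑ b : Fin q,
      ZMod.stdAddChar ((h * (a * ((b : ℕ) : ZMod q) ^ 2 + l * ((b : ℕ) : ZMod q)) : ZMod q)) *
      (Complex.exp (2 * Real.pi * Complex.I * w * (a * (b : ℕ) ^ 2 + l * (b : ℕ))) *
        jacobiTheta₂ (z b) τ) := by
    unfold th jacobiTheta₂
    rw [← Equiv.tsum_eq e.symm, hsumP.tsum_prod, tsum_fintype]
    apply Finset.sum_congr rfl
    intro b _
    rw [← tsum_mul_left, ← tsum_mul_left]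
    exact tsum_congr (fun c => hterm (b, c))
  have hIτ : (-Complex.I * τ) ≠ 0 := mul_ne_zero (neg_ne_zero.2 Complex.I_ne_zero) hτ0
  have hpw : (-Complex.I * τ) ^ (1 / 2 : ℂ) ≠ 0 := by
    rw [Complex.cpow_def_of_ne_zero hIτ]; exact Complex.exp_ne_zero _
  have hsm : ∀ b : ℕ, HasSum (fun m => jacobiTheta₂_term m (z b / τ) (-1 / τ)) (jacobiTheta₂ (z b / τ) (-1/τ)) := by
    intro b
    apply hasSum_jacobiTheta₂_term
    rw [neg_div, Complex.neg_im, one_div, Complex.inv_im, neg_div, neg_neg]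
    exact div_pos hτim (Complex.normSq_pos.2 hτ0)
  rw [hth, Finset.mul_sum]
  unfold gs
  have : ∀ m : ℤ, Complex.exp (2 * Real.pi * Complex.I * (m * l / (2 * a * q))
        - Real.pi * Complex.I * m ^ 2 / τ) * ∑ b : ZMod q, ZMod.stdAddChar ((h * (a * b ^ 2 + l * b) + m * b : ZMod q)) =
      ∑ b : Fin q, ZMod.stdAddChar ((h * (a * ((b : ℕ) : ZMod q) ^ 2 + l * ((b : ℕ) : ZMod q)) : ZMod q)) *
        jacobiTheta₂_term m (z b / τ) (-1 / τ) := by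
    intro m
    rw [← sum_fin_zmod, Finset.mul_sum]
    apply Finset.sum_congr rfl
    intro b _
    rw [AddChar.map_add_eq_mul]
    have : ZMod.stdAddChar ((m : ZMod q) * ((b : ℕ) : ZMod q)) = Complex.exp (2 * Real.pi * Complex.I * ((m * (b:ℕ) : ℤ) / q)) := by
      rw [hexp 0]; push_cast; rfl
    rw [this]
    unfold jacobiTheta₂_term
    rw [mul_left_comm, ← Complex.exp_add]
    congr 2
    simp only [hz, hτ]
    push_cast
    field_simp
    ring
  simp_rw [this]
  apply hasSum_sum
  intro b _
  rw [mul_left_comm]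
  apply HasSum.mul_left
  refine (congrArg (fun x => HasSum (fun m => jacobiTheta₂_term m (z b / τ) (-1 / τ)) x) ?_).mpr (hsm b)
  rw [jacobiTheta₂_functional_equation (z b) τ]
  have h2 : Complex.exp (Real.pi * Complex.I * w * l ^ 2 / (2 * a)) *
     (Complex.exp (2 * Real.pi * Complex.I * w * (a * (b : ℕ) ^ 2 + l * (b : ℕ))) *
     Complex.exp (-Real.pi * Complex.I * z b ^ 2 / τ)) = 1 := by
    rw [← Complex.exp_add, ← Complex.exp_add, ← Complex.exp_zero]
    congr 1
    simp only [hz, hτ]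
    field_simp
    ring
  calc _ = ((-Complex.I * τ) ^ (1 / 2 : ℂ) * (1 / (-Complex.I * τ) ^ (1 / 2 : ℂ))) * (Complex.exp (Real.pi * Complex.I * w * l ^ 2 / (2 * a)) *
     (Complex.exp (2 * Real.pi * Complex.I * w * (a * (b : ℕ) ^ 2 + l * (b : ℕ))) *
     Complex.exp (-Real.pi * Complex.I * z b ^ 2 / τ))) * jacobiTheta₂ (z b / τ) (-1/τ) := by ring
    _ = _ := by rw [h2, mul_one_div_cancel hpw]; ring

lemma summable_gauss (c : ℝ) (hc : 0 < c) : Summable (fun m : ℤ => Real.exp (-Real.pi * m ^ 2 * c)) := by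
  have := ((summable_jacobiTheta₂_term_iff 0 (c * Complex.I)).2 (by simpa using hc)).norm
  refine this.congr (fun m => ?_)
  rw [norm_jacobiTheta₂_term]
  congr 1
  simp

lemma norm_major_exp (m l a : ℤ) (q : ℕ) (τ : ℂ) :
    ‖Complex.exp (2 * Real.pi * Complex.I * (m * l / (2 * a * q)) - Real.pi * Complex.I * m ^ 2 / τ)‖
      = Real.exp (-Real.pi * m ^ 2 * (τ.im / Complex.normSq τ)) := by
  rw [Complex.norm_exp]
  congr 1
  have h1 : (2 * Real.pi * Complex.I * (m * l / (2 * a * q)) - Real.pi * Complex.I * m ^ 2 / τ : ℂ)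
    = ((2 * Real.pi * (m * l / (2 * a * q)) : ℝ) : ℂ) * Complex.I - ((Real.pi * m ^ 2 : ℝ) : ℂ) * (Complex.I * τ⁻¹) := by
    push_cast; ring
  rw [h1, Complex.sub_re, Complex.re_ofReal_mul, Complex.re_ofReal_mul]
  simp [Complex.inv_im]
  ring

lemma norm_sqrt_factor (τ : ℂ) : ‖(-Complex.I * τ) ^ (1 / 2 : ℂ)‖ = ‖τ‖ ^ (1 / 2 : ℝ) := by
  have : (1 / 2 : ℂ) = ((1 / 2 : ℝ) : ℂ) := by push_cast; rfl
  rw [this, Complex.norm_cpow_real]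
  simp

lemma ofReal_mul_cpow_pos (t : ℝ) (ht : 0 < t) (z s : ℂ) (hz : z ≠ 0) :
    ((t : ℂ) * z) ^ s = (t : ℂ) ^ s * z ^ s := by
  have h0 : (t : ℂ) ≠ 0 := by exact_mod_cast ht.ne'
  rw [Complex.cpow_def_of_ne_zero (mul_ne_zero h0 hz), Complex.cpow_def_of_ne_zero h0,
    Complex.cpow_def_of_ne_zero hz, Complex.log_ofReal_mul ht hz, ← Complex.exp_add,
    Complex.ofReal_log ht.le]
  congr 1; ring

lemma th_upper (a l : ℤ) (ha : 0 < a) : ∃ C > (0:ℝ), ∀ (q : ℕ) [NeZero q] (h : ℤ) (w : ℂ),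
    IsCoprime h (q:ℤ) → 0 < w.im → w.im ≤ 1 → q ^ 2 * ‖w‖ ^ 2 ≤ 2 * w.im →
    ‖th a l (h / q + w)‖ ≤ C * (q * ‖w‖) ^ (-(1 / 2) : ℝ) := by
  have haR : (0:ℝ) < a := by exact_mod_cast ha
  set G := ∑' m : ℤ, Real.exp (-Real.pi * m ^ 2 * (1 / (4 * a))) with hG
  have hGs := summable_gauss (1 / (4 * a)) (by positivity)
  have hGpos : 0 < G := by
    have h1 := hGs.le_tsum 0 (fun m _ => (Real.exp_pos _).le)
    rw [← hG] at h1
    have h2 : (0:ℝ) < Real.exp (-Real.pi * ((0:ℤ):ℝ) ^ 2 * (1 / (4 * a))) := Real.exp_pos _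
    linarith
  refine ⟨G * Real.exp (Real.pi * l ^ 2 / (2 * a)), by positivity, ?_⟩
  intro q _ h w hh hw hw1 hq
  have hqR : (0:ℝ) < q := by exact_mod_cast Nat.pos_of_ne_zero (NeZero.ne q)
  have hw0 : w ≠ 0 := by rintro rfl; simp at hw
  have hwn : 0 < ‖w‖ := norm_pos_iff.2 hw0
  have hS := th_major a l ha q h w hw
  set τ : ℂ := 2 * a * q ^ 2 * w with hτ
  have hτ' : τ = ((2 * a * q ^ 2 : ℝ) : ℂ) * w := by rw [hτ]; push_cast; ring
  have hu : 1 / (4 * a) ≤ τ.im / Complex.normSq τ := by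
    rw [hτ', Complex.im_ofReal_mul, Complex.normSq_mul, Complex.normSq_ofReal, Complex.normSq_eq_norm_sq]
    rw [div_le_div_iff₀ (by positivity) (by positivity)]
    have : 0 < 4 * (a:ℝ)^2 * q^2 := by positivity
    nlinarith
  have hterm : ∀ m : ℤ, ‖Complex.exp (2 * Real.pi * Complex.I * (m * l / (2 * a * q))
        - Real.pi * Complex.I * m ^ 2 / τ) * gs q a l h m‖ ≤
        Real.exp (-Real.pi * m ^ 2 * (1 / (4 * a))) * Real.sqrt (q * (2 * a)) := by
    intro m
    rw [norm_mul, norm_major_exp]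
    apply mul_le_mul _ (gs_bound q a l h m ha hh) (norm_nonneg _) (Real.exp_pos _).le
    apply Real.exp_le_exp.2
    have : 0 ≤ Real.pi * (m:ℝ) ^ 2 := by positivity
    nlinarith
  have hb := tsum_of_norm_bounded ((hGs.mul_right (Real.sqrt (q * (2 * a)))).hasSum) hterm
  rw [hS.tsum_eq, tsum_mul_right, ← hG, norm_mul, norm_mul, norm_sqrt_factor] at hb
  have he : Real.exp (-(Real.pi * l ^ 2 / (2 * a))) ≤ ‖Complex.exp (Real.pi * Complex.I * w * l ^ 2 / (2 * a))‖ := by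
    rw [Complex.norm_exp]
    apply Real.exp_le_exp.2
    have : (Real.pi * Complex.I * w * l ^ 2 / (2 * a) : ℂ) = ((Real.pi * l ^ 2 / (2 * a) : ℝ) : ℂ) * (Complex.I * w) := by
      push_cast; ring
    rw [this, Complex.re_ofReal_mul]
    simp only [Complex.mul_re, Complex.I_re, Complex.I_im, zero_mul, one_mul, zero_sub]
    have : 0 ≤ Real.pi * (l:ℝ) ^ 2 / (2 * a) := by positivity
    nlinarith
  have hτn : ‖τ‖ ^ (1 / 2 : ℝ) = Real.sqrt (q * (2 * a)) * (q * ‖w‖) ^ (1 / 2 : ℝ) := by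
    rw [Real.sqrt_eq_rpow, ← Real.mul_rpow (by positivity) (by positivity), hτ', norm_mul, Complex.norm_real,
      Real.norm_of_nonneg (by positivity)]
    congr 1; ring
  rw [hτn] at hb
  have hs : 0 < Real.sqrt (q * (2 * a)) := by positivity
  have hp : 0 < (q * ‖w‖) ^ (1 / 2 : ℝ) := by positivity
  rw [Real.rpow_neg (by positivity), ← div_eq_mul_inv, le_div_iff₀ hp]
  have h3 : Real.sqrt (q * (2 * a)) * ((q * ‖w‖) ^ (1 / 2 : ℝ) * Real.exp (-(Real.pi * l ^ 2 / (2 * a))) * ‖th a l (h / q + w)‖) ≤ Real.sqrt (q * (2 * a)) * G := by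
    refine le_trans ?_ (hb.trans (le_of_eq (mul_comm _ _)))
    rw [← mul_assoc, ← mul_assoc]
    gcongr
  have h4 := le_of_mul_le_mul_left h3 hs
  rw [Real.exp_neg] at h4
  have h5 : 0 < Real.exp (Real.pi * l ^ 2 / (2 * a)) := Real.exp_pos _
  calc ‖th a l (h / q + w)‖ * (q * ‖w‖) ^ (1 / 2 : ℝ)
      = ((q * ‖w‖) ^ (1 / 2 : ℝ) * (Real.exp (Real.pi * l ^ 2 / (2 * a)))⁻¹ * ‖th a l (h / q + w)‖) * Real.exp (Real.pi * l ^ 2 / (2 * a)) := by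
        field_simp
    _ ≤ _ := mul_le_mul_of_nonneg_right h4 h5.le

lemma th_limit (a l : ℤ) (ha : 0 < a) (q : ℕ) [NeZero q] (h : ℤ) (hh : IsCoprime h (q:ℤ)) (x : ℝ) :
    Filter.Tendsto (fun ν : ℕ => ((ν:ℝ) ^ (-(1/2) : ℝ) : ℝ) * th a l (h / q + (x + Complex.I) / ν))
      Filter.atTop (nhds (gs q a l h 0 / (Real.sqrt (2 * a) * q) * ((1 - x * Complex.I) ^ (-(1 / 2) : ℂ)))) := by
  have haR : (0:ℝ) < a := by exact_mod_cast ha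
  have hqR : (0:ℝ) < q := by exact_mod_cast Nat.pos_of_ne_zero (NeZero.ne q)
  set S : ℕ → ℤ → ℂ := fun ν m => Complex.exp (2 * Real.pi * Complex.I * (m * l / (2 * a * q))
        - Real.pi * Complex.I * m ^ 2 / (2 * a * q ^ 2 * ((x + Complex.I) / ν))) * gs q a l h m with hSdef
  set u : ℕ → ℝ := fun ν => ν * (1 / (2 * a * q ^ 2 * (x ^ 2 + 1))) with hu
  have hSn : ∀ ν : ℕ, 0 < ν → ∀ m, ‖S ν m‖ ≤ Real.exp (-Real.pi * m ^ 2 * u ν) * Real.sqrt (q * (2 * a)) := by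
    intro ν hν m
    have hνR : (0:ℝ) < ν := by exact_mod_cast hν
    rw [hSdef]; simp only
    rw [norm_mul, norm_major_exp]
    apply mul_le_mul (le_of_eq _) (gs_bound q a l h m ha hh) (norm_nonneg _) (Real.exp_pos _).le
    congr 2
    have : (2 * a * q ^ 2 * ((x + Complex.I) / ν) : ℂ) = ((2 * a * q ^ 2 / ν : ℝ) : ℂ) * (x + Complex.I) := by
      push_cast; ring
    rw [this, Complex.im_ofReal_mul, Complex.normSq_mul, Complex.normSq_ofReal]
    have : Complex.normSq (x + Complex.I) = x ^ 2 + 1 := by simp [Complex.normSq_apply]; ring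
    rw [this]
    simp only [hu, Complex.add_im, Complex.ofReal_im, Complex.I_im, zero_add]
    field_simp
  have hulim : Filter.Tendsto u Filter.atTop Filter.atTop := by
    apply Filter.Tendsto.atTop_mul_const (by positivity) tendsto_natCast_atTop_atTop
  have htann : Filter.Tendsto (fun ν => ∑' m, S ν m) Filter.atTop (nhds (∑' m : ℤ, if m = 0 then gs q a l h 0 else 0)) := by
    refine tendsto_tsum_of_dominated_convergence (bound := fun m : ℤ => Real.exp (-Real.pi * m ^ 2 * 1) * Real.sqrt (q * (2 * a)))
      ((summable_gauss 1 one_pos).mul_right _) ?_ ?_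
    · intro m
      split_ifs with hm
      · subst hm
        simp [hSdef]
      · rw [tendsto_zero_iff_norm_tendsto_zero]
        refine tendsto_of_tendsto_of_tendsto_of_le_of_le' tendsto_const_nhds (h := fun ν => Real.exp (-Real.pi * m ^ 2 * u ν) * Real.sqrt (q * (2 * a))) ?_ (Filter.Eventually.of_forall fun _ => norm_nonneg _) ?_
        · rw [← zero_mul (Real.sqrt (q * (2 * a)))]
          apply Filter.Tendsto.mul_const
          apply Real.tendsto_exp_atBot.comp
          have : 0 < Real.pi * (m:ℝ)^2 := by
            have : (m:ℝ) ≠ 0 := by exact_mod_cast hm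
            positivity
          have h2 : -Real.pi * (m:ℝ)^2 < 0 := by linarith
          exact hulim.const_mul_atTop_of_neg h2
        · filter_upwards [Filter.eventually_gt_atTop 0] with ν hν
          exact hSn ν hν m
    · filter_upwards [Filter.eventually_gt_atTop 0, hulim.eventually_ge_atTop 1] with ν hν h1 m
      refine (hSn ν hν m).trans ?_
      apply mul_le_mul_of_nonneg_right _ (Real.sqrt_nonneg _)
      apply Real.exp_le_exp.2
      have : 0 ≤ Real.pi * (m:ℝ) ^ 2 := by positivity
      nlinarith
  rw [tsum_ite_eq] at htann
  set E : ℕ → ℂ := fun ν => Complex.exp (Real.pi * Complex.I * ((x + Complex.I) / ν) * l ^ 2 / (2 * a)) with hE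
  have hElim : Filter.Tendsto E Filter.atTop (nhds 1) := by
    rw [← Complex.exp_zero]
    apply (Complex.continuous_exp.tendsto 0).comp
    have : (fun ν : ℕ => (Real.pi * Complex.I * ((x + Complex.I) / ν) * l ^ 2 / (2 * a) : ℂ)) =
       fun ν : ℕ => (Real.pi * Complex.I * (x + Complex.I) * l ^ 2 / (2 * a)) / (ν : ℂ) := by
      funext ν; ring
    rw [this]
    exact tendsto_const_div_atTop_nhds_zero_nat _
  have hz0 : (1 - x * Complex.I : ℂ) ≠ 0 := by
    intro h0
    have := congrArg Complex.re h0
    simp at this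
  have hfin : Filter.Tendsto (fun ν => (∑' m, S ν m) / E ν * ((Real.sqrt (2 * a) * q : ℂ)⁻¹ * (1 - x * Complex.I) ^ (-(1 / 2) : ℂ)))
     Filter.atTop (nhds (gs q a l h 0 / 1 * ((Real.sqrt (2 * a) * q : ℂ)⁻¹ * (1 - x * Complex.I) ^ (-(1 / 2) : ℂ)))) := by
    exact (htann.div hElim one_ne_zero).mul_const _
  have hval : gs q a l h 0 / 1 * ((Real.sqrt (2 * a) * q : ℂ)⁻¹ * (1 - x * Complex.I) ^ (-(1 / 2) : ℂ)) = gs q a l h 0 / (Real.sqrt (2 * a) * q) * ((1 - x * Complex.I) ^ (-(1 / 2) : ℂ)) := by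
    rw [div_one, div_eq_mul_inv _ (Real.sqrt (2 * a) * q : ℂ), mul_assoc]
  rw [hval] at hfin
  refine hfin.congr' ?_
  filter_upwards [Filter.eventually_gt_atTop 0] with ν hν
  have hνR : (0:ℝ) < ν := by exact_mod_cast hν
  have hS := th_major a l ha q h ((x + Complex.I) / ν) (by
    have : ((x + Complex.I) / ν : ℂ) = ((ν⁻¹ : ℝ) : ℂ) * (x + Complex.I) := by push_cast; ring
    rw [this, Complex.im_ofReal_mul]
    simp; exact hν)
  simp only [hSdef]
  rw [hS.tsum_eq]
  have h1 : (-Complex.I * (2 * a * q ^ 2 * ((x + Complex.I) / ν)) : ℂ) = ((2 * a * q ^ 2 / ν : ℝ) : ℂ) * (1 - x * Complex.I) := by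
    push_cast
    linear_combination (-2 * a * q ^ 2 / ν : ℂ) * Complex.I_sq
  have h2 : (((2 * a * q ^ 2 / ν : ℝ) : ℂ)) ^ (1 / 2 : ℂ) = ((Real.sqrt (2 * a) * q * (ν:ℝ) ^ (-(1/2) : ℝ) : ℝ) : ℂ) := by
    have : (1 / 2 : ℂ) = ((1 / 2 : ℝ) : ℂ) := by push_cast; rfl
    rw [this, ← Complex.ofReal_cpow (by positivity)]
    congr 1
    rw [Real.rpow_neg hνR.le, ← Real.sqrt_eq_rpow, ← Real.sqrt_eq_rpow, Real.sqrt_div (by positivity), Real.sqrt_mul (by positivity), Real.sqrt_sq hqR.le]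
    rfl
  rw [h1, ofReal_mul_cpow_pos _ (by positivity) _ _ hz0, h2, Complex.cpow_neg]
  have hpw : (1 - x * Complex.I : ℂ) ^ (1 / 2 : ℂ) ≠ 0 := by
    rw [Complex.cpow_def_of_ne_zero hz0]; exact Complex.exp_ne_zero _
  have hE0 : E ν ≠ 0 := Complex.exp_ne_zero _
  have hsq : (Real.sqrt (2 * a) : ℂ) ≠ 0 := by
    have : Real.sqrt (2 * a) ≠ 0 := by positivity
    exact_mod_cast this
  have hqC : (q:ℂ) ≠ 0 := by exact_mod_cast hqR.ne'
  change _ * E ν * _ / E ν * _ = _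
  push_cast
  field_simp

lemma laplace_integrable (s : ℝ) (hs : 1 < s) (z : ℂ) (hz : 0 < z.re) :
    MeasureTheory.IntegrableOn (fun t : ℝ => ((t ^ (s - 1) : ℝ) : ℂ) * Complex.exp (-(z * t))) (Set.Ioi 0) := by
  have h1 : MeasureTheory.IntegrableOn (fun t : ℝ => t ^ (s - 1) * Real.exp (-z.re * t)) (Set.Ioi 0) := by
    have := integrableOn_rpow_mul_exp_neg_mul_rpow (s := s - 1) (p := 1) (b := z.re) (by linarith) one_pos hz
    simpa using this
  refine h1.mono' ?_ ?_
  · apply Measurable.aestronglyMeasurable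
    fun_prop
  · filter_upwards [MeasureTheory.ae_restrict_mem measurableSet_Ioi] with t ht
    have ht0 : (0:ℝ) < t := ht
    rw [norm_mul, Complex.norm_real, Real.norm_of_nonneg (by positivity), Complex.norm_exp]
    simp

lemma laplace_eq (s : ℝ) (hs : 1 < s) (z : ℂ) (hz : 0 < z.re) :
    ∫ t : ℝ in Set.Ioi 0, ((t ^ (s - 1) : ℝ) : ℂ) * Complex.exp (-(z * t)) = z ^ (-(s:ℂ)) * Real.Gamma s := by
  set U : Set ℂ := {z | 0 < z.re} with hU
  have hUo : IsOpen U := isOpen_lt continuous_const Complex.continuous_re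
  set G : ℂ → ℂ := fun z => ∫ t : ℝ in Set.Ioi 0, ((t ^ (s - 1) : ℝ) : ℂ) * Complex.exp (-(z * t)) with hG
  have hGd : DifferentiableOn ℂ G U := by
    intro z0 hz0
    have hz0' : 0 < z0.re := hz0
    refine DifferentiableAt.differentiableWithinAt ?_
    have hb : MeasureTheory.IntegrableOn (fun t : ℝ => t ^ s * Real.exp (-(z0.re / 2) * t)) (Set.Ioi 0) := by
      have := integrableOn_rpow_mul_exp_neg_mul_rpow (s := s) (p := 1) (b := z0.re / 2) (by linarith) one_pos (by linarith)
      simpa using this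
    have := hasDerivAt_integral_of_dominated_loc_of_deriv_le (μ := MeasureTheory.volume.restrict (Set.Ioi (0:ℝ)))
      (F := fun (z : ℂ) (t : ℝ) => ((t ^ (s - 1) : ℝ) : ℂ) * Complex.exp (-(z * t)))
      (F' := fun (z : ℂ) (t : ℝ) => ((t ^ (s - 1) : ℝ) : ℂ) * (Complex.exp (-(z * t)) * (-t)))
      (x₀ := z0) (s := Metric.ball z0 (z0.re / 2)) (bound := fun t : ℝ => t ^ s * Real.exp (-(z0.re / 2) * t))
      (Metric.ball_mem_nhds z0 (by linarith)) ?_ (laplace_integrable s hs z0 hz0') ?_ ?_ hb ?_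
    · exact this.2.differentiableAt
    · refine Filter.Eventually.of_forall fun z => ?_
      apply Measurable.aestronglyMeasurable
      fun_prop
    · apply Measurable.aestronglyMeasurable
      fun_prop
    · filter_upwards [MeasureTheory.ae_restrict_mem measurableSet_Ioi] with t ht z hz
      have ht0 : (0:ℝ) < t := ht
      have hzre : z0.re / 2 ≤ z.re := by
        have h1 : ‖z - z0‖ < z0.re / 2 := by simpa [dist_eq_norm] using hz
        have h2 := (Complex.abs_re_le_norm (z - z0))
        have h3 := abs_le.1 (h2.trans h1.le)
        simp only [Complex.sub_re] at h3
        linarith [h3.1]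
      rw [norm_mul, norm_mul, Complex.norm_real, Real.norm_of_nonneg (by positivity), Complex.norm_exp]
      have h4 : ‖(-(t:ℂ))‖ = t := by rw [norm_neg, Complex.norm_real, Real.norm_of_nonneg ht0.le]
      rw [h4]
      have h5 : (-(z * (t:ℂ))).re = -(z.re * t) := by simp
      rw [h5]
      have h6 : t ^ s = t ^ (s - 1) * t := by
        rw [← Real.rpow_add_one ht0.ne']; congr 1; ring
      rw [h6]
      have h7 : Real.exp (-(z.re * t)) ≤ Real.exp (-(z0.re / 2) * t) := by
        apply Real.exp_le_exp.2; nlinarith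
      have h8 : 0 ≤ t ^ (s - 1) := by positivity
      calc t ^ (s-1) * (Real.exp (-(z.re * t)) * t) ≤ t ^ (s-1) * (Real.exp (-(z0.re / 2) * t) * t) := by gcongr
        _ = _ := by ring
    · refine Filter.Eventually.of_forall fun t z _ => ?_
      apply HasDerivAt.const_mul
      have : HasDerivAt (fun z : ℂ => -(z * (t:ℂ))) (-(t:ℂ)) z := by
        have h9 := ((hasDerivAt_id z).mul_const (t:ℂ)).fun_neg
        rw [one_mul] at h9
        exact h9
      exact this.cexp
  have hHd : DifferentiableOn ℂ (fun z : ℂ => z ^ (-(s:ℂ)) * Real.Gamma s) U := by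
    intro z0 hz0
    refine DifferentiableAt.differentiableWithinAt ?_
    apply DifferentiableAt.mul_const
    exact (differentiableAt_id).cpow_const (Or.inl hz0)
  have hpre : IsPreconnected U := (convex_halfSpace_re_gt 0).isPreconnected
  have hreal : ∀ y : ℝ, 0 < y → G y = (y:ℂ) ^ (-(s:ℂ)) * Real.Gamma s := by
    intro y hy
    have h1 := Real.integral_rpow_mul_exp_neg_mul_Ioi (a := s) (r := y) (by linarith) hy
    have h2 : ((y:ℂ) ^ (-(s:ℂ)) * Real.Gamma s) = (((1 / y) ^ s * Real.Gamma s : ℝ) : ℂ) := by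
      have : (-(s:ℂ)) = ((-s : ℝ) : ℂ) := by push_cast; rfl
      rw [this, ← Complex.ofReal_cpow hy.le, Real.rpow_neg hy.le, one_div, Real.inv_rpow hy.le]
      push_cast; rfl
    rw [h2, ← h1, hG]
    simp only
    rw [← integral_complex_ofReal]
    congr 1
    funext t
    push_cast
    rfl
  have heq : Set.EqOn G (fun z : ℂ => z ^ (-(s:ℂ)) * Real.Gamma s) U := by
    refine AnalyticOnNhd.eqOn_of_preconnected_of_frequently_eq (z₀ := 1) (hGd.analyticOnNhd hUo) (hHd.analyticOnNhd hUo) hpre (by simp [hU]) ?_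
    have ht : Filter.Tendsto (fun n : ℕ => ((1 + 1 / ((n:ℝ) + 1) : ℝ) : ℂ)) Filter.atTop (nhdsWithin 1 {1}ᶜ) := by
      rw [tendsto_nhdsWithin_iff]
      constructor
      · have := (tendsto_one_div_add_atTop_nhds_zero_nat (𝕜 := ℝ)).const_add 1
        rw [add_zero] at this
        have h2 := (Complex.continuous_ofReal.tendsto 1).comp this
        rw [Complex.ofReal_one] at h2
        exact h2
      · refine Filter.Eventually.of_forall fun n => ?_
        simp only [Set.mem_compl_iff, Set.mem_singleton_iff]
        intro h0
        have h1 : (1 + 1 / ((n:ℝ) + 1) : ℝ) = 1 := by exact_mod_cast h0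
        have : 0 < 1 / ((n:ℝ) + 1) := by positivity
        linarith
    refine ht.frequently (Filter.Eventually.frequently (Filter.Eventually.of_forall fun n => ?_))
    exact hreal _ (by positivity)
  exact heq hz

lemma norm_one_sub_cpow (s x : ℝ) : ‖(1 - x * Complex.I : ℂ) ^ (-(s:ℂ))‖ = (1 + x ^ 2) ^ (-(s/2)) := by
  have : (-(s:ℂ)) = ((-s : ℝ) : ℂ) := by push_cast; rfl
  rw [this, Complex.norm_cpow_real, Complex.norm_def, Real.sqrt_eq_rpow, ← Real.rpow_mul (Complex.normSq_nonneg _)]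
  congr 1
  · simp [Complex.normSq_apply]; ring
  · ring

lemma integrable_one_sub_cpow (s : ℝ) (hs : 1 < s) :
    MeasureTheory.Integrable (fun x : ℝ => (1 - x * Complex.I : ℂ) ^ (-(s:ℂ))) := by
  have h1 := integrable_rpow_neg_one_add_norm_sq (E := ℝ) (μ := MeasureTheory.volume) (r := s) (by simpa using hs)
  refine h1.mono' ?_ ?_
  · apply Measurable.aestronglyMeasurable
    fun_prop
  · refine Filter.Eventually.of_forall fun x => ?_
    rw [norm_one_sub_cpow]
    simp [neg_div]

lemma J_ne_zero (s : ℝ) (hs : 1 < s) :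
    ∫ x : ℝ, (1 - x * Complex.I : ℂ) ^ (-(s:ℂ)) * Complex.exp (-(2 * Real.pi * Complex.I * x)) ≠ 0 := by
  set f : ℝ → ℂ := (Set.Ioi (0:ℝ)).indicator (fun t => ((t ^ (s - 1) : ℝ) : ℂ) * Complex.exp (-t)) with hf
  have hfi : MeasureTheory.Integrable f := by
    rw [hf, MeasureTheory.integrable_indicator_iff measurableSet_Ioi]
    have := laplace_integrable s hs 1 (by simp)
    simpa using this
  have hF : ∀ ξ : ℝ, FourierTransform.fourier f ξ = (1 - ((-(2 * Real.pi) * ξ : ℝ) : ℂ) * Complex.I) ^ (-(s:ℂ)) * Real.Gamma s := by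
    intro ξ
    rw [Real.fourier_eq', ← laplace_eq s hs _ (by simp)]
    rw [← MeasureTheory.integral_indicator measurableSet_Ioi]
    congr 1
    funext t
    by_cases ht : t ∈ Set.Ioi (0:ℝ)
    · rw [Set.indicator_of_mem ht, hf, Set.indicator_of_mem ht, smul_eq_mul, mul_left_comm, ← Complex.exp_add]
      congr 2
      simp
      ring
    · rw [Set.indicator_of_notMem ht, hf, Set.indicator_of_notMem ht, smul_zero]
  have hFi : MeasureTheory.Integrable (FourierTransform.fourier f) := by
    have h1 := ((integrable_one_sub_cpow s hs).comp_mul_left' (R := -(2 * Real.pi)) (by simp [Real.pi_ne_zero])).mul_const (Real.Gamma s : ℂ)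
    refine h1.congr (Filter.Eventually.of_forall fun ξ => ?_)
    exact (hF ξ).symm
  have hc : ContinuousAt f (2 * Real.pi) := by
    have h2p : (0:ℝ) < 2 * Real.pi := by positivity
    have h1 : ContinuousAt (fun t : ℝ => ((t ^ (s - 1) : ℝ) : ℂ) * Complex.exp (-t)) (2 * Real.pi) := by
      apply ContinuousAt.mul
      · apply Complex.continuous_ofReal.continuousAt.comp
        exact Real.continuousAt_rpow_const _ _ (Or.inl h2p.ne')
      · fun_prop
    refine h1.congr ?_
    filter_upwards [Ioi_mem_nhds h2p] with t ht
    rw [hf, Set.indicator_of_mem ht]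
  have hinv := hfi.fourierInv_fourier_eq hFi hc
  intro hJ
  have h0 : FourierTransformInv.fourierInv (FourierTransform.fourier f) (2 * Real.pi) = 0 := by
    rw [Real.fourierInv_eq']
    have h1 := MeasureTheory.Measure.integral_comp_mul_left (fun x : ℝ => (1 - x * Complex.I : ℂ) ^ (-(s:ℂ)) * Complex.exp (-(2 * Real.pi * Complex.I * x))) (-(2 * Real.pi))
    rw [hJ, smul_zero] at h1
    rw [← zero_mul (Real.Gamma s : ℂ), ← h1, ← MeasureTheory.integral_mul_const]
    congr 1
    funext ξ
    rw [hF, smul_eq_mul, mul_comm, mul_right_comm]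
    congr 3
    simp
    ring
  rw [h0] at hinv
  have h2p : (2 * Real.pi) ∈ Set.Ioi (0:ℝ) := by
    show (0:ℝ) < 2 * Real.pi
    positivity
  rw [hf, Set.indicator_of_mem h2p] at hinv
  have : (((2 * Real.pi) ^ (s - 1) : ℝ) : ℂ) ≠ 0 := by
    have : ((2 * Real.pi) ^ (s - 1) : ℝ) ≠ 0 := by positivity
    exact_mod_cast this
  exact mul_ne_zero this (Complex.exp_ne_zero _) hinv.symm

/-- the shifted point in the upper half plane -/
noncomputable def up (ν : ℕ) (α : ℝ) : ℂ := α + Complex.I / ν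

lemma up_im (ν : ℕ) (α : ℝ) : (up ν α).im = 1 / ν := by
  unfold up
  have : (Complex.I / ν : ℂ) = ((1 / ν : ℝ) : ℂ) * Complex.I := by push_cast; ring
  rw [this, Complex.add_im, Complex.ofReal_im, Complex.im_ofReal_mul, Complex.I_im]; ring

noncomputable def PhiF {r : ℕ} (a l : Fin r → ℤ) (ν : ℕ) (α : ℝ) : ℂ :=
  (∏ i, th (a i) (l i) (up ν α)) * Complex.exp (-(2 * Real.pi * Complex.I * ν * α))

lemma th_continuous (a l : ℤ) (ha : 0 < a) (ν : ℕ) (hν : 0 < ν) :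
    Continuous (fun α : ℝ => th a l (up ν α)) := by
  rw [continuous_iff_continuousAt]
  intro α
  unfold th
  have him : 0 < (2 * a * up ν α : ℂ).im := by
    have : (2 * a * up ν α : ℂ) = ((2 * a : ℝ) : ℂ) * up ν α := by push_cast; rfl
    rw [this, Complex.im_ofReal_mul, up_im]
    have : (0:ℝ) < a := by exact_mod_cast ha
    positivity
  have h1 := continuousAt_jacobiTheta₂ (l * up ν α) him
  have h2 : Continuous (fun α : ℝ => ((l * up ν α : ℂ), (2 * a * up ν α : ℂ))) := by
    unfold up; fun_prop
  exact ContinuousAt.comp (f := fun α : ℝ => ((l * up ν α : ℂ), (2 * a * up ν α : ℂ))) (g := fun p : ℂ × ℂ => jacobiTheta₂ p.1 p.2) h1 h2.continuousAt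

lemma PhiF_continuous {r : ℕ} (a l : Fin r → ℤ) (ha : ∀ i, 0 < a i) (ν : ℕ) (hν : 0 < ν) :
    Continuous (PhiF a l ν) := by
  unfold PhiF
  apply Continuous.mul
  · exact continuous_finsetProd _ (fun i _ => th_continuous _ _ (ha i) ν hν)
  · fun_prop

lemma th_hasSum (a l : ℤ) (ha : 0 < a) (ν : ℕ) (hν : 0 < ν) (α : ℝ) :
    HasSum (fun t : ℤ => Complex.exp (2 * Real.pi * Complex.I * up ν α * (a * t ^ 2 + l * t)))
      (th a l (up ν α)) := by
  have him : 0 < (2 * a * up ν α : ℂ).im := by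
    have : (2 * a * up ν α : ℂ) = ((2 * a : ℝ) : ℂ) * up ν α := by push_cast; rfl
    rw [this, Complex.im_ofReal_mul, up_im]
    have : (0:ℝ) < a := by exact_mod_cast ha
    positivity
  have h1 := hasSum_jacobiTheta₂_term (l * up ν α) him
  simp_rw [th_term] at h1
  exact h1

lemma norm_term (a l : ℤ) (ν : ℕ) (α : ℝ) (t : ℤ) :
    ‖Complex.exp (2 * Real.pi * Complex.I * up ν α * (a * t ^ 2 + l * t))‖ =
      Real.exp (-(2 * Real.pi * (a * t ^ 2 + l * t) * (1 / ν))) := by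
  rw [Complex.norm_exp]
  congr 1
  have : (2 * Real.pi * Complex.I * up ν α * (a * t ^ 2 + l * t) : ℂ) =
    ((2 * Real.pi * (a * t ^ 2 + l * t) : ℝ) : ℂ) * (Complex.I * up ν α) := by push_cast; ring
  rw [this, Complex.re_ofReal_mul]
  simp only [Complex.mul_re, Complex.I_re, Complex.I_im, up_im]
  ring

lemma integral_exp_int (n : ℤ) (hn : n ≠ 0) :
    ∫ α : ℝ in Set.Ioc (-(1/2) : ℝ) (1/2), Complex.exp (2 * Real.pi * Complex.I * n * α) = 0 := by
  rw [← intervalIntegral.integral_of_le (by norm_num)]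
  have hc : (2 * Real.pi * Complex.I * n : ℂ) ≠ 0 := by
    have : (n : ℂ) ≠ 0 := by exact_mod_cast hn
    have hp : (Real.pi : ℂ) ≠ 0 := by exact_mod_cast Real.pi_ne_zero
    simp [this, hp]
  rw [integral_exp_mul_complex hc]
  have : Complex.exp (2 * Real.pi * Complex.I * n * ((1/2 : ℝ) : ℂ)) = Complex.exp (2 * Real.pi * Complex.I * n * ((-(1/2) : ℝ) : ℂ)) := by
    rw [Complex.exp_eq_exp_iff_exists_int]
    refine ⟨n, ?_⟩
    push_cast; ring
  rw [this, sub_self, zero_div]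

lemma integral_PhiF_zero {r : ℕ} (a l : Fin r → ℤ) (ha : ∀ i, 0 < a i) (ν : ℕ) (hν : 0 < ν)
    (hno : ¬ ∃ t : Fin r → ℤ, ∑ i, (a i * t i ^ 2 + l i * t i) = (ν : ℤ)) :
    ∫ α : ℝ in Set.Ioc (-(1/2) : ℝ) (1/2), PhiF a l ν α = 0 := by
  classical
  have hνC : (ν : ℂ) ≠ 0 := by exact_mod_cast hν.ne'
  set tm : ℝ → Fin r → ℤ → ℂ := fun α i t => Complex.exp (2 * Real.pi * Complex.I * up ν α * (a i * t ^ 2 + l i * t)) with htm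
  set FK : Finset ℤ → ℝ → ℂ := fun K α => (∏ i, ∑ t ∈ K, tm α i t) * Complex.exp (-(2 * Real.pi * Complex.I * ν * α)) with hFK
  have hzero : ∀ K, ∫ α : ℝ in Set.Ioc (-(1/2) : ℝ) (1/2), FK K α = 0 := by
    intro K
    have h1 : ∀ α, FK K α = ∑ t ∈ Fintype.piFinset (fun _ : Fin r => K),
        Complex.exp (-(2 * Real.pi * (∑ i, (a i * t i ^ 2 + l i * t i) : ℤ) / ν)) *
        Complex.exp (2 * Real.pi * Complex.I * (((∑ i, (a i * t i ^ 2 + l i * t i)) - ν : ℤ)) * α) := by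
      intro α
      simp only [hFK]
      rw [Finset.prod_univ_sum, Finset.sum_mul]
      apply Finset.sum_congr rfl
      intro t _
      simp only [htm]
      rw [← Complex.exp_sum, ← Complex.exp_add, ← Complex.exp_add, ← Finset.mul_sum]
      congr 1
      unfold up
      push_cast
      set S : ℂ := ∑ i, ((a i : ℂ) * (t i : ℂ) ^ 2 + l i * t i)
      linear_combination (2 * Real.pi * S / ν) * Complex.I_sq
    simp_rw [h1]
    rw [MeasureTheory.integral_finsetSum]
    · apply Finset.sum_eq_zero
      intro t _
      rw [MeasureTheory.integral_const_mul, integral_exp_int, mul_zero]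
      intro h0
      exact hno ⟨t, by linarith⟩
    · intro t _
      apply Continuous.integrableOn_Ioc
      fun_prop
  have hlim : Filter.Tendsto (fun K => ∫ α : ℝ in Set.Ioc (-(1/2) : ℝ) (1/2), FK K α) Filter.atTop
      (nhds (∫ α : ℝ in Set.Ioc (-(1/2) : ℝ) (1/2), PhiF a l ν α)) := by
    refine MeasureTheory.tendsto_integral_filter_of_dominated_convergence (fun _ => ∏ i, ∑' t : ℤ, Real.exp (-(2 * Real.pi * (a i * t ^ 2 + l i * t) * (1 / ν)))) ?_ ?_ ?_ ?_
    · refine Filter.Eventually.of_forall fun K => ?_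
      apply Continuous.aestronglyMeasurable
      simp only [hFK, htm]
      unfold up
      fun_prop
    · refine Filter.Eventually.of_forall fun K => Filter.Eventually.of_forall fun α => ?_
      simp only [hFK]
      rw [norm_mul]
      have : ‖Complex.exp (-(2 * Real.pi * Complex.I * ν * α))‖ = 1 := by
        rw [Complex.norm_exp]; simp
      rw [this, mul_one, norm_prod]
      apply Finset.prod_le_prod (fun _ _ => norm_nonneg _)
      intro i _
      refine (norm_sum_le _ _).trans ?_
      have hs := (th_hasSum (a i) (l i) (ha i) ν hν α).summable.norm
      simp_rw [norm_term] at hs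
      simp only [htm, norm_term]
      exact hs.sum_le_tsum K (fun _ _ => (Real.exp_pos _).le)
    · exact MeasureTheory.integrable_const _
    · refine Filter.Eventually.of_forall fun α => ?_
      simp only [hFK]
      unfold PhiF
      apply Filter.Tendsto.mul_const
      apply tendsto_finsetProd
      intro i _
      exact th_hasSum (a i) (l i) (ha i) ν hν α
  simp_rw [hzero] at hlim
  exact (tendsto_nhds_unique hlim tendsto_const_nhds)

noncomputable def bq (ρ : ℚ) : ℝ := if |ρ| ≤ 2 then (ρ.den : ℝ) ^ (-(5/2) : ℝ) else 0

lemma bq_nonneg (ρ : ℚ) : 0 ≤ bq ρ := by unfold bq; split_ifs <;> positivity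

lemma bq_summable : Summable bq := by
  have h1 : Summable (fun m : ℤ => |(m:ℝ)| ^ (-(5/4) : ℝ) + if m = 0 then 1 else 0) := by
    apply Summable.add (Real.summable_abs_int_rpow (by norm_num))
    exact (hasSum_ite_eq 0 (1:ℝ)).summable
  have h2 : Summable (fun n : ℕ => (n:ℝ) ^ (-(5/4) : ℝ)) := by
    rw [Real.summable_nat_rpow]; norm_num
  have h3 := h2.mul_of_nonneg h1 (fun n => by positivity) (fun m => by
    have : (0:ℝ) ≤ if m = 0 then 1 else 0 := by split_ifs <;> norm_num
    have : 0 ≤ |(m:ℝ)| ^ (-(5/4) : ℝ) := by positivity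
    simp only [Pi.zero_apply]; linarith)
  have hinj : Function.Injective (fun ρ : ℚ => (ρ.den, ρ.num)) := by
    intro x y hxy
    simp only [Prod.mk.injEq] at hxy
    exact Rat.ext hxy.2 hxy.1
  have h4 := (h3.comp_injective hinj).mul_left (4:ℝ)
  refine Summable.of_nonneg_of_le bq_nonneg (fun ρ => ?_) h4
  simp only [Function.comp]
  have hden : (1:ℝ) ≤ ρ.den := by exact_mod_cast ρ.pos
  have hd0 : (0:ℝ) < ρ.den := by linarith
  unfold bq
  by_cases h : |ρ| ≤ 2
  · rw [if_pos h]
    by_cases hn : ρ.num = 0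
    · have : ρ = 0 := Rat.num_eq_zero.1 hn
      subst this
      have h0 : (0:ℝ) ≤ (0:ℝ) ^ (-(5/4) : ℝ) := Real.zero_rpow_nonneg _
      simp
      try linarith
    · rw [if_neg hn, add_zero]
      have hnum : |(ρ.num : ℝ)| ≤ 2 * ρ.den := by
        have h1 : |(ρ:ℝ)| ≤ 2 := by exact_mod_cast h
        have h2 : (ρ:ℝ) = ρ.num / ρ.den := by exact_mod_cast (Rat.num_div_den ρ).symm
        rw [h2, abs_div, abs_of_pos hd0, div_le_iff₀ hd0] at h1
        exact h1
      have hn0 : (0:ℝ) < |(ρ.num : ℝ)| := by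
        rw [abs_pos]; exact_mod_cast hn
      have h5 : (2 * (ρ.den:ℝ)) ^ (-(5/4) : ℝ) ≤ |(ρ.num : ℝ)| ^ (-(5/4) : ℝ) :=
        Real.rpow_le_rpow_of_nonpos hn0 hnum (by norm_num)
      have h6 : (ρ.den:ℝ) ^ (-(5/2) : ℝ) = (ρ.den:ℝ) ^ (-(5/4) : ℝ) * (ρ.den:ℝ) ^ (-(5/4) : ℝ) := by
        rw [← Real.rpow_add hd0]; norm_num
      rw [Real.mul_rpow (by norm_num) hd0.le] at h5
      have h7 : (1/4 : ℝ) ≤ (2:ℝ) ^ (-(5/4) : ℝ) := by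
        have : (2:ℝ) ^ (-2 : ℝ) ≤ (2:ℝ) ^ (-(5/4) : ℝ) := Real.rpow_le_rpow_of_exponent_le (by norm_num) (by norm_num)
        have h8 : (2:ℝ) ^ (-2 : ℝ) = 1/4 := by
          rw [Real.rpow_neg (by norm_num)]; norm_num
        linarith
      rw [h6]
      have h9 : 0 < (ρ.den:ℝ) ^ (-(5/4) : ℝ) := by positivity
      have h10 : (ρ.den:ℝ) ^ (-(5/4) : ℝ) ≤ 4 * |(ρ.num : ℝ)| ^ (-(5/4) : ℝ) := by nlinarith
      nlinarith
  · rw [if_neg h]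
    have : (0:ℝ) ≤ if ρ.num = 0 then 1 else 0 := by split_ifs <;> norm_num
    have h2 : 0 ≤ |(ρ.num:ℝ)| ^ (-(5/4) : ℝ) := by positivity
    have h3 : 0 ≤ (ρ.den:ℝ) ^ (-(5/4) : ℝ) := by positivity
    exact mul_nonneg (by norm_num) (mul_nonneg h3 (add_nonneg h2 this))

lemma exists_X0 : ∃ X0 : ℕ, (∑' ρ : ℚ, if X0 < ρ.den then bq ρ else 0) ≤ 1 / 2 := by
  classical
  obtain ⟨s, hs⟩ := bq_summable.tsum_vanishing (Iic_mem_nhds (show (0:ℝ) < 1/2 by norm_num))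
  refine ⟨s.sup (fun ρ => ρ.den), ?_⟩
  have h1 := hs {ρ | s.sup (fun ρ => ρ.den) < ρ.den} (by
    rw [Set.disjoint_left]
    intro ρ h1 h2
    exact absurd (Finset.le_sup (f := fun ρ : ℚ => ρ.den) h2) (not_le.2 h1))
  rw [tsum_subtype] at h1
  refine le_trans (le_of_eq (tsum_congr fun ρ => ?_)) h1
  simp [Set.indicator_apply]

/-- major arcs -/
def arcG (ν : ℕ) (ρ : ℚ) : Set ℝ :=
  {α | α ∈ Set.Ioc (-(1/2) : ℝ) (1/2) ∧ |α - ρ| ≤ 1 / ((Nat.sqrt ν + 1) * ρ.den) ∧ ρ.den ≤ Nat.sqrt ν}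

lemma arcG_meas (ν : ℕ) (ρ : ℚ) : MeasurableSet (arcG ν ρ) := by
  apply MeasurableSet.inter measurableSet_Ioc
  apply MeasurableSet.inter
  · exact measurableSet_le (f := fun α : ℝ => |α - (ρ:ℝ)|) (by fun_prop) measurable_const
  · exact MeasurableSet.const _

noncomputable def rhoN (n : ℕ) : ℚ := (Denumerable.eqv ℚ).symm n

noncomputable def arcA (ν : ℕ) (n : ℕ) : Set ℝ := disjointed (fun n => arcG ν (rhoN n)) n

lemma arcA_meas (ν : ℕ) (n : ℕ) : MeasurableSet (arcA ν n) :=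
  MeasurableSet.disjointed (fun n => arcG_meas ν (rhoN n)) n

lemma arcA_union (ν : ℕ) (hν : 0 < ν) : ⋃ n, arcA ν n = Set.Ioc (-(1/2) : ℝ) (1/2) := by
  unfold arcA
  rw [iUnion_disjointed]
  ext α
  simp only [Set.mem_iUnion]
  constructor
  · rintro ⟨n, hn⟩; exact hn.1
  · intro hα
    obtain ⟨ρ, h1, h2⟩ := Real.exists_rat_abs_sub_le_and_den_le α (Nat.sqrt_pos.2 hν)
    refine ⟨Denumerable.eqv ℚ ρ, ?_⟩
    have : rhoN (Denumerable.eqv ℚ ρ) = ρ := Equiv.symm_apply_apply _ _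
    rw [this]
    exact ⟨hα, h1, h2⟩

lemma rhoN_inj : Function.Injective rhoN := (Denumerable.eqv ℚ).symm.injective

lemma mem_arcA (ν n : ℕ) (α : ℝ) : α ∈ arcA ν n ↔ α ∈ arcG ν (rhoN n) ∧ ∀ j < n, α ∉ arcG ν (rhoN j) := by
  unfold arcA
  rw [disjointed_apply]
  simp [Finset.sup_eq_iSup]

/-- scaled integrand -/
noncomputable def gN {r : ℕ} (a l : Fin r → ℤ) (n ν : ℕ) (x : ℝ) : ℂ :=
  (arcA ν n).indicator (fun _ => (1:ℂ)) ((rhoN n : ℝ) + x / ν) *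
    ((∏ i, (((ν:ℝ) ^ (-(1/2) : ℝ) : ℝ) * th (a i) (l i) ((rhoN n).num / (rhoN n).den + (x + Complex.I) / ν))) *
      Complex.exp (-(2 * Real.pi * Complex.I * x)))

lemma up_eq (n ν : ℕ) (x : ℝ) :
    up ν ((rhoN n : ℝ) + x / ν) = (rhoN n).num / (rhoN n).den + (x + Complex.I) / ν := by
  unfold up
  have : ((rhoN n : ℝ) : ℂ) = (rhoN n).num / (rhoN n).den := by
    rw [Complex.ofReal_ratCast]
    exact_mod_cast (Rat.num_div_den (rhoN n)).symm
  push_cast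
  rw [← this]; push_cast; ring

lemma integral_arcA {r : ℕ} (a l : Fin r → ℤ) (n ν : ℕ) (hν : 0 < ν) :
    Complex.exp (2 * Real.pi * Complex.I * ν * rhoN n) * (((ν:ℝ) * ((ν:ℝ) ^ (-(1/2) : ℝ)) ^ r : ℝ) * ∫ α in arcA ν n, PhiF a l ν α) =
      ∫ x : ℝ, gN a l n ν x := by
  have hνR : (0:ℝ) < ν := by exact_mod_cast hν
  have hνC : (ν:ℂ) ≠ 0 := by exact_mod_cast hν.ne'
  rw [← MeasureTheory.integral_indicator (arcA_meas ν n)]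
  set g : ℝ → ℂ := (arcA ν n).indicator (PhiF a l ν) with hg
  have h1 : ∫ x : ℝ, g ((rhoN n : ℝ) + (ν:ℝ)⁻¹ * x) = (ν:ℝ) • ∫ x, g x := by
    rw [MeasureTheory.Measure.integral_comp_inv_mul_left (fun y => g ((rhoN n : ℝ) + y)), MeasureTheory.integral_add_left_eq_self, abs_of_pos hνR]
  rw [Complex.real_smul] at h1
  have h2 : Complex.exp (2 * Real.pi * Complex.I * ν * rhoN n) * (((ν:ℝ) * ((ν:ℝ) ^ (-(1/2) : ℝ)) ^ r : ℝ) * ∫ x, g x) =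
     (Complex.exp (2 * Real.pi * Complex.I * ν * rhoN n) * ((((ν:ℝ) ^ (-(1/2) : ℝ)) ^ r : ℝ) : ℂ)) * ∫ x : ℝ, g ((rhoN n : ℝ) + (ν:ℝ)⁻¹ * x) := by
    rw [h1]; push_cast; ring
  rw [h2, ← MeasureTheory.integral_const_mul]
  congr 1
  funext x
  unfold gN
  have hx : (ν:ℝ)⁻¹ * x = x / ν := by ring
  rw [hx]
  by_cases hm : (rhoN n : ℝ) + x / ν ∈ arcA ν n
  · rw [hg, Set.indicator_of_mem hm, Set.indicator_of_mem hm, one_mul]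
    unfold PhiF
    rw [up_eq, Finset.prod_mul_distrib, Finset.prod_const, Finset.card_univ, Fintype.card_fin]
    have he : Complex.exp (-(2 * Real.pi * Complex.I * x)) = Complex.exp (2 * Real.pi * Complex.I * ν * rhoN n) *
        Complex.exp (-(2 * Real.pi * Complex.I * ν * (((rhoN n : ℝ) + x / ν : ℝ) : ℂ))) := by
      rw [← Complex.exp_add]
      congr 1
      push_cast
      field_simp
      ring
    rw [he]
    push_cast
    ring
  · rw [hg, Set.indicator_of_notMem hm, Set.indicator_of_notMem hm]; simp

instance ratDenNeZero (ρ : ℚ) : NeZero ρ.den := ⟨ρ.den_nz⟩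

lemma gN_bound {r : ℕ} (hr : 5 ≤ r) (a l : Fin r → ℤ) (ha : ∀ i, 0 < a i) :
    ∃ C > (0:ℝ), ∀ n ν : ℕ, 0 < ν → ∀ x : ℝ,
      ‖gN a l n ν x‖ ≤ C * bq (rhoN n) * (1 + x ^ 2) ^ (-(5/4) : ℝ) := by
  choose C hC hth using fun i => th_upper (a i) (l i) (ha i)
  refine ⟨∏ i, C i, Finset.prod_pos (fun i _ => hC i), fun n ν hν x => ?_⟩
  have hCp : 0 < ∏ i, C i := Finset.prod_pos (fun i _ => hC i)
  have hx1 : (1:ℝ) ≤ 1 + x ^ 2 := by nlinarith [sq_nonneg x]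
  have hx0 : (0:ℝ) < 1 + x ^ 2 := by linarith
  have hνR : (1:ℝ) ≤ ν := by exact_mod_cast hν
  have hν0 : (0:ℝ) < ν := by linarith
  unfold gN
  by_cases hm : (rhoN n : ℝ) + x / ν ∈ arcA ν n
  swap
  · rw [Set.indicator_of_notMem hm, zero_mul, norm_zero]
    have := bq_nonneg (rhoN n)
    positivity
  rw [Set.indicator_of_mem hm, one_mul, norm_mul]
  have he : ‖Complex.exp (-(2 * Real.pi * Complex.I * x))‖ = 1 := by
    have : (-(2 * Real.pi * Complex.I * x) : ℂ) = ((-(2 * Real.pi * x) : ℝ) : ℂ) * Complex.I := by push_cast; ring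
    rw [this, Complex.norm_exp_ofReal_mul_I]
  rw [he, mul_one]
  obtain ⟨⟨hU, hd, hq⟩, -⟩ := (mem_arcA ν n _).1 hm
  set ρ := rhoN n with hρ
  set N := Nat.sqrt ν with hN
  have hq1 : (1:ℝ) ≤ ρ.den := by exact_mod_cast ρ.pos
  have hq0 : (0:ℝ) < ρ.den := by linarith
  have hqN : (ρ.den:ℝ) ≤ N := by exact_mod_cast hq
  have hN1 : (N:ℝ) ^ 2 ≤ ν := by
    have := Nat.sqrt_le' ν; exact_mod_cast this
  have hN2 : (ν:ℝ) ≤ ((N:ℝ) + 1) ^ 2 := by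
    have := (Nat.succ_le_succ_sqrt' ν); 
    have h3 := (Nat.lt_succ_sqrt' ν).le; exact_mod_cast h3
  have hd' : |x / ν| ≤ 1 / ((N + 1) * ρ.den) := by
    have : (ρ:ℝ) + x / ν - ρ = x / ν := by ring
    rwa [this] at hd
  have hρ2 : |ρ| ≤ 2 := by
    have h1 : |(ρ:ℝ)| ≤ 2 := by
      have h2 : |x / ν| ≤ 1 := hd'.trans (by
        rw [div_le_one (by positivity)]
        nlinarith [Nat.cast_nonneg (α := ℝ) N])
      have h3 := abs_le.1 h2
      rw [abs_le]
      constructor <;> linarith [hU.1, hU.2, h3.1, h3.2]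
    exact_mod_cast h1
  set w : ℂ := (x + Complex.I) / ν with hw
  have hww : w = ((ν⁻¹ : ℝ) : ℂ) * (x + Complex.I) := by rw [hw]; push_cast; ring
  have hwim : w.im = 1 / ν := by
    rw [hww, Complex.im_ofReal_mul]; simp
  have hwn : ‖w‖ = Real.sqrt (1 + x ^ 2) / ν := by
    rw [hww, norm_mul, Complex.norm_real, Real.norm_of_nonneg (by positivity), Complex.norm_def]
    have : Complex.normSq (x + Complex.I) = 1 + x ^ 2 := by simp [Complex.normSq_apply]; ring
    rw [this]; ring
  have hmaj : (ρ.den:ℝ) ^ 2 * ‖w‖ ^ 2 ≤ 2 * w.im := by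
    rw [hwn, hwim, div_pow, Real.sq_sqrt hx0.le]
    have h1 : |x| * ((N + 1) * ρ.den) ≤ ν := by
      rw [abs_div, abs_of_pos hν0, div_le_div_iff₀ hν0 (by positivity)] at hd'
      linarith
    have h2 : x ^ 2 * ((N+1) ^ 2 * (ρ.den:ℝ) ^ 2) ≤ ν ^ 2 := by
      have := pow_le_pow_left₀ (by positivity) h1 2
      rw [mul_pow, sq_abs, mul_pow] at this
      exact this
    have h3 : x ^ 2 * (ρ.den:ℝ) ^ 2 ≤ ν := by
      have h4 : x ^ 2 * (ρ.den:ℝ) ^ 2 * ν ≤ ν * ν := by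
        calc x ^ 2 * (ρ.den:ℝ) ^ 2 * (ν:ℝ) ≤ x ^ 2 * (ρ.den:ℝ) ^ 2 * ((N:ℝ)+1)^2 := by gcongr
          _ ≤ (ν:ℝ) * ν := by linarith
      exact le_of_mul_le_mul_right h4 hν0
    have h5 : (ρ.den:ℝ) ^ 2 ≤ ν := le_trans (by gcongr) hN1
    have h6 : (ρ.den:ℝ) ^ 2 * ((1 + x ^ 2) / ν ^ 2) = ((ρ.den:ℝ)^2 + x ^ 2 * (ρ.den:ℝ)^2) / ν ^ 2 := by ring
    rw [h6, mul_one_div, div_le_div_iff₀ (by positivity) hν0]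
    nlinarith
  have hterm : ∀ i, ‖((((ν:ℝ) ^ (-(1/2) : ℝ) : ℝ) : ℂ) * th (a i) (l i) (ρ.num / ρ.den + w))‖ ≤
      C i * ((ρ.den:ℝ) ^ (-(1/2) : ℝ) * (1 + x ^ 2) ^ (-(1/4) : ℝ)) := by
    intro i
    have h1 := hth i ρ.den ρ.num w ρ.isCoprime_num_den (by rw [hwim]; positivity) (by
      rw [hwim, div_le_one hν0]; exact hνR) hmaj
    rw [norm_mul, Complex.norm_real, Real.norm_of_nonneg (by positivity)]
    have h2 : (ν:ℝ) ^ (-(1/2) : ℝ) * ((ρ.den:ℝ) * ‖w‖) ^ (-(1/2) : ℝ) = (ρ.den:ℝ) ^ (-(1/2) : ℝ) * (1 + x ^ 2) ^ (-(1/4) : ℝ) := by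
      rw [← Real.mul_rpow (by positivity) (by positivity), hwn]
      have : (ν:ℝ) * (ρ.den * (Real.sqrt (1 + x ^ 2) / ν)) = ρ.den * Real.sqrt (1 + x ^ 2) := by field_simp
      rw [this, Real.mul_rpow (by positivity) (by positivity), Real.sqrt_eq_rpow, ← Real.rpow_mul hx0.le]
      norm_num
    calc _ ≤ (ν:ℝ) ^ (-(1/2) : ℝ) * (C i * ((ρ.den:ℝ) * ‖w‖) ^ (-(1/2) : ℝ)) := by gcongr
      _ = _ := by rw [← h2]; ring
  rw [norm_prod]
  refine (Finset.prod_le_prod (fun i _ => norm_nonneg _) (fun i _ => hterm i)).trans ?_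
  rw [Finset.prod_mul_distrib, Finset.prod_const, Finset.card_univ, Fintype.card_fin, mul_assoc]
  refine mul_le_mul_of_nonneg_left ?_ hCp.le
  unfold bq
  rw [if_pos hρ2]
  have e1 : (ρ.den:ℝ) ^ (-(1/2) : ℝ) ≤ 1 := Real.rpow_le_one_of_one_le_of_nonpos hq1 (by norm_num)
  have e2 : (1 + x ^ 2) ^ (-(1/4) : ℝ) ≤ 1 := Real.rpow_le_one_of_one_le_of_nonpos hx1 (by norm_num)
  have e3 : (0:ℝ) ≤ (ρ.den:ℝ) ^ (-(1/2) : ℝ) := by positivity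
  have e4 : (0:ℝ) ≤ (1 + x ^ 2) ^ (-(1/4) : ℝ) := by positivity
  refine (pow_le_pow_of_le_one (mul_nonneg e3 e4) (mul_le_one₀ e1 e4 e2) hr).trans (le_of_eq ?_)
  rw [mul_pow, ← Real.rpow_mul_natCast hq0.le, ← Real.rpow_mul_natCast hx0.le]
  norm_num

noncomputable def Pn {r : ℕ} (a l : Fin r → ℤ) (ρ : ℚ) : ℂ :=
  ∏ i, (gs ρ.den (a i) (l i) ρ.num 0 / (Real.sqrt (2 * a i) * ρ.den))

noncomputable def kJ (r : ℕ) (x : ℝ) : ℂ :=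
  (1 - x * Complex.I : ℂ) ^ (-((r/2 : ℝ):ℂ)) * Complex.exp (-(2 * Real.pi * Complex.I * x))

lemma sqrt_tendsto : Filter.Tendsto Nat.sqrt Filter.atTop Filter.atTop := by
  rw [Filter.tendsto_atTop_atTop]
  exact fun b => ⟨b * b, fun a h => Nat.le_sqrt.2 h⟩

lemma gN_tendsto {r : ℕ} (a l : Fin r → ℤ) (ha : ∀ i, 0 < a i) (h2 : ∃ i, (2:ℤ) ∣ a i ∧ ¬ (2:ℤ) ∣ l i)
    (n : ℕ) (x : ℝ) :
    Filter.Tendsto (fun ν : ℕ => gN a l n ν x) Filter.atTop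
      (nhds ((if |rhoN n| < 1/2 then Pn a l (rhoN n) else 0) * kJ r x)) := by
  set ρ := rhoN n with hρ
  have hT : Filter.Tendsto (fun ν : ℕ => (∏ i, (((ν:ℝ) ^ (-(1/2) : ℝ) : ℝ) * th (a i) (l i) (ρ.num / ρ.den + (x + Complex.I) / ν))) *
      Complex.exp (-(2 * Real.pi * Complex.I * x))) Filter.atTop (nhds (Pn a l ρ * kJ r x)) := by
    have h1 := (tendsto_finsetProd Finset.univ (fun i _ => th_limit (a i) (l i) (ha i) ρ.den ρ.num ρ.isCoprime_num_den x)).mul_const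
      (Complex.exp (-(2 * Real.pi * Complex.I * x)))
    convert h1 using 2
    rw [Finset.prod_mul_distrib, Finset.prod_const, Finset.card_univ, Fintype.card_fin, ← Complex.cpow_nat_mul]
    unfold Pn kJ
    have e0 : ((r:ℂ) * -(1/2)) = -((r/2 : ℝ):ℂ) := by push_cast; ring
    rw [e0]
    exact (mul_assoc _ _ _).symm
  have hlim : Filter.Tendsto (fun ν : ℕ => (ρ:ℝ) + x / ν) Filter.atTop (nhds (ρ:ℝ)) := by
    simpa using (tendsto_const_div_atTop_nhds_zero_nat x).const_add (ρ:ℝ)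
  rcases lt_trichotomy |ρ| (1/2) with h | h | h
  · rw [if_pos h]
    refine hT.congr' ?_
    have hR : |(ρ:ℝ)| < 1/2 := by
      have := (Rat.cast_lt (K := ℝ)).2 h
      push_cast at this; exact this
    have hin : ∀ᶠ ν : ℕ in Filter.atTop, (ρ:ℝ) + x / ν ∈ arcG ν ρ := by
      have e1 := hlim.eventually (Ioo_mem_nhds (abs_lt.1 hR).1 (abs_lt.1 hR).2)
      have e2 := sqrt_tendsto.eventually (Filter.eventually_ge_atTop ρ.den)
      have e3 := sqrt_tendsto.eventually (Filter.eventually_ge_atTop (⌈2 * |x| * ρ.den⌉₊))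
      filter_upwards [e1, e2, e3] with ν h1 h2 h3
      refine ⟨⟨h1.1, h1.2.le⟩, ?_, h2⟩
      have h4 : (ρ:ℝ) + x / ν - ρ = x / ν := by ring
      rw [h4]
      have h5 : 2 * |x| * ρ.den ≤ Nat.sqrt ν := (Nat.le_ceil _).trans (by exact_mod_cast h3)
      have h6 : ((Nat.sqrt ν : ℕ):ℝ) ^ 2 ≤ ν := by exact_mod_cast Nat.sqrt_le' ν
      have h7 : (1:ℝ) ≤ Nat.sqrt ν := by exact_mod_cast ρ.pos.trans_le h2
      have h8 : (0:ℝ) < ν := by nlinarith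
      have h9 : (0:ℝ) < ρ.den := by exact_mod_cast ρ.pos
      rw [abs_div, abs_of_pos h8, div_le_div_iff₀ h8 (by positivity)]
      have h10 : 0 ≤ |x| * ρ.den := by positivity
      nlinarith
    have hout : ∀ᶠ ν : ℕ in Filter.atTop, ∀ j ∈ Finset.range n, (ρ:ℝ) + x / ν ∉ arcG ν (rhoN j) := by
      rw [Filter.eventually_all_finset]
      intro j hj
      rw [Finset.mem_range] at hj
      have hne : (ρ:ℝ) - rhoN j ≠ 0 := by
        intro h0
        have : ρ = rhoN j := by
          have := sub_eq_zero.1 h0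
          exact_mod_cast this
        exact hj.ne' (rhoN_inj this)
      have l1 : Filter.Tendsto (fun ν : ℕ => |(ρ:ℝ) + x / ν - rhoN j|) Filter.atTop (nhds |(ρ:ℝ) - rhoN j|) :=
        (hlim.sub_const _).abs
      have l2 : Filter.Tendsto (fun ν : ℕ => 1 / (((Nat.sqrt ν : ℕ) + 1 : ℝ) * (rhoN j).den)) Filter.atTop (nhds 0) := by
        have h9 : (0:ℝ) < (rhoN j).den := by exact_mod_cast (rhoN j).pos
        have h10 : Filter.Tendsto (fun ν : ℕ => (((Nat.sqrt ν : ℕ) + 1 : ℝ) * (rhoN j).den)) Filter.atTop Filter.atTop :=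
          (Filter.tendsto_atTop_add_const_right _ _ (tendsto_natCast_atTop_atTop.comp sqrt_tendsto)).atTop_mul_const h9
        simp only [one_div]; exact h10.inv_tendsto_atTop
      filter_upwards [l2.eventually_lt l1 (abs_pos.2 hne)] with ν hν hmem
      exact absurd hmem.2.1 (not_le.2 hν)
    filter_upwards [hin, hout] with ν h1 h2
    unfold gN
    have : (rhoN n : ℝ) + x / ν ∈ arcA ν n := (mem_arcA ν n _).2 ⟨h1, fun j hj => h2 j (Finset.mem_range.2 hj)⟩
    rw [Set.indicator_of_mem this, one_mul]
  · rw [if_neg h.not_lt, zero_mul]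
    have hP : Pn a l ρ = 0 := by
      obtain ⟨i, hi1, hi2⟩ := h2
      unfold Pn
      apply Finset.prod_eq_zero (Finset.mem_univ i)
      rw [gs_vanish ρ.den (a i) (l i) ρ.num ρ.isCoprime_num_den 2 Nat.prime_two ?_ (by exact_mod_cast hi1) (by exact_mod_cast hi2), zero_div]
      rcases (abs_eq (by norm_num)).1 h with h | h <;> rw [h] <;> norm_num
    rw [hP, zero_mul] at hT
    refine squeeze_zero_norm (fun ν => ?_) (tendsto_zero_iff_norm_tendsto_zero.1 hT)
    unfold gN
    rw [← hρ, norm_mul]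
    refine mul_le_of_le_one_left (norm_nonneg _) ?_
    refine (norm_indicator_le_norm_self _ _).trans ?_
    simp
  · rw [if_neg h.not_gt, zero_mul]
    refine tendsto_const_nhds.congr' ?_
    have hR : 1/2 < |(ρ:ℝ)| := by
      have := (Rat.cast_lt (K := ℝ)).2 h
      push_cast at this; exact this
    have l1 := hlim.abs
    filter_upwards [l1.eventually (lt_mem_nhds hR)] with ν hν
    unfold gN
    rw [Set.indicator_of_notMem, zero_mul]
    intro hm
    have := ((mem_arcA ν n _).1 hm).1.1
    rw [← hρ] at this
    exact absurd (abs_le.2 ⟨this.1.le, this.2⟩) (not_le.2 hν)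

lemma gs_den_one (q : ℕ) [NeZero q] (hq : q = 1) (a l h m : ℤ) : gs q a l h m = 1 := by
  subst hq
  unfold gs
  rw [Fintype.sum_subsingleton _ (0 : ZMod 1)]
  simp

lemma gN_meas {r : ℕ} (a l : Fin r → ℤ) (ha : ∀ i, 0 < a i) (n ν : ℕ) (hν : 0 < ν) :
    MeasureTheory.AEStronglyMeasurable (gN a l n ν) MeasureTheory.volume := by
  apply Measurable.aestronglyMeasurable
  unfold gN
  have hlin : Measurable (fun x : ℝ => (rhoN n : ℝ) + x / ν) := by fun_prop
  apply Measurable.mul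
  · exact (measurable_const.indicator (arcA_meas ν n)).comp hlin
  · apply Measurable.mul
    · apply Finset.measurable_fun_prod
      intro i _
      apply Measurable.mul measurable_const
      have h1 : Continuous (fun x : ℝ => th (a i) (l i) (up ν ((rhoN n : ℝ) + x / ν))) :=
        (th_continuous (a i) (l i) (ha i) ν hν).comp (by fun_prop : Continuous (fun x : ℝ => (rhoN n : ℝ) + x / ν))
      have h2 := h1.measurable
      simpa only [up_eq] using h2
    · fun_prop

lemma int_dom : MeasureTheory.Integrable (fun x : ℝ => (1 + x ^ 2) ^ (-(5/4) : ℝ)) := by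
  have h1 := integrable_rpow_neg_one_add_norm_sq (E := ℝ) (μ := MeasureTheory.volume) (r := 5/2) (by simp; norm_num)
  refine h1.congr (Filter.Eventually.of_forall fun x => ?_)
  simp only [Real.norm_eq_abs, sq_abs]
  norm_num

noncomputable def Ln {r : ℕ} (a l : Fin r → ℤ) (n : ℕ) : ℂ :=
  (if |rhoN n| < 1/2 then Pn a l (rhoN n) else 0) * ∫ x, kJ r x

lemma int_tendsto {r : ℕ} (hr : 5 ≤ r) (a l : Fin r → ℤ) (ha : ∀ i, 0 < a i) (h2 : ∃ i, (2:ℤ) ∣ a i ∧ ¬ (2:ℤ) ∣ l i)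
    (n : ℕ) : Filter.Tendsto (fun ν : ℕ => ∫ x, gN a l n ν x) Filter.atTop (nhds (Ln a l n)) := by
  obtain ⟨C, hC, hb⟩ := gN_bound hr a l ha
  unfold Ln
  rw [← MeasureTheory.integral_const_mul]
  refine MeasureTheory.tendsto_integral_filter_of_dominated_convergence
    (fun x => C * bq (rhoN n) * (1 + x ^ 2) ^ (-(5/4) : ℝ)) ?_ ?_ (int_dom.const_mul _) ?_
  · filter_upwards [Filter.eventually_gt_atTop 0] with ν hν using gN_meas a l ha n ν hν
  · filter_upwards [Filter.eventually_gt_atTop 0] with ν hν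
    exact Filter.Eventually.of_forall fun x => hb n ν hν x
  · exact Filter.Eventually.of_forall fun x => gN_tendsto a l ha h2 n x

lemma int_bound {r : ℕ} (hr : 5 ≤ r) (a l : Fin r → ℤ) (ha : ∀ i, 0 < a i) :
    ∃ C > (0:ℝ), ∀ n ν : ℕ, 0 < ν → ‖∫ x, gN a l n ν x‖ ≤ C * bq (rhoN n) := by
  obtain ⟨C, hC, hb⟩ := gN_bound hr a l ha
  have hI : 0 ≤ ∫ x : ℝ, (1 + x ^ 2) ^ (-(5/4) : ℝ) :=
    MeasureTheory.integral_nonneg fun x => by simp only [Pi.zero_apply]; positivity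
  refine ⟨C * (∫ x : ℝ, (1 + x ^ 2) ^ (-(5/4) : ℝ)) + 1, by positivity, fun n ν hν => ?_⟩
  have h1 := MeasureTheory.norm_integral_le_of_norm_le (int_dom.const_mul (C * bq (rhoN n)))
    (Filter.Eventually.of_forall fun x => hb n ν hν x)
  rw [MeasureTheory.integral_const_mul] at h1
  have := bq_nonneg (rhoN n)
  nlinarith

lemma Ln_bound {r X0 : ℕ} (hr : 5 ≤ r) (a l : Fin r → ℤ)
    (hp : ∀ p : ℕ, p.Prime → (p ≤ X0 ∨ (p:ℤ) ∣ 2 * ∏ i, a i) → ∃ i, (p:ℤ) ∣ a i ∧ ¬ (p:ℤ) ∣ l i)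
    (n : ℕ) (hn : rhoN n ≠ 0) :
    ‖Ln a l n‖ ≤ ((∏ i, (Real.sqrt (2 * a i))⁻¹) * ‖∫ x, kJ r x‖) *
      (if X0 < (rhoN n).den then bq (rhoN n) else 0) := by
  have hK : 0 ≤ ∏ i, (Real.sqrt (2 * a i))⁻¹ := Finset.prod_nonneg fun i _ => by positivity
  have hRHS : 0 ≤ ((∏ i, (Real.sqrt (2 * a i))⁻¹) * ‖∫ x, kJ r x‖) *
      (if X0 < (rhoN n).den then bq (rhoN n) else 0) := by
    have := bq_nonneg (rhoN n)
    split_ifs <;> positivity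
  unfold Ln
  set ρ := rhoN n with hρ
  rw [norm_mul]
  by_cases hlt : |ρ| < 1/2
  swap
  · rw [if_neg hlt, norm_zero, zero_mul]; exact hRHS
  rw [if_pos hlt]
  by_cases hex : ∃ p : ℕ, p.Prime ∧ p ∣ ρ.den ∧ (p ≤ X0 ∨ (p:ℤ) ∣ 2 * ∏ i, a i)
  · obtain ⟨p, hpp, hpd, hpc⟩ := hex
    obtain ⟨i, hi1, hi2⟩ := hp p hpp hpc
    have : Pn a l ρ = 0 := by
      unfold Pn
      apply Finset.prod_eq_zero (Finset.mem_univ i)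
      rw [gs_vanish ρ.den (a i) (l i) ρ.num ρ.isCoprime_num_den p hpp hpd hi1 hi2, zero_div]
    rw [this, norm_zero, zero_mul]; exact hRHS
  push Not at hex
  have hden1 : ρ.den ≠ 1 := by
    intro h1
    have h3 : (ρ.num : ℚ) = ρ := Rat.coe_int_num_of_den_eq_one h1
    have h4 : ρ.num ≠ 0 := Rat.num_ne_zero.2 hn
    rw [← h3, ← Int.cast_abs] at hlt
    have h5 : (1:ℚ) ≤ ((|ρ.num| : ℤ) : ℚ) := by exact_mod_cast Int.one_le_abs h4
    linarith
  have hX : X0 < ρ.den := by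
    obtain ⟨p, hpp, hpd⟩ := Nat.exists_prime_and_dvd hden1
    exact (hex p hpp hpd).1.trans_le (Nat.le_of_dvd ρ.pos hpd)
  rw [if_pos hX]
  have hq1 : (1:ℝ) ≤ ρ.den := by exact_mod_cast ρ.pos
  have hq0 : (0:ℝ) < ρ.den := by linarith
  have hterm : ∀ i, ‖gs ρ.den (a i) (l i) ρ.num 0 / (Real.sqrt (2 * a i) * ρ.den)‖ ≤
      (Real.sqrt (2 * a i))⁻¹ * (ρ.den:ℝ) ^ (-(1/2) : ℝ) := by
    intro i
    have hc : IsCoprime (2 * a i) (ρ.den:ℤ) := by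
      rw [Int.isCoprime_iff_gcd_eq_one]
      by_contra hne
      obtain ⟨p, hpp, hpd⟩ := Nat.exists_prime_and_dvd hne
      have e1 : (p:ℤ) ∣ 2 * a i := (Int.natCast_dvd_natCast.2 hpd).trans (Int.gcd_dvd_left _ _)
      have e2 : (p:ℤ) ∣ ρ.den := (Int.natCast_dvd_natCast.2 hpd).trans (Int.gcd_dvd_right _ _)
      exact (hex p hpp (Int.natCast_dvd_natCast.1 e2)).2
        (e1.trans (mul_dvd_mul_left 2 (Finset.dvd_prod_of_mem a (Finset.mem_univ i))))
    have h1 := gs_bound_coprime ρ.den (a i) (l i) ρ.num 0 ρ.isCoprime_num_den hc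
    rw [norm_div, norm_mul, Complex.norm_real, Complex.norm_natCast, Real.norm_of_nonneg (Real.sqrt_nonneg _)]
    have h3 : (ρ.den:ℝ) ^ (-(1/2) : ℝ) = Real.sqrt ρ.den / ρ.den := by
      rw [Real.sqrt_div_self, Real.sqrt_eq_rpow, Real.rpow_neg hq0.le]
    rw [h3, div_eq_mul_inv, _root_.mul_inv, ← mul_assoc]
    have h4 : 0 ≤ (Real.sqrt (2 * a i))⁻¹ := by positivity
    calc _ ≤ Real.sqrt ρ.den * (Real.sqrt (2 * a i))⁻¹ * (ρ.den:ℝ)⁻¹ := by gcongr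
      _ = _ := by ring
  have hP : ‖Pn a l ρ‖ ≤ (∏ i, (Real.sqrt (2 * a i))⁻¹) * bq ρ := by
    unfold Pn
    rw [norm_prod]
    refine (Finset.prod_le_prod (fun i _ => norm_nonneg _) (fun i _ => hterm i)).trans ?_
    rw [Finset.prod_mul_distrib, Finset.prod_const, Finset.card_univ, Fintype.card_fin]
    refine mul_le_mul_of_nonneg_left ?_ hK
    unfold bq
    rw [if_pos (by linarith)]
    have e1 : (ρ.den:ℝ) ^ (-(1/2) : ℝ) ≤ 1 := Real.rpow_le_one_of_one_le_of_nonpos hq1 (by norm_num)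
    have e3 : (0:ℝ) ≤ (ρ.den:ℝ) ^ (-(1/2) : ℝ) := by positivity
    refine (pow_le_pow_of_le_one e3 e1 hr).trans (le_of_eq ?_)
    rw [← Real.rpow_mul_natCast hq0.le]
    norm_num
  calc _ ≤ ((∏ i, (Real.sqrt (2 * a i))⁻¹) * bq ρ) * ‖∫ x, kJ r x‖ := by gcongr
    _ = _ := by ring

theorem T_diag : ∃ X0 : ℕ, ∀ (r : ℕ), 5 ≤ r → ∀ (a l : Fin r → ℤ), (∀ i, 0 < a i) →
    (∀ p : ℕ, p.Prime → (p ≤ X0 ∨ (p:ℤ) ∣ 2 * ∏ i, a i) → ∃ i, (p:ℤ) ∣ a i ∧ ¬ (p:ℤ) ∣ l i) →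
    ∃ N0 : ℕ, ∀ ν : ℕ, N0 ≤ ν → ∃ t : Fin r → ℤ, ∑ i, (a i * t i ^ 2 + l i * t i) = (ν : ℤ) := by
  obtain ⟨X0, hX0⟩ := exists_X0
  refine ⟨X0, fun r hr a l ha hp => ?_⟩
  have h2 : ∃ i, (2:ℤ) ∣ a i ∧ ¬ (2:ℤ) ∣ l i := hp 2 Nat.prime_two (Or.inr ⟨_, rfl⟩)
  set J := ‖∫ x, kJ r x‖ with hJ
  set K := ∏ i, (Real.sqrt (2 * a i))⁻¹ with hK
  have hKpos : 0 < K := Finset.prod_pos fun i _ => by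
    have : (0:ℝ) < a i := by exact_mod_cast ha i
    positivity
  have hJpos : 0 < J := by
    rw [hJ, norm_pos_iff]
    exact J_ne_zero (r/2) (by
      have : (5:ℝ) ≤ r := by exact_mod_cast hr
      linarith)
  have hKJ : 0 < K * J := by positivity
  obtain ⟨C, hC, hb⟩ := int_bound hr a l ha
  have hsb : Summable (fun n => bq (rhoN n)) := bq_summable.comp_injective rhoN_inj
  have hLb : ∀ n, ‖Ln a l n‖ ≤ C * bq (rhoN n) := fun n =>
    le_of_tendsto (int_tendsto hr a l ha h2 n).norm (by
      filter_upwards [Filter.eventually_gt_atTop 0] with ν hν using hb n ν hν)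
  have hdb : ∀ n ν : ℕ, 0 < ν → ‖(∫ x, gN a l n ν x) - Ln a l n‖ ≤ 2 * C * bq (rhoN n) := fun n ν hν => by
    refine (norm_sub_le _ _).trans ?_
    linarith [hb n ν hν, hLb n]
  have hE : Filter.Tendsto (fun ν : ℕ => ∑' n, ‖(∫ x, gN a l n ν x) - Ln a l n‖) Filter.atTop (nhds 0) := by
    have h3 := tendsto_tsum_of_dominated_convergence (𝓕 := Filter.atTop) (f := fun (ν : ℕ) n => ‖(∫ x, gN a l n ν x) - Ln a l n‖)
      (g := fun _ => (0:ℝ)) (bound := fun n => 2 * C * bq (rhoN n)) (hsb.mul_left _) (fun n => by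
        have := ((int_tendsto hr a l ha h2 n).sub_const (Ln a l n)).norm
        simpa using this) (by
        filter_upwards [Filter.eventually_gt_atTop 0] with ν hν n
        rw [norm_norm]; exact hdb n ν hν)
    simpa using h3
  have hev := (hE.eventually (gt_mem_nhds (show 0 < K * J / 2 by positivity))).and (Filter.eventually_gt_atTop 0)
  obtain ⟨N0, hN0⟩ := Filter.eventually_atTop.1 hev
  refine ⟨N0, fun ν hν => ?_⟩
  obtain ⟨hlt, hνpos⟩ := hN0 ν hν
  by_contra hno
  have hintg := integral_PhiF_zero a l ha ν hνpos hno
  -- decomposition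
  have hS : HasSum (fun n => ∫ α in arcA ν n, PhiF a l ν α) 0 := by
    have h3 := MeasureTheory.hasSum_integral_iUnion (f := PhiF a l ν) (μ := MeasureTheory.volume) (s := arcA ν)
      (fun n => arcA_meas ν n) (disjoint_disjointed _) (by
        rw [arcA_union ν hνpos]
        exact ((PhiF_continuous a l ha ν hνpos).integrableOn_Icc).mono_set Set.Ioc_subset_Icc_self)
    rw [arcA_union ν hνpos, hintg] at h3
    exact h3
  have hS2 := hS.mul_left (((ν:ℝ) * ((ν:ℝ) ^ (-(1/2) : ℝ)) ^ r : ℝ) : ℂ)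
  rw [mul_zero] at hS2
  set v : ℕ → ℂ := fun n => (((ν:ℝ) * ((ν:ℝ) ^ (-(1/2) : ℝ)) ^ r : ℝ) : ℂ) * ∫ α in arcA ν n, PhiF a l ν α with hv
  have hexp1 : ∀ n, ‖Complex.exp (2 * Real.pi * Complex.I * ν * rhoN n)‖ = 1 := fun n => by
    have : (2 * Real.pi * Complex.I * ν * rhoN n : ℂ) = ((2 * Real.pi * ν * rhoN n : ℝ) : ℂ) * Complex.I := by push_cast; ring
    rw [this, Complex.norm_exp_ofReal_mul_I]
  have hvn : ∀ n, Complex.exp (2 * Real.pi * Complex.I * ν * rhoN n) * v n = ∫ x, gN a l n ν x :=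
    fun n => integral_arcA a l n ν hνpos
  set n0 := Denumerable.eqv ℚ 0 with hn0
  have hr0 : rhoN n0 = 0 := Equiv.symm_apply_apply _ _
  have hL0 : ‖Ln a l n0‖ = K * J := by
    unfold Ln
    rw [hr0, norm_mul, ← hJ]
    congr 1
    rw [if_pos (by norm_num)]
    unfold Pn
    rw [norm_prod, hK]
    refine Finset.prod_congr rfl fun i _ => ?_
    rw [gs_den_one _ (by simp)]
    simp [abs_of_nonneg (Real.sqrt_nonneg _)]
  set b' : ℕ → ℝ := fun n => if X0 < (rhoN n).den then bq (rhoN n) else 0 with hb'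
  have hb's : Summable (fun ρ : ℚ => if X0 < ρ.den then bq ρ else 0) := by
    refine Summable.of_nonneg_of_le (fun ρ => ?_) (fun ρ => ?_) bq_summable
    · have := bq_nonneg ρ
      split_ifs <;> simp [this]
    · have := bq_nonneg ρ
      split_ifs <;> simp [this]
  have hb'sum : Summable b' := hb's.comp_injective rhoN_inj
  have hb't : ∑' n, b' n ≤ 1/2 := by
    have : ∑' n, b' n = ∑' ρ : ℚ, if X0 < ρ.den then bq ρ else 0 :=
      (Denumerable.eqv ℚ).symm.tsum_eq (fun ρ : ℚ => if X0 < ρ.den then bq ρ else 0)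
    rw [this]; exact hX0
  have hb'0 : ∀ n, 0 ≤ b' n := fun n => by
    have := bq_nonneg (rhoN n)
    simp only [hb']
    split_ifs <;> simp [this]
  have hds : Summable (fun n => ‖(∫ x, gN a l n ν x) - Ln a l n‖) :=
    Summable.of_nonneg_of_le (fun n => norm_nonneg _) (fun n => hdb n ν hνpos) (hsb.mul_left _)
  have hsum1 : HasSum (fun n => (if n = n0 then Ln a l n0 else 0) - v n) (Ln a l n0 - 0) :=
    (hasSum_ite_eq n0 (Ln a l n0)).sub hS2
  have hfin := tsum_of_norm_bounded (f := fun n => (if n = n0 then Ln a l n0 else 0) - v n)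
    ((hds.hasSum).add ((hb'sum.hasSum).mul_left (K * J))) (fun n => by
      by_cases hn : n = n0
      · rw [hn, if_pos rfl]
        have h3 := hvn n0
        rw [hr0] at h3
        simp only [Rat.cast_zero, mul_zero, Complex.exp_zero, one_mul] at h3
        rw [h3, norm_sub_rev]
        have := hb'0 n0
        have : 0 ≤ K * J * b' n0 := by positivity
        linarith
      · rw [if_neg hn, zero_sub, norm_neg]
        have hne : rhoN n ≠ 0 := fun h => hn (rhoN_inj (h.trans hr0.symm))
        have h3 : ‖v n‖ = ‖∫ x, gN a l n ν x‖ := by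
          rw [← hvn n, Complex.norm_mul (Complex.exp _) (v n), hexp1, one_mul]
        rw [h3]
        have h4 := Ln_bound hr a l hp n hne
        have h5 := norm_sub_norm_le (∫ x, gN a l n ν x) (Ln a l n)
        have h6 : K * J * b' n = K * J * (if X0 < (rhoN n).den then bq (rhoN n) else 0) := rfl
        linarith)
  rw [hsum1.tsum_eq, sub_zero, hL0] at hfin
  have : K * J * ∑' n, b' n ≤ K * J * (1/2) := by gcongr
  linarith

lemma orth_basis (r : ℕ) (M : Matrix (Fin r) (Fin r) ℤ) (hsym : M.IsSymm)
    (hpos : ∀ u : Fin r → ℝ, u ≠ 0 → 0 < u ⬝ᵥ (M.map ((↑) : ℤ → ℝ)).mulVec u) :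
    ∃ b : Fin r → (Fin r → ℤ), (∀ i j, i ≠ j → b i ⬝ᵥ M.mulVec (b j) = 0) ∧
      (∀ i, 0 < b i ⬝ᵥ M.mulVec (b i)) ∧
      ∀ y : Fin r → ℤ, ((y ⬝ᵥ M.mulVec y : ℤ) : ℚ) =
        ∑ i, ((b i ⬝ᵥ M.mulVec y : ℤ) : ℚ) ^ 2 / ((b i ⬝ᵥ M.mulVec (b i) : ℤ) : ℚ) := by
  classical
  have hcastR : ∀ u v : Fin r → ℤ, ((u ⬝ᵥ M.mulVec v : ℤ) : ℝ) =
      (fun i => (u i : ℝ)) ⬝ᵥ (M.map ((↑) : ℤ → ℝ)).mulVec (fun i => (v i : ℝ)) := by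
    intro u v
    simp [dotProduct, mulVec, Matrix.map_apply]
  have hposZ : ∀ u : Fin r → ℤ, u ≠ 0 → 0 < u ⬝ᵥ M.mulVec u := by
    intro u hu
    have h1 := hpos (fun i => (u i : ℝ)) (by
      intro h; apply hu; funext i
      have := congrFun h i
      simpa using this)
    rw [← hcastR] at h1
    exact_mod_cast h1
  set MQ : Matrix (Fin r) (Fin r) ℚ := M.map ((↑) : ℤ → ℚ) with hMQ
  set B : LinearMap.BilinForm ℚ (Fin r → ℚ) := Matrix.toBilin' MQ with hB
  have hBapp : ∀ u v : Fin r → ℚ, B u v = u ⬝ᵥ MQ.mulVec v := fun u v => Matrix.toBilin'_apply' _ _ _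
  have hcast : ∀ u v : Fin r → ℤ, ((u ⬝ᵥ M.mulVec v : ℤ) : ℚ) = B (fun i => (u i : ℚ)) (fun i => (v i : ℚ)) := by
    intro u v
    rw [hBapp]
    simp [dotProduct, mulVec, hMQ, Matrix.map_apply]
  have hBs : LinearMap.IsSymm B := by
    constructor
    intro x y
    simp only [RingHom.id_apply]
    rw [hBapp, hBapp]
    have : MQᵀ = MQ := by
      rw [hMQ, ← Matrix.transpose_map, hsym.eq]
    rw [dotProduct_mulVec, ← mulVec_transpose, this, dotProduct_comm]
  obtain ⟨v0, hv0⟩ := LinearMap.BilinForm.exists_orthogonal_basis (K := ℚ) hBs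
  have hfr : Module.finrank ℚ (Fin r → ℚ) = r := Module.finrank_fin_fun ℚ
  set v := v0.reindex (finCongr hfr) with hv
  have hvo : ∀ i j, i ≠ j → B (v i) (v j) = 0 := by
    intro i j hij
    rw [hv, Module.Basis.reindex_apply, Module.Basis.reindex_apply]
    exact hv0 (fun h => hij (by simpa using h))
  have hintg : ∀ i, ∃ (d : ℤ) (b : Fin r → ℤ), d ≠ 0 ∧ (fun j => (b j : ℚ)) = (d:ℚ) • v i := by
    intro i
    obtain ⟨d, hd⟩ := IsLocalization.exist_integer_multiples_of_finite (nonZeroDivisors ℤ) (v i)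
    choose b hb using hd
    refine ⟨d, b, nonZeroDivisors.coe_ne_zero d, ?_⟩
    funext j
    have := hb j
    simpa [Submonoid.smul_def] using this
  choose d b hd hb using hintg
  have hdQ : ∀ i, (d i : ℚ) ≠ 0 := fun i => by exact_mod_cast hd i
  have hbpos : ∀ i, 0 < b i ⬝ᵥ M.mulVec (b i) := by
    intro i
    apply hposZ
    intro h
    have h1 := hb i
    rw [h] at h1
    have h2 : (d i : ℚ) • v i = 0 := by rw [← h1]; funext j; simp
    rcases smul_eq_zero.1 h2 with h3 | h3
    · exact hdQ i h3
    · exact v.ne_zero i h3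
  refine ⟨b, ?_, hbpos, ?_⟩
  · intro i j hij
    have h1 := hcast (b i) (b j)
    rw [hb, hb] at h1
    simp only [map_smul, LinearMap.smul_apply, hvo i j hij, smul_zero] at h1
    exact_mod_cast h1
  · intro y
    set yq : Fin r → ℚ := fun i => (y i : ℚ) with hyq
    have hci : ∀ i, B (v i) yq = v.repr yq i * B (v i) (v i) := by
      intro i
      conv_lhs => rw [← v.sum_repr yq]
      rw [map_sum, Finset.sum_eq_single i]
      · simp
      · intro j _ hj
        rw [map_smul, hvo i j hj.symm, smul_zero]
      · simp
    have hF : B yq yq = ∑ i, v.repr yq i ^ 2 * B (v i) (v i) := by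
      conv_lhs => enter [1]; rw [← v.sum_repr yq]
      rw [map_sum, LinearMap.sum_apply]
      refine Finset.sum_congr rfl fun i _ => ?_
      rw [map_smul, LinearMap.smul_apply, hci, smul_eq_mul]; ring
    rw [hcast, ← hyq, hF]
    refine Finset.sum_congr rfl fun i _ => ?_
    have hA := hcast (b i) (b i)
    have hAp := hbpos i
    have hAq : ((b i ⬝ᵥ M.mulVec (b i) : ℤ) : ℚ) ≠ 0 := by exact_mod_cast hAp.ne'
    rw [eq_div_iff hAq, hcast (b i) y, hA, ← hyq, hb]
    simp only [map_smul, LinearMap.smul_apply, smul_eq_mul]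
    rw [hci]; ring

lemma prime_step (p : ℕ) (P c : ℤ) (hP : P ≠ 0) (e : ℕ) (u : ℤ) (hPe : P = p ^ e * u)
    (h : (p:ℤ) ∣ c / (Int.gcd c P : ℤ)) : (p:ℤ) ^ (e+1) ∣ c := by
  set g : ℤ := (Int.gcd c P : ℤ) with hg
  have hg0 : Int.gcd c P ≠ 0 := by
    rw [Ne, Int.gcd_eq_zero_iff]; tauto
  have hgc : g ∣ c := Int.gcd_dvd_left _ _
  have hgP : g ∣ P := Int.gcd_dvd_right _ _
  have hcop : IsCoprime (c / g) (P / g) := by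
    rw [Int.isCoprime_iff_gcd_eq_one]
    exact Int.gcd_div_gcd_div_gcd (Nat.pos_of_ne_zero hg0)
  have hc2 : IsCoprime ((p:ℤ) ^ e) (P / g) := (hcop.of_isCoprime_of_dvd_left h).pow_left
  have h1 : (p:ℤ) ^ e ∣ g * (P / g) := by
    rw [Int.mul_ediv_cancel' hgP]; exact ⟨u, hPe⟩
  have h2 : (p:ℤ) ^ e ∣ g := hc2.dvd_of_dvd_mul_right h1
  have h3 : c = g * (c / g) := (Int.mul_ediv_cancel' hgc).symm
  rw [h3, pow_succ]
  exact mul_dvd_mul h2 h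

theorem T_main (r : ℕ) (hr : 5 ≤ r) (M : Matrix (Fin r) (Fin r) ℤ) (hsym : M.IsSymm)
    (hpos : ∀ u : Fin r → ℝ, u ≠ 0 → 0 < u ⬝ᵥ (M.map ((↑) : ℤ → ℝ)).mulVec u)
    (n0 : ℤ) (hn0 : n0 ≠ 0) (hloc : ∀ Q : ℤ, 0 < Q → ∃ y : Fin r → ℤ, Q ∣ y ⬝ᵥ M.mulVec y - n0) :
    ∃ D : ℤ, 0 < D ∧ ∃ N0 : ℤ, ∀ n : ℤ, N0 ≤ n → D ∣ n - n0 → ∃ y : Fin r → ℤ, y ⬝ᵥ M.mulVec y = n := by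
  obtain ⟨X0, hT⟩ := T_diag
  obtain ⟨b, hbo, hbp, hbF⟩ := orth_basis r M hsym hpos
  set A : Fin r → ℤ := fun i => b i ⬝ᵥ M.mulVec (b i) with hA
  set AA := ∏ i, A i with hAA
  have hAApos : 0 < AA := Finset.prod_pos fun i _ => hbp i
  set P : ℤ := (X0.factorial : ℤ) * (4 * AA * |n0|) with hP
  have hPpos : 0 < P := by
    have : 0 < X0.factorial := Nat.factorial_pos _
    have h2 : 0 < |n0| := abs_pos.2 hn0
    positivity
  obtain ⟨y1, hy1⟩ := hloc (P ^ 3) (by positivity)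
  set c : Fin r → ℤ := fun i => b i ⬝ᵥ M.mulVec y1 with hc
  set g : Fin r → ℤ := fun i => (Int.gcd (2 * c i) P : ℤ) with hg
  have hgP : ∀ i, g i ∣ P := fun i => Int.gcd_dvd_right _ _
  have hgc : ∀ i, g i ∣ 2 * c i := fun i => Int.gcd_dvd_left _ _
  have hgpos : ∀ i, 0 < g i := fun i => by
    have : 0 ≤ g i := by simp [hg]
    rcases this.eq_or_lt with h | h
    · exfalso
      have := hgP i
      rw [← h, zero_dvd_iff] at this
      exact hPpos.ne' this
    · exact h
  choose u hu using hgP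
  choose l hl using hgc
  have hupos : ∀ i, 0 < u i := fun i => by
    have h1 := hgpos i
    have h2 := hu i
    by_contra h3
    push Not at h3
    nlinarith
  set a : Fin r → ℤ := fun i => A i * P * u i ^ 2 with ha
  have hapos : ∀ i, 0 < a i := fun i => by
    have := hbp i
    have := hupos i
    simp only [ha]
    have : 0 < A i := hbp i
    positivity
  have hAP : ∀ i, A i ∣ P := fun i => by
    have h1 : A i ∣ AA := Finset.dvd_prod_of_mem A (Finset.mem_univ i)
    rw [hP]
    exact Dvd.dvd.mul_left (Dvd.dvd.mul_right (Dvd.dvd.mul_left h1 _) _) _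
  have hid : 4 * AA * (y1 ⬝ᵥ M.mulVec y1) = ∑ i, (2 * c i) ^ 2 * ∏ j ∈ Finset.univ.erase i, A j := by
    have h1 := hbF y1
    have h2 : ((4 * AA * (y1 ⬝ᵥ M.mulVec y1) : ℤ) : ℚ) = ((∑ i, (2 * c i) ^ 2 * ∏ j ∈ Finset.univ.erase i, A j : ℤ) : ℚ) := by
      rw [Int.cast_mul, h1, Finset.mul_sum, Int.cast_sum]
      refine Finset.sum_congr rfl fun i _ => ?_
      have h3 : AA = A i * ∏ j ∈ Finset.univ.erase i, A j := (Finset.mul_prod_erase _ _ (Finset.mem_univ i)).symm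
      have h4 : ((A i : ℤ) : ℚ) ≠ 0 := by
        have : A i ≠ 0 := (hbp i).ne'
        exact_mod_cast this
      have h5 : ((b i ⬝ᵥ M.mulVec (b i) : ℤ) : ℚ) = ((A i : ℤ) : ℚ) := rfl
      rw [h5, h3]
      push_cast
      field_simp
      ring
    exact_mod_cast h2
  obtain ⟨N0, hN0⟩ := hT r hr a l hapos (by
    intro p hp hcase
    have hpZ : Prime (p:ℤ) := Nat.prime_iff_prime_int.1 hp
    have hpP : (p:ℤ) ∣ P := by
      rcases hcase with h | h
      · rw [hP]
        exact Dvd.dvd.mul_right (Int.natCast_dvd_natCast.2 ((Nat.Prime.dvd_factorial hp).2 h)) _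
      · rcases hpZ.dvd_or_dvd h with h | h
        · exact h.trans (Dvd.intro (X0.factorial * (2 * AA * |n0|)) (by rw [hP]; ring))
        · obtain ⟨i, -, hi⟩ := hpZ.exists_mem_finset_dvd h
          rcases hpZ.dvd_or_dvd hi with h | h
          · rcases hpZ.dvd_or_dvd h with h | h
            · exact h.trans (hAP i)
            · exact h
          · exact (hpZ.dvd_of_dvd_pow h).trans ⟨g i, by rw [hu i]; ring⟩
    by_contra hno
    push Not at hno
    have hall : ∀ i, (p:ℤ) ∣ l i := fun i => hno i (by
      simp only [ha]
      exact Dvd.dvd.mul_right (Dvd.dvd.mul_left hpP _) _)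
    have hfin : FiniteMultiplicity (p:ℤ) P := Int.finiteMultiplicity_iff.2 ⟨by
      rw [Int.natAbs_natCast]; exact hp.ne_one, hPpos.ne'⟩
    obtain ⟨v, hv1, hv2⟩ := hfin.exists_eq_pow_mul_and_not_dvd
    set e := multiplicity (p:ℤ) P with he
    have hdiv : ∀ i, (p:ℤ) ^ (e+1) ∣ 2 * c i := fun i => by
      apply prime_step p P (2 * c i) hPpos.ne' e v hv1
      have h1 : 2 * c i / g i = l i := by rw [hl i, Int.mul_ediv_cancel_left _ (hgpos i).ne']
      have h2 : 2 * c i / (Int.gcd (2 * c i) P : ℤ) = l i := h1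
      rw [h2]; exact hall i
    have h1 : (p:ℤ) ^ (e+1) ∣ 4 * AA * (y1 ⬝ᵥ M.mulVec y1) := by
      rw [hid]
      refine Finset.dvd_sum fun i _ => ?_
      rw [pow_two, mul_assoc]
      exact Dvd.dvd.mul_right (hdiv i) _
    have he1 : 1 ≤ e := by
      by_contra h0
      have h0 : e = 0 := by omega
      rw [h0, pow_zero, one_mul] at hv1
      exact hv2 (hv1 ▸ hpP)
    have h2 : (p:ℤ) ^ (e+1) ∣ P ^ 3 := by
      have h3 : (p:ℤ) ^ (e * 3) ∣ P ^ 3 := by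
        rw [pow_mul]; exact pow_dvd_pow_of_dvd ⟨v, hv1⟩ 3
      exact (pow_dvd_pow _ (by omega)).trans h3
    have h3 : (p:ℤ) ^ (e+1) ∣ 4 * AA * n0 := by
      have h4 : 4 * AA * n0 = 4 * AA * (y1 ⬝ᵥ M.mulVec y1) - 4 * AA * (y1 ⬝ᵥ M.mulVec y1 - n0) := by ring
      rw [h4]
      exact dvd_sub h1 (Dvd.dvd.mul_left (h2.trans hy1) _)
    have h4 : (p:ℤ) ^ (e+1) ∣ P := by
      rw [hP]
      apply Dvd.dvd.mul_left
      refine h3.trans (mul_dvd_mul_left _ ((dvd_abs _ _).2 dvd_rfl))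
    rw [hv1, pow_succ] at h4
    exact hv2 ((mul_dvd_mul_iff_left (pow_ne_zero _ hpZ.ne_zero)).1 h4))
  refine ⟨P ^ 3, by positivity, y1 ⬝ᵥ M.mulVec y1 + P ^ 3 * N0, fun n hn hnD => ?_⟩
  have hD : P ^ 3 ∣ n - y1 ⬝ᵥ M.mulVec y1 := by
    have : n - y1 ⬝ᵥ M.mulVec y1 = (n - n0) - (y1 ⬝ᵥ M.mulVec y1 - n0) := by ring
    rw [this]; exact dvd_sub hnD hy1
  obtain ⟨ν, hν⟩ := hD
  have hP3 : 0 < P ^ 3 := by positivity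
  have hνN : (N0:ℤ) ≤ ν := by
    have : P ^ 3 * (N0:ℤ) ≤ P ^ 3 * ν := by linarith
    exact le_of_mul_le_mul_left this hP3
  obtain ⟨m, rfl⟩ : ∃ m : ℕ, ν = m := ⟨ν.toNat, by omega⟩
  obtain ⟨t, ht⟩ := hN0 m (by exact_mod_cast hνN)
  refine ⟨y1 + ∑ j, (P ^ 2 * u j * t j) • b j, ?_⟩
  have hcy : ∀ i, b i ⬝ᵥ M.mulVec (y1 + ∑ j, (P ^ 2 * u j * t j) • b j) = c i + P ^ 2 * u i * t i * A i := by
    intro i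
    rw [mulVec_add, dotProduct_add]
    congr 1
    rw [mulVec_sum, dotProduct_sum, Finset.sum_eq_single i]
    · rw [mulVec_smul, dotProduct_smul, smul_eq_mul]
    · intro j _ hj
      rw [mulVec_smul, dotProduct_smul, hbo i j hj.symm, smul_zero]
    · simp
  have h1 := hbF (y1 + ∑ j, (P ^ 2 * u j * t j) • b j)
  have h2 : n = y1 ⬝ᵥ M.mulVec y1 + P ^ 3 * ∑ i, (a i * t i ^ 2 + l i * t i) := by rw [ht]; linarith
  have h3 : (n : ℚ) = ∑ i, (((c i : ℤ):ℚ) ^ 2 / ((A i : ℤ) : ℚ) + P ^ 3 * (a i * t i ^ 2 + l i * t i)) := by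
    rw [h2, Int.cast_add, hbF y1, Int.cast_mul, Int.cast_sum, Finset.sum_add_distrib, Finset.mul_sum]
    push_cast
    rfl
  have h4 : (((y1 + ∑ j, (P ^ 2 * u j * t j) • b j) ⬝ᵥ M.mulVec (y1 + ∑ j, (P ^ 2 * u j * t j) • b j) : ℤ) : ℚ) = (n : ℚ) := by
    rw [h1, h3]
    refine Finset.sum_congr rfl fun i _ => ?_
    rw [hcy]
    have h4 : ((A i : ℤ) : ℚ) ≠ 0 := by
      have : A i ≠ 0 := (hbp i).ne'
      exact_mod_cast this
    have h5 : ((b i ⬝ᵥ M.mulVec (b i) : ℤ) : ℚ) = ((A i : ℤ) : ℚ) := rfl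
    rw [h5, div_add' _ _ _ h4]
    congr 1
    have h6 : (P:ℚ) * l i = 2 * c i * u i := by
      have : P * l i = 2 * c i * u i := by rw [hl i, hu i]; ring
      exact_mod_cast this
    simp only [ha]
    push_cast
    linear_combination (-(P:ℚ)^2 * A i * t i) * h6
  exact_mod_cast h4

lemma hensel_odd (p : ℕ) (hp : p.Prime) (hp2 : p ≠ 2) (a c x : ℤ) (ha : ¬ (p:ℤ) ∣ a) (hx : ¬ (p:ℤ) ∣ x)
    (h : (p:ℤ) ∣ a * x ^ 2 + c) (K : ℕ) : ∃ y : ℤ, ¬ (p:ℤ) ∣ y ∧ (p:ℤ) ^ (K+1) ∣ a * y ^ 2 + c := by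
  have hpZ : Prime (p:ℤ) := Nat.prime_iff_prime_int.1 hp
  induction K with
  | zero => exact ⟨x, hx, by simpa using h⟩
  | succ K ih =>
    obtain ⟨y, hy, g, hg⟩ := ih
    have hu : ¬ (p:ℤ) ∣ 2 * a * y := by
      intro h1
      rcases hpZ.dvd_or_dvd h1 with h2 | h2
      · rcases hpZ.dvd_or_dvd h2 with h3 | h3
        · exact hp2 ((Nat.prime_dvd_prime_iff_eq hp Nat.prime_two).1 (by exact_mod_cast h3))
        · exact ha h3
      · exact hy h2
    obtain ⟨α, β, hαβ⟩ := ((hpZ.coprime_iff_not_dvd).2 hu).symm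
    refine ⟨y + p ^ (K+1) * (-g * α), ?_, ?_⟩
    · intro h1
      apply hy
      have h2 : (p:ℤ) ∣ p ^ (K+1) * (-g * α) := Dvd.dvd.mul_right (dvd_pow_self _ (by omega)) _
      exact (dvd_add_left h2).1 h1
    · have e1 : a * (y + p ^ (K+1) * (-g * α)) ^ 2 + c = p ^ (K+1+1) * (g * β + a * (p:ℤ) ^ K * (g * α) ^ 2) := by
        linear_combination hg - (p:ℤ) ^ (K+1) * g * hαβ
      rw [e1]; exact dvd_mul_right _ _

lemma hensel_two (a c x : ℤ) (ha : ¬ (2:ℤ) ∣ a) (hx : ¬ (2:ℤ) ∣ x)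
    (h : (8:ℤ) ∣ a * x ^ 2 + c) (K : ℕ) : ∃ y : ℤ, ¬ (2:ℤ) ∣ y ∧ (2:ℤ) ^ (K+3) ∣ a * y ^ 2 + c := by
  induction K with
  | zero => exact ⟨x, hx, by simpa using h⟩
  | succ K ih =>
    obtain ⟨y, hy, g, hg⟩ := ih
    by_cases hge : (2:ℤ) ∣ g
    · refine ⟨y, hy, ?_⟩
      rw [hg]
      have : (2:ℤ) ^ (K+1+3) = 2 ^ (K+3) * 2 := by ring
      rw [this]; exact mul_dvd_mul_left _ hge
    · refine ⟨y + 2 ^ (K+2), ?_, ?_⟩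
      · intro h1
        have h2 : (2:ℤ) ∣ 2 ^ (K+2) := dvd_pow_self _ (by omega)
        exact hy ((dvd_add_left h2).1 h1)
      · have hodd : (2:ℤ) ∣ g + a * y := by
          have h1 : Odd g := by rw [← Int.not_even_iff_odd, even_iff_two_dvd]; exact hge
          have h2 : Odd a := by rw [← Int.not_even_iff_odd, even_iff_two_dvd]; exact ha
          have h3 : Odd y := by rw [← Int.not_even_iff_odd, even_iff_two_dvd]; exact hy
          exact even_iff_two_dvd.1 (h1.add_odd (h2.mul h3))
        obtain ⟨m, hm⟩ := hodd
        have e1 : a * (y + 2 ^ (K+2)) ^ 2 + c = 2 ^ (K+1+3) * (m + a * 2 ^ K) := by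
          linear_combination hg + (2:ℤ) ^ (K+3) * hm
        rw [e1]; exact dvd_mul_right _ _

/-- a zero supported on an injected index set -/
lemma sum_extend {m r : ℕ} (ι : Fin m → Fin r) (hι : Function.Injective ι) (y : Fin m → ℤ) (W : Fin r → ℤ) :
    ∑ i, W i * (Function.extend ι y 0 i) ^ 2 = ∑ k, W (ι k) * y k ^ 2 := by
  symm
  apply Fintype.sum_of_injective ι hι
  · intro i hi
    rw [Function.extend_apply' _ _ _ (by simpa using hi)]
    simp
  · intro k
    rw [hι.extend_apply]

lemma units_odd (p : ℕ) (hp : p.Prime) (hp2 : p ≠ 2) (r : ℕ) (W : Fin r → ℤ) (i1 i2 i3 : Fin r)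
    (h12 : i1 ≠ i2) (h13 : i1 ≠ i3) (h23 : i2 ≠ i3) (hW1 : ¬ (p:ℤ) ∣ W i1) (hW2 : ¬ (p:ℤ) ∣ W i2)
    (hW3 : ¬ (p:ℤ) ∣ W i3) (K : ℕ) :
    ∃ x : Fin r → ℤ, (∃ i, ¬ (p:ℤ) ∣ x i) ∧ (p:ℤ) ^ K ∣ ∑ i, W i * x i ^ 2 := by
  have : Fact p.Prime := ⟨hp⟩
  have hpZ : Prime (p:ℤ) := Nat.prime_iff_prime_int.1 hp
  have c1 : ((W i1 : ℤ) : ZMod p) ≠ 0 := by rwa [Ne, ZMod.intCast_zmod_eq_zero_iff_dvd]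
  have c2 : ((W i2 : ℤ) : ZMod p) ≠ 0 := by rwa [Ne, ZMod.intCast_zmod_eq_zero_iff_dvd]
  obtain ⟨α, β, hαβ⟩ := FiniteField.exists_root_sum_quadratic (R := ZMod p)
    (f := Polynomial.C ((W i1 : ℤ) : ZMod p) * Polynomial.X ^ 2 + Polynomial.C 0 * Polynomial.X + Polynomial.C ((W i3 : ℤ) : ZMod p))
    (g := Polynomial.C ((W i2 : ℤ) : ZMod p) * Polynomial.X ^ 2 + Polynomial.C 0 * Polynomial.X + Polynomial.C 0)
    (Polynomial.degree_quadratic c1) (Polynomial.degree_quadratic c2) (by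
      rw [ZMod.card]; exact hp.mod_two_eq_one_iff_ne_two.2 hp2)
  obtain ⟨s, rfl⟩ := ZMod.intCast_surjective α
  obtain ⟨t, rfl⟩ := ZMod.intCast_surjective β
  simp only [Polynomial.eval_add, Polynomial.eval_mul, Polynomial.eval_C, Polynomial.eval_pow, Polynomial.eval_X, zero_mul, add_zero] at hαβ
  have hd : (p:ℤ) ∣ W i3 * 1 ^ 2 + (W i1 * s ^ 2 + W i2 * t ^ 2) := by
    rw [← ZMod.intCast_zmod_eq_zero_iff_dvd]
    push_cast
    linear_combination hαβ
  obtain ⟨y, hy, hyd⟩ := hensel_odd p hp hp2 (W i3) _ 1 hW3 (by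
    intro h; exact hpZ.not_isUnit (isUnit_of_dvd_one h)) hd K
  have hinj : Function.Injective ![i1, i2, i3] := by
    intro a b hab
    fin_cases a <;> fin_cases b <;> simp_all [eq_comm]
  refine ⟨Function.extend ![i1, i2, i3] ![s, t, y] 0, ⟨![i1, i2, i3] 2, ?_⟩, ?_⟩
  · rw [hinj.extend_apply]
    exact hy
  · rw [sum_extend _ hinj, Fin.sum_univ_three]
    refine (pow_dvd_pow _ (Nat.le_succ K)).trans (hyd.trans (dvd_of_eq ?_))
    simp; ring

lemma units_two_T (r : ℕ) (W : Fin r → ℤ) (i1 i2 i3 i4 : Fin r)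
    (hne : [i1, i2, i3, i4].Nodup) (hW1 : ¬ (2:ℤ) ∣ W i1) (hW2 : ¬ (2:ℤ) ∣ W i2)
    (hW3 : ¬ (2:ℤ) ∣ W i3) (u : ℤ) (hu : ¬ (2:ℤ) ∣ u) (hW4 : W i4 = 2 * u) (K : ℕ) :
    ∃ x : Fin r → ℤ, (∃ i, ¬ (2:ℤ) ∣ x i) ∧ (2:ℤ) ^ K ∣ ∑ i, W i * x i ^ 2 := by
  have o1 : ∀ a : ℤ, ¬ (2:ℤ) ∣ a → ∀ b : ℤ, ∃ c, b * (1 + a * b) = 2 * c := by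
    intro a ha b
    have h2 : Odd a := by rw [← Int.not_even_iff_odd, even_iff_two_dvd]; exact ha
    have : Even (b * (1 + a * b)) := by
      rcases Int.even_or_odd b with h | h
      · exact h.mul_right _
      · exact (odd_one.add_odd (h2.mul h)).mul_left _
    exact even_iff_two_dvd.1 this
  obtain ⟨α, hα⟩ : ∃ α, W i1 + W i2 = 2 * α := ⟨(W i1 + W i2) / 2, by omega⟩
  obtain ⟨β, hβ⟩ := o1 u hu α
  obtain ⟨γ, hγ⟩ := o1 (W i3) hW3 β
  have hd : (8:ℤ) ∣ W i1 * 1 ^ 2 + (W i2 + W i3 * (2 * β) ^ 2 + W i4 * α ^ 2) := ⟨γ, by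
    rw [hW4]; linear_combination hα + 2 * hβ + 4 * hγ⟩
  obtain ⟨y, hy, hyd⟩ := hensel_two (W i1) _ 1 hW1 (by norm_num) hd K
  have hinj : Function.Injective ![i1, i2, i3, i4] := by
    intro a b hab
    simp at hne
    fin_cases a <;> fin_cases b <;> simp_all [eq_comm]
  refine ⟨Function.extend ![i1, i2, i3, i4] ![y, 1, 2 * β, α] 0, ⟨![i1, i2, i3, i4] 0, ?_⟩, ?_⟩
  · rw [hinj.extend_apply]
    exact hy
  · rw [sum_extend _ hinj, Fin.sum_univ_four]
    refine (pow_dvd_pow _ (by omega)).trans (hyd.trans (dvd_of_eq ?_))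
    simp; ring

lemma units_two_S (r : ℕ) (W : Fin r → ℤ) (ι : Fin 5 → Fin r) (hinj : Function.Injective ι)
    (hW : ∀ k, ¬ (2:ℤ) ∣ W (ι k)) (K : ℕ) :
    ∃ x : Fin r → ℤ, (∃ i, ¬ (2:ℤ) ∣ x i) ∧ (2:ℤ) ^ K ∣ ∑ i, W i * x i ^ 2 := by
  have key : ∃ (k : Fin 5) (y : Fin 5 → ℤ), y k = 1 ∧ (8:ℤ) ∣ ∑ j, W (ι j) * y j ^ 2 := by
    have h0 := hW 0
    have h1 := hW 1
    have h2 := hW 2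
    have h3 := hW 3
    have h4 := hW 4
    simp only [Fin.sum_univ_five]
    by_cases c1 : (4:ℤ) ∣ W (ι 0) + W (ι 1)
    · by_cases c2 : (8:ℤ) ∣ W (ι 0) + W (ι 1)
      · exact ⟨0, ![1, 1, 0, 0, 0], rfl, by simp; omega⟩
      · exact ⟨0, ![1, 1, 2, 0, 0], rfl, by simp; omega⟩
    · by_cases c3 : (4:ℤ) ∣ W (ι 2) + W (ι 3)
      · by_cases c2 : (8:ℤ) ∣ W (ι 2) + W (ι 3)
        · exact ⟨2, ![0, 0, 1, 1, 0], rfl, by simp; omega⟩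
        · exact ⟨2, ![0, 0, 1, 1, 2], rfl, by simp; omega⟩
      · by_cases c2 : (8:ℤ) ∣ W (ι 0) + W (ι 1) + W (ι 2) + W (ι 3)
        · exact ⟨2, ![1, 1, 1, 1, 0], rfl, by simp; omega⟩
        · exact ⟨2, ![1, 1, 1, 1, 2], rfl, by simp; omega⟩
  obtain ⟨k, y, hyk, hd⟩ := key
  rw [← Finset.add_sum_erase _ _ (Finset.mem_univ k), hyk] at hd
  obtain ⟨z, hz, hzd⟩ := hensel_two (W (ι k)) _ 1 (hW k) (by norm_num) hd K
  refine ⟨Function.extend ι (Function.update y k z) 0, ⟨ι k, ?_⟩, ?_⟩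
  · rw [hinj.extend_apply, Function.update_self]; exact hz
  · rw [sum_extend _ hinj, ← Finset.add_sum_erase _ _ (Finset.mem_univ k), Function.update_self]
    refine (pow_dvd_pow _ (by omega)).trans (hzd.trans (dvd_of_eq ?_))
    congr 1
    refine Finset.sum_congr rfl fun j hj => ?_
    rw [Function.update_of_ne (Finset.ne_of_mem_erase hj)]

lemma units0 (p : ℕ) (hp : p.Prime) (r : ℕ) (hr : 5 ≤ r) (U : Fin r → ℤ) (hU : ∀ i, ¬ (p:ℤ) ∣ U i)
    (S : Finset (Fin r)) (hS : 2 < S.card) (K : ℕ) :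
    ∃ x : Fin r → ℤ, (∃ i, ¬ (p:ℤ) ∣ x i) ∧ (p:ℤ) ^ K ∣ ∑ i, (if i ∈ S then U i else p * U i) * x i ^ 2 := by
  obtain ⟨i1, i2, i3, h1, h2, h3, h12, h13, h23⟩ := Finset.two_lt_card_iff.1 hS
  by_cases hp2 : p = 2
  · subst hp2
    by_cases hT : ∃ i4, i4 ∉ S
    · obtain ⟨i4, h4⟩ := hT
      have h14 : i1 ≠ i4 := fun h => h4 (h ▸ h1)
      have h24 : i2 ≠ i4 := fun h => h4 (h ▸ h2)
      have h34 : i3 ≠ i4 := fun h => h4 (h ▸ h3)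
      exact units_two_T r (fun i => if i ∈ S then U i else (2:ℕ) * U i) i1 i2 i3 i4 (by simp [*])
        (by simpa [h1] using hU i1) (by simpa [h2] using hU i2) (by simpa [h3] using hU i3) (U i4)
        (by simpa using hU i4) (by simp [h4]) K
    · push Not at hT
      exact units_two_S r (fun i => if i ∈ S then U i else (2:ℕ) * U i) (Fin.castLE hr) (Fin.castLE_injective hr)
        (fun k => by simpa [hT] using hU _) K
  · exact units_odd p hp hp2 r (fun i => if i ∈ S then U i else p * U i) i1 i2 i3 h12 h13 h23
      (by simpa [h1] using hU i1) (by simpa [h2] using hU i2) (by simpa [h3] using hU i3) K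

lemma iso_diag_aux (p : ℕ) (hp : p.Prime) (r : ℕ) (hr : 5 ≤ r) (A U : Fin r → ℤ) (hU : ∀ i, ¬ (p:ℤ) ∣ U i)
    (v m : Fin r → ℕ) (hA : ∀ i, A i = p ^ v i * U i) (S : Finset (Fin r)) (hS : 2 < S.card) (E : ℕ)
    (hE : ∀ i, v i + 2 * m i = E + if i ∈ S then 0 else 1) (W : ℕ) (hW : ∀ i, v i + m i < W) (K : ℕ) :
    ∃ t : Fin r → ℤ, (∃ i, ¬ (p:ℤ) ^ W ∣ A i * t i) ∧ (p:ℤ) ^ K ∣ ∑ i, A i * t i ^ 2 := by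
  have hpZ : Prime (p:ℤ) := Nat.prime_iff_prime_int.1 hp
  obtain ⟨x, ⟨i, hi⟩, hd⟩ := units0 p hp r hr U hU S hS K
  refine ⟨fun i => p ^ m i * x i, ⟨i, ?_⟩, ?_⟩
  · intro h
    have h1 : (p:ℤ) ^ (v i + m i + 1) ∣ A i * (p ^ m i * x i) := (pow_dvd_pow _ (hW i)).trans h
    have h2 : A i * (p ^ m i * x i) = p ^ (v i + m i) * (U i * x i) := by rw [hA]; ring
    rw [h2, pow_succ] at h1
    rcases hpZ.dvd_or_dvd ((mul_dvd_mul_iff_left (pow_ne_zero _ hpZ.ne_zero)).1 h1) with h3 | h3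
    · exact hU i h3
    · exact hi h3
  · have h1 : ∑ i, A i * (p ^ m i * x i) ^ 2 = p ^ E * ∑ i, (if i ∈ S then U i else p * U i) * x i ^ 2 := by
      rw [Finset.mul_sum]
      refine Finset.sum_congr rfl fun i _ => ?_
      have h2 : A i * (p ^ m i * x i) ^ 2 = p ^ (v i + 2 * m i) * U i * x i ^ 2 := by rw [hA]; ring
      rw [h2, hE i]
      split_ifs <;> ring
    rw [h1]
    exact Dvd.dvd.mul_left hd _

lemma iso_diag (p : ℕ) (hp : p.Prime) (r : ℕ) (hr : 5 ≤ r) (A : Fin r → ℤ) (hA : ∀ i, A i ≠ 0) :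
    ∃ W : ℕ, ∀ K : ℕ, ∃ t : Fin r → ℤ, (∃ i, ¬ (p:ℤ) ^ W ∣ A i * t i) ∧ (p:ℤ) ^ K ∣ ∑ i, A i * t i ^ 2 := by
  classical
  have hdec : ∀ i, ∃ (v : ℕ) (U : ℤ), A i = p ^ v * U ∧ ¬ (p:ℤ) ∣ U := fun i => by
    have hfin : FiniteMultiplicity (p:ℤ) (A i) := Int.finiteMultiplicity_iff.2 ⟨by
      rw [Int.natAbs_natCast]; exact hp.ne_one, hA i⟩
    obtain ⟨U, h1, h2⟩ := hfin.exists_eq_pow_mul_and_not_dvd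
    exact ⟨_, U, h1, h2⟩
  choose v U hAU hU using hdec
  set N := ∑ i, v i with hN
  have hvN : ∀ i, v i ≤ N := fun i => Finset.single_le_sum (f := v) (fun _ _ => Nat.zero_le _) (Finset.mem_univ i)
  set S : Finset (Fin r) := Finset.univ.filter (fun i => v i % 2 = 0) with hS
  refine ⟨2 * N + 2, fun K => ?_⟩
  by_cases hc : 2 < S.card
  · refine iso_diag_aux p hp r hr A U hU v (fun i => N - v i / 2) hAU S hc (2 * N) (fun i => ?_) _ (fun i => ?_) K
    · have := hvN i
      simp only [hS, Finset.mem_filter, Finset.mem_univ, true_and]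
      split_ifs <;> omega
    · have := hvN i
      omega
  · have hc2 : 2 < Sᶜ.card := by
      rw [Finset.card_compl, Fintype.card_fin]; omega
    refine iso_diag_aux p hp r hr A U hU v (fun i => N + 1 - (v i + 1) / 2) hAU Sᶜ hc2 (2 * N + 1) (fun i => ?_) _ (fun i => ?_) K
    · have := hvN i
      simp only [hS, Finset.mem_compl, Finset.mem_filter, Finset.mem_univ, true_and]
      split_ifs <;> omega
    · have := hvN i
      omega

lemma iso_F (p : ℕ) (hp : p.Prime) (r : ℕ) (hr : 5 ≤ r) (M : Matrix (Fin r) (Fin r) ℤ) (hsym : M.IsSymm)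
    (hpos : ∀ u : Fin r → ℝ, u ≠ 0 → 0 < u ⬝ᵥ (M.map ((↑) : ℤ → ℝ)).mulVec u) (K : ℕ) :
    ∃ e : Fin r → ℤ, (∃ j, ¬ (p:ℤ) ∣ e j) ∧ (p:ℤ) ^ K ∣ e ⬝ᵥ M.mulVec e := by
  classical
  have hpZ : Prime (p:ℤ) := Nat.prime_iff_prime_int.1 hp
  obtain ⟨b, hbo, hbp, -⟩ := orth_basis r M hsym hpos
  obtain ⟨W, hW⟩ := iso_diag p hp r hr (fun i => b i ⬝ᵥ M.mulVec (b i)) (fun i => (hbp i).ne')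
  obtain ⟨t, ⟨i, hi⟩, hd⟩ := hW (K + 2 * W)
  set e1 := ∑ j, t j • b j with he1
  have hbe : ∀ i, b i ⬝ᵥ M.mulVec e1 = t i * (b i ⬝ᵥ M.mulVec (b i)) := by
    intro i
    rw [he1, mulVec_sum, dotProduct_sum, Finset.sum_eq_single i]
    · rw [mulVec_smul, dotProduct_smul, smul_eq_mul]
    · intro j _ hj
      rw [mulVec_smul, dotProduct_smul, hbo i j hj.symm, smul_zero]
    · simp
  have hFe : e1 ⬝ᵥ M.mulVec e1 = ∑ i, (b i ⬝ᵥ M.mulVec (b i)) * t i ^ 2 := by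
    conv_lhs => enter [1]; rw [he1]
    rw [sum_dotProduct]
    refine Finset.sum_congr rfl fun i _ => ?_
    rw [smul_dotProduct, hbe, smul_eq_mul]; ring
  have hnW : ∃ c, ¬ ∀ j, (p:ℤ) ^ c ∣ e1 j := ⟨W, fun h => by
    apply hi
    have h2 : ∃ e2 : Fin r → ℤ, e1 = ((p:ℤ) ^ W) • e2 := by
      choose e2 h2 using h
      exact ⟨e2, funext fun j => by rw [h2 j]; rfl⟩
    obtain ⟨e2, h2⟩ := h2
    have h3 := hbe i
    rw [h2, mulVec_smul, dotProduct_smul, smul_eq_mul] at h3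
    rw [mul_comm, ← h3]
    exact dvd_mul_right _ _⟩
  have hWmem : ¬ ∀ j, (p:ℤ) ^ W ∣ e1 j := fun h => by
    apply hi
    have h2 : ∃ e2 : Fin r → ℤ, e1 = ((p:ℤ) ^ W) • e2 := by
      choose e2 h2 using h
      exact ⟨e2, funext fun j => by rw [h2 j]; rfl⟩
    obtain ⟨e2, h2⟩ := h2
    have h3 := hbe i
    rw [h2, mulVec_smul, dotProduct_smul, smul_eq_mul] at h3
    rw [mul_comm, ← h3]
    exact dvd_mul_right _ _
  have hfW : Nat.find hnW ≤ W := Nat.find_min' hnW hWmem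
  have hspec := Nat.find_spec hnW
  obtain ⟨c, hc⟩ : ∃ c, Nat.find hnW = c + 1 := by
    rcases h : Nat.find hnW with _ | c
    · rw [h] at hspec
      exact absurd (fun j => by simp) hspec
    · exact ⟨c, rfl⟩
  have hmin := Nat.find_min hnW (m := c) (by omega)
  push Not at hmin
  choose e0 he0 using hmin
  have he0' : e1 = ((p:ℤ) ^ c) • e0 := funext fun j => by rw [he0 j]; rfl
  refine ⟨e0, ?_, ?_⟩
  · rw [hc] at hspec
    push Not at hspec
    obtain ⟨j, hj⟩ := hspec
    refine ⟨j, fun h => hj ?_⟩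
    rw [he0 j, pow_succ]
    exact mul_dvd_mul_left _ h
  · rw [← hFe, he0', mulVec_smul, dotProduct_smul, smul_dotProduct, smul_eq_mul, smul_eq_mul, ← mul_assoc, ← pow_add] at hd
    have h5 : (p:ℤ) ^ (c + c + K) ∣ (p:ℤ) ^ (c + c) * (e0 ⬝ᵥ M.mulVec e0) := (pow_dvd_pow _ (by omega)).trans hd
    rw [pow_add _ (c + c) K] at h5
    exact (mul_dvd_mul_iff_left (pow_ne_zero _ hpZ.ne_zero)).1 h5

/-- the local polynomial -/
def Gf {r : ℕ} (M : Matrix (Fin r) (Fin r) ℤ) (s : Fin r → ℤ) (f : ℤ) (x : Fin r → ℤ) : ℤ :=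
  x ⬝ᵥ M.mulVec x + 2 * M.det * (x ⬝ᵥ s) - 4 * M.det ^ 2 * f

lemma loc_pp (p : ℕ) (hp : p.Prime) (r : ℕ) (hr : 5 ≤ r) (M : Matrix (Fin r) (Fin r) ℤ) (hsym : M.IsSymm)
    (hdet : M.det ≠ 0)
    (hpos : ∀ u : Fin r → ℝ, u ≠ 0 → 0 < u ⬝ᵥ (M.map ((↑) : ℤ → ℝ)).mulVec u) (s : Fin r → ℤ) (f : ℤ) (K : ℕ) :
    ∃ x : Fin r → ℤ, (p:ℤ) ^ K ∣ Gf M s f x := by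
  classical
  have hpZ : Prime (p:ℤ) := Nat.prime_iff_prime_int.1 hp
  obtain ⟨e, ⟨j, hj⟩, hd⟩ := iso_F p hp r hr M hsym hpos K
  have h2D : 2 * M.det ≠ 0 := mul_ne_zero two_ne_zero hdet
  have hfin : FiniteMultiplicity (p:ℤ) (2 * M.det) := Int.finiteMultiplicity_iff.2 ⟨by
      rw [Int.natAbs_natCast]; exact hp.ne_one, h2D⟩
  obtain ⟨D', hD1, hD2⟩ := hfin.exists_eq_pow_mul_and_not_dvd
  set a := multiplicity (p:ℤ) (2 * M.det) with ha
  have hnd : ¬ (p:ℤ) ^ (a+1) ∣ 2 * M.det := by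
    intro h
    rw [hD1, pow_succ] at h
    exact hD2 ((mul_dvd_mul_iff_left (pow_ne_zero _ hpZ.ne_zero)).1 h)
  obtain ⟨i, hi⟩ : ∃ i, ¬ (p:ℤ) ^ (a+1) ∣ 2 * M.mulVec e i := by
    by_contra hno
    push Not at hno
    have h1 : M.adjugate.mulVec (M.mulVec e) j = M.det * e j := by
      rw [mulVec_mulVec, adjugate_mul, smul_mulVec, one_mulVec]; rfl
    have h2 : (p:ℤ) ^ (a+1) ∣ 2 * M.det * e j := by
      rw [mul_assoc, ← h1]
      unfold mulVec dotProduct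
      rw [Finset.mul_sum]
      refine Finset.dvd_sum fun k _ => ?_
      have h3 : 2 * (M.adjugate j k * (M.mulVec e k)) = M.adjugate j k * (2 * M.mulVec e k) := by ring
      exact h3 ▸ Dvd.dvd.mul_left (hno k) _
    have hcop : IsCoprime ((p:ℤ) ^ (a+1)) (e j) := ((hpZ.coprime_iff_not_dvd).2 hj).pow_left
    exact hnd (hcop.dvd_of_dvd_mul_right h2)
  set x0 : Fin r → ℤ := Pi.single i 1 with hx0
  have hx0e : x0 ⬝ᵥ M.mulVec e = M.mulVec e i := by rw [hx0, single_dotProduct, one_mul]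
  obtain ⟨m, hm⟩ : ∃ m : ℤ, ¬ (p:ℤ) ^ (a+1) ∣ 2 * m * M.mulVec e i + e ⬝ᵥ s := by
    by_contra hno
    push Not at hno
    have h0 := hno 0
    have h1 := hno 1
    apply hi
    have h2 : 2 * M.mulVec e i = (2 * 1 * M.mulVec e i + e ⬝ᵥ s) - (2 * 0 * M.mulVec e i + e ⬝ᵥ s) := by ring
    have h3 := dvd_sub h1 h0
    rw [← h2] at h3
    exact h3
  set w := 2 * m * M.mulVec e i + e ⬝ᵥ s with hw
  have hw0 : w ≠ 0 := fun h => hm (by rw [h]; exact dvd_zero _)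
  have hfin2 : FiniteMultiplicity (p:ℤ) w := Int.finiteMultiplicity_iff.2 ⟨by
      rw [Int.natAbs_natCast]; exact hp.ne_one, hw0⟩
  obtain ⟨w', hw1, hw2⟩ := hfin2.exists_eq_pow_mul_and_not_dvd
  set b := multiplicity (p:ℤ) w with hb
  have hba : b ≤ a := by
    by_contra hlt
    push Not at hlt
    exact hm ((pow_dvd_pow _ hlt).trans ⟨w', hw1⟩)
  obtain ⟨D2, hD2'⟩ : (p:ℤ) ^ b ∣ 2 * M.det := (pow_dvd_pow _ hba).trans ⟨D', hD1⟩
  set h := f - m ^ 2 * (x0 ⬝ᵥ M.mulVec x0) - m * (x0 ⬝ᵥ s) with hh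
  have hcop : IsCoprime ((p:ℤ) ^ K) w' := ((hpZ.coprime_iff_not_dvd).2 hw2).pow_left
  obtain ⟨α, β, hαβ⟩ := hcop
  set t := β * D2 * h with ht
  have hexM : e ⬝ᵥ M.mulVec x0 = x0 ⬝ᵥ M.mulVec e := by
    rw [dotProduct_mulVec, ← mulVec_transpose, hsym.eq, dotProduct_comm]
  refine ⟨(2 * M.det * m) • x0 + t • e, ?_⟩
  have hG : Gf M s f ((2 * M.det * m) • x0 + t • e) =
      2 * M.det * (t * w - 2 * M.det * h) + t ^ 2 * (e ⬝ᵥ M.mulVec e) := by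
    unfold Gf
    simp only [mulVec_add, mulVec_smul, dotProduct_add, add_dotProduct, smul_dotProduct, dotProduct_smul, smul_eq_mul]
    rw [hexM, hx0e, hw, hh]
    ring
  rw [hG]
  refine dvd_add (Dvd.dvd.mul_left ?_ _) (Dvd.dvd.mul_left hd _)
  refine ⟨-(α * (2 * M.det) * h), ?_⟩
  rw [hw1, ht, hD2']
  linear_combination (p:ℤ)^b * D2 * h * hαβ

lemma Gf_congr {r : ℕ} (M : Matrix (Fin r) (Fin r) ℤ) (s : Fin r → ℤ) (f : ℤ) (x v : Fin r → ℤ) (Q : ℤ)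
    (h : Q ∣ Gf M s f x) : Q ∣ Gf M s f (x + Q • v) := by
  have : Gf M s f (x + Q • v) = Gf M s f x + Q * (v ⬝ᵥ M.mulVec x + x ⬝ᵥ M.mulVec v + Q * (v ⬝ᵥ M.mulVec v) + 2 * M.det * (v ⬝ᵥ s)) := by
    unfold Gf
    simp only [mulVec_add, mulVec_smul, dotProduct_add, add_dotProduct, smul_dotProduct, dotProduct_smul, smul_eq_mul]
    ring
  rw [this]
  exact dvd_add h (dvd_mul_right _ _)

lemma loc_all (r : ℕ) (hr : 5 ≤ r) (M : Matrix (Fin r) (Fin r) ℤ) (hsym : M.IsSymm)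
    (hdet : M.det ≠ 0)
    (hpos : ∀ u : Fin r → ℝ, u ≠ 0 → 0 < u ⬝ᵥ (M.map ((↑) : ℤ → ℝ)).mulVec u) (s : Fin r → ℤ) (f : ℤ) (Q : ℕ) (hQ : 0 < Q) :
    ∃ x : Fin r → ℤ, (Q:ℤ) ∣ Gf M s f x := by
  induction Q using Nat.recOnPosPrimePosCoprime with
  | prime_pow p n hp hn =>
    obtain ⟨x, hx⟩ := loc_pp p hp r hr M hsym hdet hpos s f n
    exact ⟨x, by exact_mod_cast hx⟩
  | zero => omega
  | one => exact ⟨0, by simp⟩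
  | coprime a b ha hb hab iha ihb =>
    obtain ⟨x, hx⟩ := iha (by omega)
    obtain ⟨y, hy⟩ := ihb (by omega)
    have hc : IsCoprime (a:ℤ) (b:ℤ) := Nat.isCoprime_iff_coprime.2 hab
    obtain ⟨α, β, hαβ⟩ := hc
    have e1 : x + (a:ℤ) • (α • (y - x)) = y + (b:ℤ) • (β • (x - y)) := by
      funext j
      simp only [Pi.add_apply, Pi.smul_apply, Pi.sub_apply, smul_eq_mul]
      linear_combination (y j - x j) * hαβ
    refine ⟨x + (a:ℤ) • (α • (y - x)), ?_⟩
    push_cast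
    refine IsCoprime.mul_dvd ⟨α, β, hαβ⟩ (Gf_congr M s f x _ a hx) ?_
    rw [e1]
    exact Gf_congr M s f y _ b hy

lemma count_ap (a ρ : ℝ) (D t : ℤ) (hD : 0 < D) (hρ : (D:ℝ) ≤ ρ) :
    ∃ S : Finset ℤ, ρ / D ≤ (S.card : ℝ) ∧ ∀ x ∈ S, |(x:ℝ) - a| ≤ ρ ∧ D ∣ x - t := by
  have hDr : (0:ℝ) < D := by exact_mod_cast hD
  refine ⟨(Finset.Icc ⌈(a - ρ - t) / D⌉ ⌊(a + ρ - t) / D⌋).image (fun j => t + D * j), ?_, ?_⟩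
  · rw [Finset.card_image_of_injective]
    · rw [Int.card_Icc]
      have h1 : ((⌊(a + ρ - t) / D⌋ + 1 - ⌈(a - ρ - t) / D⌉ : ℤ) : ℝ) ≤
        (((⌊(a + ρ - t) / D⌋ + 1 - ⌈(a - ρ - t) / D⌉).toNat : ℕ) : ℝ) := by
        exact_mod_cast Int.self_le_toNat _
      refine le_trans ?_ h1
      push_cast
      have h2 := Int.sub_one_lt_floor ((a + ρ - t) / D)
      have h3 := Int.ceil_lt_add_one ((a - ρ - t) / D)
      have h4 : (a + ρ - t) / D - (a - ρ - t) / D = 2 * (ρ / D) := by ring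
      have h5 : 1 ≤ ρ / D := by rw [le_div_iff₀ hDr]; linarith
      linarith
    · intro x y h
      have : D * x = D * y := by simpa using h
      exact mul_left_cancel₀ hD.ne' this
  · intro x hx
    obtain ⟨j, hj, rfl⟩ := Finset.mem_image.1 hx
    rw [Finset.mem_Icc, Int.ceil_le, Int.le_floor, div_le_iff₀ hDr, le_div_iff₀ hDr] at hj
    refine ⟨?_, ⟨j, by ring⟩⟩
    push_cast
    rw [abs_le]
    constructor <;> nlinarith [hj.1, hj.2]

lemma hom_scale {σ : Type*} (p : MvPolynomial σ ℤ) (d : ℕ) (hp : p.IsHomogeneous d) (T : ℝ) (v : σ → ℝ) :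
    aeval (fun i => T * v i) p = T ^ d * aeval v p := by
  rw [aeval_def, aeval_def, eval₂_eq, eval₂_eq, Finset.mul_sum]
  refine Finset.sum_congr rfl (fun m hm => ?_)
  have h : m.degree = d := by
    rw [Finsupp.degree_eq_weight_one]
    exact hp (mem_support_iff.1 hm)
  simp_rw [mul_pow]
  rw [Finset.prod_mul_distrib, Finset.prod_pow_eq_pow_sum, ← h, Finsupp.degree_apply]
  ring

lemma eval_cast {H : ℕ} (p : MvPolynomial (Fin (H+1)) ℤ) (z : Fin H → ℤ) :
    ((eval (Fin.cons 1 z) p : ℤ) : ℝ) = aeval (Fin.cons (1:ℝ) (fun i => (z i : ℝ))) p := by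
  rw [← MvPolynomial.aeval_eq_eval]
  have h := MvPolynomial.aeval_algebraMap_apply ℝ (Fin.cons (1:ℤ) z) p
  have h2 : (Fin.cons (1:ℝ) (fun i => (z i : ℝ)) : Fin (H+1) → ℝ) = (algebraMap ℤ ℝ) ∘ (Fin.cons (1:ℤ) z : Fin (H+1) → ℤ) := by
    funext i
    refine Fin.cases ?_ (fun i => ?_) i <;> simp
  rw [h2, h]
  simp

lemma eval_congr_mod {H : ℕ} (p : MvPolynomial (Fin (H+1)) ℤ) (z z' : Fin H → ℤ) (D : ℤ)
    (h : ∀ i, D ∣ z i - z' i) : D ∣ eval (Fin.cons 1 z) p - eval (Fin.cons 1 z') p := by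
  have hv : ∀ i, D ∣ (Fin.cons 1 z : Fin (H+1) → ℤ) i - (Fin.cons 1 z' : Fin (H+1) → ℤ) i := by
    intro i
    refine Fin.cases ?_ (fun i => ?_) i
    · simp
    · simpa using h i
  induction p using MvPolynomial.induction_on with
  | C a => simp
  | add p q hp hq =>
    rw [map_add, map_add]
    rw [add_sub_add_comm]
    exact dvd_add hp hq
  | mul_X p i hp =>
    rw [map_mul, map_mul, eval_X, eval_X]
    generalize (Fin.cons 1 z : Fin (H+1) → ℤ) = v at *
    generalize (Fin.cons 1 z' : Fin (H+1) → ℤ) = v' at *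
    have e : eval v p * v i - eval v' p * v' i = (eval v p - eval v' p) * v i + eval v' p * (v i - v' i) := by ring
    rw [e]
    exact dvd_add (hp.mul_right _) ((hv i).mul_left _)

noncomputable def Gr {k H : ℕ} (q : Fin k → MvPolynomial (Fin (H+1)) ℤ) (R : MvPolynomial (Fin (H+1)) ℤ)
    (a : ℝ) (τ : ℝ) (w : Fin k → ℝ) (z : Fin H → ℝ) : ℝ :=
  ∑ i, w i * aeval (Fin.cons τ z : Fin (H+1) → ℝ) (q i) - a * aeval (Fin.cons τ z : Fin (H+1) → ℝ) R

lemma aeval_cont {H : ℕ} (p : MvPolynomial (Fin (H+1)) ℤ) :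
    Continuous (fun x : Fin (H+1) → ℝ => (aeval x p : ℝ)) := by
  simp_rw [aeval_def, eval₂_eq]
  fun_prop

lemma Gr_cont {k H : ℕ} (q : Fin k → MvPolynomial (Fin (H+1)) ℤ) (R : MvPolynomial (Fin (H+1)) ℤ)
    (a : ℝ) : Continuous (fun x : ℝ × (Fin k → ℝ) × (Fin H → ℝ) => Gr q R a x.1 x.2.1 x.2.2) := by
  have hc : Continuous (fun x : ℝ × (Fin k → ℝ) × (Fin H → ℝ) => (Fin.cons x.1 x.2.2 : Fin (H+1) → ℝ)) := by
    refine continuous_pi (fun i => ?_)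
    refine Fin.cases ?_ (fun i => ?_) i
    · simp only [Fin.cons_zero]; fun_prop
    · simp only [Fin.cons_succ]; fun_prop
  unfold Gr
  have h1 := fun i => (aeval_cont (q i)).comp hc
  have h2 := (aeval_cont R).comp hc
  refine Continuous.sub (continuous_finsetSum _ fun i _ => ?_) (continuous_const.mul h2)
  exact (by fun_prop : Continuous fun x : ℝ × (Fin k → ℝ) × (Fin H → ℝ) => x.2.1 i).mul (h1 i)

lemma Gr_scale {k H : ℕ} (q : Fin k → MvPolynomial (Fin (H+1)) ℤ) (hq : ∀ j, (q j).IsHomogeneous 2)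
    (R : MvPolynomial (Fin (H+1)) ℤ) (hR : R.IsHomogeneous 3) (a T τ : ℝ) (w : Fin k → ℝ) (z : Fin H → ℝ) :
    Gr q R a (T * τ) (fun i => T * w i) (fun i => T * z i) = T ^ 3 * Gr q R a τ w z := by
  have h : (Fin.cons (T * τ) (fun i => T * z i) : Fin (H+1) → ℝ) = fun i => T * (Fin.cons τ z : Fin (H+1) → ℝ) i := by
    funext i
    refine Fin.cases ?_ (fun i => ?_) i <;> simp
  unfold Gr
  rw [h, hom_scale R 3 hR, mul_sub, Finset.mul_sum]
  congr 1
  · refine Finset.sum_congr rfl fun i _ => ?_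
    rw [hom_scale (q i) 2 (hq i)]; ring
  · ring

lemma Gr_region {k H : ℕ} (q : Fin k → MvPolynomial (Fin (H+1)) ℤ) (hq : ∀ j, (q j).IsHomogeneous 2)
    (R : MvPolynomial (Fin (H+1)) ℤ) (hR : R.IsHomogeneous 3) (a : ℝ) (w0 : Fin k → ℝ) (z0 : Fin H → ℝ)
    (h0 : 0 < Gr q R a 0 w0 z0) :
    ∃ ε > 0, ∃ κ > 0, ∀ ε' T : ℝ, 0 ≤ ε' → ε' ≤ ε → 0 < T → 1 / ε ≤ T → ∀ (w : Fin k → ℝ) (z : Fin H → ℝ),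
      (∀ i, |w i - T * w0 i| ≤ ε' * T) → (∀ i, |z i - T * z0 i| ≤ ε' * T) → κ * T ^ 3 ≤ Gr q R a 1 w z := by
  have hc := (Gr_cont q R a).continuousAt (x := ((0:ℝ), w0, z0))
  have hev := hc.eventually (lt_mem_nhds (half_lt_self h0))
  obtain ⟨ε, hε, hb⟩ := Metric.eventually_nhds_iff_ball.1 hev
  refine ⟨ε / 2, by positivity, Gr q R a 0 w0 z0 / 2, by positivity, ?_⟩
  intro ε' T hε0 hε' hT hT1 w z hw hz
  have key : ∀ (x x0 : ℝ), |x - T * x0| ≤ ε' * T → |x / T - x0| ≤ ε / 2 := by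
    intro x x0 h
    have : x / T - x0 = (x - T * x0) / T := by field_simp
    rw [this, abs_div, abs_of_pos hT, div_le_iff₀ hT]
    exact h.trans (by gcongr)
  have hmem : ((1 / T, (fun i => w i / T), (fun i => z i / T)) : ℝ × (Fin k → ℝ) × (Fin H → ℝ)) ∈
      Metric.ball ((0:ℝ), w0, z0) ε := by
    apply Metric.closedBall_subset_ball (half_lt_self hε)
    rw [Metric.mem_closedBall, Prod.dist_eq, Prod.dist_eq]
    refine max_le ?_ (max_le ?_ ?_)
    · rw [Real.dist_eq, sub_zero, abs_of_pos (by positivity)]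
      exact (one_div_le hT (by positivity)).2 hT1
    · rw [dist_pi_le_iff (by positivity)]
      intro i
      exact key _ _ (hw i)
    · rw [dist_pi_le_iff (by positivity)]
      intro i
      exact key _ _ (hz i)
  have h1 := hb _ hmem
  have h2 := Gr_scale q hq R hR a T (1 / T) (fun i => w i / T) (fun i => z i / T)
  have e1 : T * (1 / T) = 1 := by field_simp
  have e2 : (fun i => T * (w i / T)) = w := by funext i; field_simp
  have e3 : (fun i => T * (z i / T)) = z := by funext i; field_simp
  simp only [e1, e2, e3] at h2
  rw [h2, mul_comm]
  have h1' : Gr q R a 0 w0 z0 / 2 ≤ Gr q R a (1 / T) (fun i => w i / T) (fun i => z i / T) := h1.le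
  gcongr

lemma Gr_exists {k H : ℕ} (q : Fin k → MvPolynomial (Fin (H+1)) ℤ)
    (R : MvPolynomial (Fin (H+1)) ℤ) (hR : R.IsHomogeneous 3)
    (halt : (∃ (z : Fin H → ℝ) (j : Fin k), aeval (Fin.cons (0 : ℝ) z) (q j) ≠ 0) ∨
      (k = 0 ∧ ∃ z : Fin H → ℝ, aeval (Fin.cons (0 : ℝ) z) R ≠ 0)) (a b : ℝ) (ha : 0 < a) (hb : 0 < b) :
    ∃ w z, 0 < Gr q R a 0 w z ∧ 0 < Gr q R b 0 w z := by
  rcases halt with ⟨z, j, hj⟩ | ⟨hk, z, hz⟩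
  · set u : ℝ := aeval (Fin.cons (0 : ℝ) z) (q j) with hu
    set v : ℝ := aeval (Fin.cons (0 : ℝ) z) R with hv
    have key : ∀ c t, Gr q R c 0 (Pi.single j t) z = t * u - c * v := by
      intro c t
      unfold Gr
      congr 1
      rw [Finset.sum_eq_single j]
      · simp [hu]
      · intro i _ hi; simp [hi]
      · simp
    refine ⟨Pi.single j ((a * |v| + b * |v| + 1) / u), z, ?_, ?_⟩
    · rw [key, div_mul_cancel₀ _ hj]
      have := le_abs_self v
      have := abs_nonneg v
      nlinarith
    · rw [key, div_mul_cancel₀ _ hj]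
      have := le_abs_self v
      have := abs_nonneg v
      nlinarith
  · subst hk
    set v : ℝ := aeval (Fin.cons (0 : ℝ) z) R with hv
    have key : ∀ c w (z : Fin H → ℝ), Gr q R c 0 w z = - (c * aeval (Fin.cons (0 : ℝ) z) R) := by
      intro c w z
      simp [Gr]
    rcases lt_or_gt_of_ne hz with h | h
    · refine ⟨0, z, ?_, ?_⟩
      · rw [key, ← hv]; nlinarith
      · rw [key, ← hv]; nlinarith
    · have hneg : (aeval (Fin.cons (0 : ℝ) (fun i => (-1:ℝ) * z i)) R : ℝ) = - v := by
        have e : (Fin.cons (0:ℝ) (fun i => (-1:ℝ) * z i) : Fin (H+1) → ℝ) = fun i => (-1) * (Fin.cons (0:ℝ) z : Fin (H+1) → ℝ) i := by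
          funext i
          refine Fin.cases ?_ (fun i => ?_) i <;> simp
        rw [e, hom_scale R 3 hR, ← hv]; ring
      refine ⟨0, fun i => (-1:ℝ) * z i, ?_, ?_⟩
      · rw [key, hneg]; nlinarith
      · rw [key, hneg]; nlinarith

lemma mul_adj_vec {r : ℕ} (M : Matrix (Fin r) (Fin r) ℤ) (s : Fin r → ℤ) :
    M.mulVec (M.adjugate.mulVec s) = M.det • s := by
  rw [Matrix.mulVec_mulVec, Matrix.mul_adjugate, Matrix.smul_mulVec, Matrix.one_mulVec]

lemma F_shift {r : ℕ} (M : Matrix (Fin r) (Fin r) ℤ) (hsym : M.IsSymm) (s x : Fin r → ℤ) :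
    (x + M.adjugate.mulVec s) ⬝ᵥ M.mulVec (x + M.adjugate.mulVec s) =
      x ⬝ᵥ M.mulVec x + 2 * M.det * (x ⬝ᵥ s) + M.adjugate.mulVec s ⬝ᵥ M.mulVec (M.adjugate.mulVec s) := by
  have h : M.adjugate.mulVec s ⬝ᵥ M.mulVec x = M.det * (x ⬝ᵥ s) := by
    rw [Matrix.dotProduct_mulVec, ← Matrix.mulVec_transpose, hsym.eq, mul_adj_vec, smul_dotProduct,
      dotProduct_comm, smul_eq_mul]
  rw [Matrix.mulVec_add, dotProduct_add, add_dotProduct, add_dotProduct, h, mul_adj_vec, dotProduct_smul, smul_eq_mul]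
  ring

lemma det_pos' {r : ℕ} (M : Matrix (Fin r) (Fin r) ℤ) (hsym : M.IsSymm)
    (hpos : ∀ u : Fin r → ℝ, u ≠ 0 → 0 < u ⬝ᵥ (M.map ((↑) : ℤ → ℝ)).mulVec u) : 0 < M.det := by
  have h : (M.map ((↑) : ℤ → ℝ)).PosDef := by
    refine Matrix.PosDef.of_dotProduct_mulVec_pos ?_ ?_
    · rw [Matrix.IsHermitian, Matrix.conjTranspose_eq_transpose_of_trivial, ← Matrix.transpose_map, hsym.eq]
    · intro x hx
      simpa using hpos x hx
  have h2 := h.det_pos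
  have h3 : (M.map ((↑) : ℤ → ℝ)).det = ((M.det : ℤ) : ℝ) := by
    exact ((Int.castRingHom ℝ).map_det M).symm
  rw [h3] at h2
  exact_mod_cast h2

lemma F_nonneg {r : ℕ} (M : Matrix (Fin r) (Fin r) ℤ)
    (hpos : ∀ u : Fin r → ℝ, u ≠ 0 → 0 < u ⬝ᵥ (M.map ((↑) : ℤ → ℝ)).mulVec u) (y : Fin r → ℤ) :
    0 ≤ y ⬝ᵥ M.mulVec y := by
  by_cases hy : y = 0
  · simp [hy]
  have h := hpos (fun i => (y i : ℝ)) (by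
    intro h; apply hy; funext i
    have := congrFun h i
    simpa using this)
  have e : (fun i => (y i : ℝ)) ⬝ᵥ (M.map ((↑) : ℤ → ℝ)).mulVec (fun i => (y i : ℝ)) = ((y ⬝ᵥ M.mulVec y : ℤ) : ℝ) := by
    simp [dotProduct, Matrix.mulVec]
  rw [e] at h
  exact_mod_cast h.le

lemma inv_form {r : ℕ} (M : Matrix (Fin r) (Fin r) ℤ) (hdet : M.det ≠ 0) (s : Fin r → ℤ) :
    (M.det : ℚ) ^ 2 * ((fun i => (s i : ℚ)) ⬝ᵥ ((M.map ((↑) : ℤ → ℚ))⁻¹).mulVec (fun i => (s i : ℚ))) =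
      ((M.adjugate.mulVec s ⬝ᵥ M.mulVec (M.adjugate.mulVec s) : ℤ) : ℚ) := by
  have hd : (M.map ((↑) : ℤ → ℚ)).det = ((M.det : ℤ) : ℚ) :=
    ((Int.castRingHom ℚ).map_det M).symm
  have ha : (M.map ((↑) : ℤ → ℚ)).adjugate = M.adjugate.map ((↑) : ℤ → ℚ) :=
    ((Int.castRingHom ℚ).map_adjugate M).symm
  have hne : (M.det : ℚ) ≠ 0 := by exact_mod_cast hdet
  rw [Matrix.inv_def, hd, ha, mul_adj_vec, Ring.inverse_eq_inv', Matrix.smul_mulVec, dotProduct_smul, dotProduct_smul]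
  have e : (fun i => (s i : ℚ)) ⬝ᵥ (M.adjugate.map ((↑) : ℤ → ℚ)).mulVec (fun i => (s i : ℚ)) = ((s ⬝ᵥ M.adjugate.mulVec s : ℤ) : ℚ) := by
    simp [dotProduct, Matrix.mulVec]
  rw [e, dotProduct_comm]
  push_cast [smul_eq_mul]
  field_simp

lemma Gr_cast {k H : ℕ} (q : Fin k → MvPolynomial (Fin (H+1)) ℤ) (R : MvPolynomial (Fin (H+1)) ℤ) (a : ℤ)
    (w : Fin k → ℤ) (z : Fin H → ℤ) :
    ((∑ i, w i * eval (Fin.cons 1 z) (q i) - a * eval (Fin.cons 1 z) R : ℤ) : ℝ) =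
      Gr q R a 1 (fun i => (w i : ℝ)) (fun i => (z i : ℝ)) := by
  unfold Gr
  push_cast
  simp_rw [eval_cast]

lemma dot_congr {r : ℕ} (D : ℤ) (u u' v v' : Fin r → ℤ) (h : ∀ i, D ∣ u i - u' i) (h' : ∀ i, D ∣ v i - v' i) :
    D ∣ u ⬝ᵥ v - u' ⬝ᵥ v' := by
  unfold dotProduct
  rw [← Finset.sum_sub_distrib]
  refine Finset.dvd_sum fun i _ => ?_
  have e : u i * v i - u' i * v' i = (u i - u' i) * v i + u' i * (v i - v' i) := by ring
  rw [e]
  exact dvd_add ((h i).mul_right _) ((h' i).mul_left _)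

/-- the integer to be represented -/
noncomputable def Nr {r k H : ℕ} (M : Matrix (Fin r) (Fin r) ℤ) (q0 : Fin r → MvPolynomial (Fin (H+1)) ℤ)
    (q : Fin k → MvPolynomial (Fin (H+1)) ℤ) (R : MvPolynomial (Fin (H+1)) ℤ)
    (w : Fin k → ℤ) (z : Fin H → ℤ) : ℤ :=
  (M.adjugate.mulVec fun i => eval (Fin.cons 1 z) (q0 i)) ⬝ᵥ M.mulVec (M.adjugate.mulVec fun i => eval (Fin.cons 1 z) (q0 i))
   + M.det * (∑ i, w i * eval (Fin.cons 1 z) (q i) - (4 * M.det) * eval (Fin.cons 1 z) R)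

lemma Nr_congr {r k H : ℕ} (M : Matrix (Fin r) (Fin r) ℤ) (q0 : Fin r → MvPolynomial (Fin (H+1)) ℤ)
    (q : Fin k → MvPolynomial (Fin (H+1)) ℤ) (R : MvPolynomial (Fin (H+1)) ℤ)
    (w w' : Fin k → ℤ) (z z' : Fin H → ℤ) (D : ℤ) (hw : ∀ i, D ∣ w i - w' i) (hz : ∀ i, D ∣ z i - z' i) :
    D ∣ Nr M q0 q R w z - Nr M q0 q R w' z' := by
  have h1 : ∀ i, D ∣ (fun i => eval (Fin.cons 1 z) (q0 i)) i - (fun i => eval (Fin.cons 1 z') (q0 i)) i :=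
    fun i => eval_congr_mod _ _ _ _ hz
  have hmv : ∀ (A : Matrix (Fin r) (Fin r) ℤ) (u u' : Fin r → ℤ), (∀ i, D ∣ u i - u' i) → ∀ i, D ∣ A.mulVec u i - A.mulVec u' i :=
    fun A u u' h i => dot_congr D _ _ _ _ (fun j => by simp) h
  have h2 := hmv M.adjugate _ _ h1
  have h3 := dot_congr D _ _ _ _ h2 (hmv M _ _ h2)
  have h4 : D ∣ (∑ i, w i * eval (Fin.cons 1 z) (q i)) - ∑ i, w' i * eval (Fin.cons 1 z') (q i) :=
    dot_congr D w w' (fun i => eval (Fin.cons 1 z) (q i)) _ hw (fun i => eval_congr_mod _ _ _ _ hz)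
  have h5 := eval_congr_mod R z z' D hz
  unfold Nr
  have h6 := dvd_add h3 ((dvd_sub h4 (h5.mul_left (4 * M.det))).mul_left M.det)
  refine h6.trans (Eq.dvd ?_)
  ring

lemma base_point {r k H : ℕ} (hr5 : 5 ≤ r)
    (M : Matrix (Fin r) (Fin r) ℤ) (hsym : M.IsSymm) (hdet : M.det ≠ 0)
    (hpos : ∀ u : Fin r → ℝ, u ≠ 0 → 0 < u ⬝ᵥ (M.map ((↑) : ℤ → ℝ)).mulVec u)
    (q0 : Fin r → MvPolynomial (Fin (H + 1)) ℤ)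
    (q : Fin k → MvPolynomial (Fin (H + 1)) ℤ) (hq : ∀ j, (q j).IsHomogeneous 2)
    (R : MvPolynomial (Fin (H + 1)) ℤ) (hR : R.IsHomogeneous 3)
    (w0 : Fin k → ℝ) (z0 : Fin H → ℝ) (h0 : 0 < Gr q R ((4 * M.det : ℤ) : ℝ) 0 w0 z0) :
    ∃ (w : Fin k → ℤ) (z : Fin H → ℤ) (D : ℤ), 0 < D ∧ ∃ N0 : ℤ, ∀ n : ℤ, N0 ≤ n →
      D ∣ n - Nr M q0 q R w z → ∃ y : Fin r → ℤ, y ⬝ᵥ M.mulVec y = n := by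
  have hΔ := det_pos' M hsym hpos
  obtain ⟨ε, hε, κ, hκ, hreg⟩ := Gr_region q hq R hR _ w0 z0 h0
  set T : ℝ := 1 / ε + ((4 * M.det : ℤ) : ℝ) / ε with hT
  have h4 : (0:ℝ) < ((4 * M.det : ℤ) : ℝ) := by exact_mod_cast (by positivity)
  have hT0 : 0 < T := by positivity
  have hTε : ((4 * M.det : ℤ) : ℝ) ≤ ε * T := by
    rw [hT, mul_add, mul_div_cancel₀ _ hε.ne', mul_div_cancel₀ _ hε.ne']; linarith
  have hex : ∀ a : ℝ, ∃ x : ℤ, |(x:ℝ) - a| ≤ ε * T ∧ 4 * M.det ∣ x := by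
    intro a
    obtain ⟨S, hS, hS2⟩ := count_ap a (ε * T) (4 * M.det) 0 (by positivity) hTε
    have hpos : (0:ℝ) < S.card := lt_of_lt_of_le (by positivity) hS
    obtain ⟨x, hx⟩ := Finset.card_pos.1 (by exact_mod_cast hpos : 0 < S.card)
    exact ⟨x, (hS2 x hx).1, by simpa using (hS2 x hx).2⟩
  choose g hg1 hg2 using hex
  choose g' hg' using hg2
  set w : Fin k → ℤ := fun i => g (T * w0 i) with hw
  set z : Fin H → ℤ := fun i => g (T * z0 i) with hz
  have h1 := hreg ε T hε.le le_rfl hT0 (by rw [hT]; have : 0 ≤ ((4 * M.det : ℤ) : ℝ) / ε := by positivity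
                                           linarith) (fun i => (w i : ℝ)) (fun i => (z i : ℝ))
    (fun i => hg1 _) (fun i => hg1 _)
  rw [← Gr_cast] at h1
  have h2 : 0 < ∑ i, w i * eval (Fin.cons 1 z) (q i) - (4 * M.det) * eval (Fin.cons 1 z) R := by
    have : (0:ℝ) < κ * T ^ 3 := by positivity
    exact_mod_cast lt_of_lt_of_le this h1
  have hN : 0 < Nr M q0 q R w z := by
    unfold Nr
    have := F_nonneg M hpos (M.adjugate.mulVec fun i => eval (Fin.cons 1 z) (q0 i))
    have := mul_pos hΔ h2
    linarith
  obtain ⟨D, hD, N0, hN0⟩ := T_main r hr5 M hsym hpos (Nr M q0 q R w z) hN.ne' (by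
    intro Q hQ
    obtain ⟨x, hx⟩ := loc_all r hr5 M hsym hdet hpos (fun i => eval (Fin.cons 1 z) (q0 i))
      (∑ i, g' (T * w0 i) * eval (Fin.cons 1 z) (q i) - eval (Fin.cons 1 z) R) Q.toNat (by omega)
    refine ⟨x + M.adjugate.mulVec (fun i => eval (Fin.cons 1 z) (q0 i)), ?_⟩
    rw [F_shift M hsym]
    rw [Int.toNat_of_nonneg hQ.le] at hx
    refine hx.trans (Eq.dvd ?_)
    unfold Gf Nr
    have e : ∑ i, w i * eval (Fin.cons 1 z) (q i) = 4 * M.det * ∑ i, g' (T * w0 i) * eval (Fin.cons 1 z) (q i) := by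
      rw [Finset.mul_sum]
      refine Finset.sum_congr rfl fun i _ => ?_
      rw [hw]
      simp only
      rw [hg']
      ring
    rw [e]
    ring)
  exact ⟨w, z, D, hD, N0, hN0⟩

theorem stmt4 (n H r k : ℕ) (hr5 : 5 ≤ r) (hn : n = r + k + H + 1)
    (M : Matrix (Fin r) (Fin r) ℤ) (hsym : M.IsSymm) (hdet : M.det ≠ 0)
    (hpos : ∀ u : Fin r → ℝ, u ≠ 0 → 0 < u ⬝ᵥ (M.map ((↑) : ℤ → ℝ)).mulVec u)
    (q : Fin (r + k) → MvPolynomial (Fin (H + 1)) ℤ) (hq : ∀ j, (q j).IsHomogeneous 2)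
    (R : MvPolynomial (Fin (H + 1)) ℤ) (hR : R.IsHomogeneous 3)
    (hdvd : ∀ i : Fin r, (X 0 : MvPolynomial (Fin (H + 1)) ℤ) ∣ q (Fin.castAdd k i))
    (halt : (0 < k ∧ ∃ (z : Fin H → ℝ) (j : Fin k),
        aeval (Fin.cons (0 : ℝ) z) (q (Fin.natAdd r j)) ≠ 0) ∨
      (k = 0 ∧ ∃ z : Fin H → ℝ, aeval (Fin.cons (0 : ℝ) z) R ≠ 0)) :
    ∃ c > (0 : ℝ), ∃ B₀ : ℝ, ∀ B : ℝ, B₀ ≤ B →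
      ∃ 𝒞 : Finset ((Fin k → ℤ) × (Fin H → ℤ)),
        c * B ^ ((2 : ℝ) / 3 * ((n : ℝ) - r - 1)) ≤ (𝒞.card : ℝ) ∧
        ∀ wz ∈ 𝒞,
          (∀ i, (|wz.1 i| : ℝ) ≤ B) ∧ (∀ j, (|wz.2 j| : ℝ) ≤ B) ∧
          B ^ 2 / 4 ≤ ((∑ i : Fin k, wz.1 i *
              eval (Fin.cons 1 wz.2) (q (Fin.natAdd r i))
            - M.det * eval (Fin.cons 1 wz.2) R : ℤ) : ℝ) ∧
          ∃ x : Fin r → ℤ,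
            (((x + M.adjugate.mulVec
                  (fun i : Fin r => eval (Fin.cons 1 wz.2) (q (Fin.castAdd k i))))
                ⬝ᵥ M.mulVec (x + M.adjugate.mulVec
                  (fun i : Fin r => eval (Fin.cons 1 wz.2) (q (Fin.castAdd k i)))) : ℤ) : ℚ)
            = (M.det : ℚ) ^ 2 *
                ((fun i : Fin r => (eval (Fin.cons 1 wz.2) (q (Fin.castAdd k i)) : ℚ))
                  ⬝ᵥ ((M.map ((↑) : ℤ → ℚ))⁻¹).mulVec
                    (fun i : Fin r => (eval (Fin.cons 1 wz.2) (q (Fin.castAdd k i)) : ℚ))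
                  - 4 * (eval (Fin.cons 1 wz.2) R : ℚ))
              + (M.det : ℚ) *
                ((∑ i : Fin k, wz.1 i *
                  eval (Fin.cons 1 wz.2) (q (Fin.natAdd r i)) : ℤ) : ℚ) := by
  have hΔ := det_pos' M hsym hpos
  have hΔ4 : (0:ℝ) < ((4 * M.det : ℤ) : ℝ) := by exact_mod_cast (by positivity)
  have hΔ1 : (0:ℝ) < ((M.det : ℤ) : ℝ) := by exact_mod_cast hΔ
  set q1 : Fin k → MvPolynomial (Fin (H + 1)) ℤ := fun j => q (Fin.natAdd r j) with hq1
  set q0 : Fin r → MvPolynomial (Fin (H + 1)) ℤ := fun j => q (Fin.castAdd k j) with hq0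
  have hq1h : ∀ j, (q1 j).IsHomogeneous 2 := fun j => hq _
  obtain ⟨w0, z0, hG1, hG4⟩ := Gr_exists q1 R hR (by
    rcases halt with ⟨_, h⟩ | h
    · exact Or.inl h
    · exact Or.inr h) _ _ hΔ1 hΔ4
  obtain ⟨w', z', D, hD, N0, hN0⟩ := base_point hr5 M hsym hdet hpos q0 q1 hq1h R hR w0 z0 hG4
  obtain ⟨ε1, hε1, κ1, hκ1, hreg1⟩ := Gr_region q1 hq1h R hR _ w0 z0 hG1
  obtain ⟨ε4, hε4, κ4, hκ4, hreg4⟩ := Gr_region q1 hq1h R hR _ w0 z0 hG4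
  set ε := min ε1 ε4 with hεd
  have hε : 0 < ε := lt_min hε1 hε4
  set A : ℝ := ‖w0‖ + ‖z0‖ with hA
  have hA0 : 0 ≤ A := by positivity
  set δ : ℝ := 1 / (A + ε) with hδd
  have hδ : 0 < δ := by positivity
  have hDr : (0:ℝ) < D := by exact_mod_cast hD
  have htend : Filter.Tendsto (fun B : ℝ => δ * B) Filter.atTop Filter.atTop :=
    Filter.tendsto_id.const_mul_atTop hδ
  have hev := ((((((htend.eventually_ge_atTop (1 / ε1)).and (htend.eventually_ge_atTop (1 / ε4))).and
    (htend.eventually_ge_atTop (D / ε))).and (htend.eventually_ge_atTop (|(N0:ℝ)| / κ4))).and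
    (htend.eventually_ge_atTop 1)).and (Filter.eventually_ge_atTop (1 / (κ1 * δ ^ 3)))).and (Filter.eventually_ge_atTop (1:ℝ))
  obtain ⟨B₀, hB₀⟩ := Filter.eventually_atTop.1 hev
  refine ⟨(ε * δ / D) ^ (k + H), by positivity, B₀, fun B hB => ?_⟩
  obtain ⟨⟨⟨⟨⟨⟨hb1, hb2⟩, hb3⟩, hb4⟩, hb5⟩, hb6⟩, hb7⟩ := hB₀ B hB
  set T : ℝ := δ * B with hT
  have hT0 : 0 < T := by linarith
  have hB0 : 0 < B := by linarith
  have hDT : (D:ℝ) ≤ ε * T := by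
    rw [div_le_iff₀ hε] at hb3; linarith
  choose S hS1 hS2 using fun (a : ℝ) (t : ℤ) => count_ap a (ε * T) D t hD hDT
  have hTA : T * A + ε * T = B := by
    rw [hT, hδd]; field_simp
  have hsize : ∀ (x : ℤ) (a : ℝ), |a| ≤ A → |(x:ℝ) - T * a| ≤ ε * T → |(x:ℝ)| ≤ B := by
    intro x a ha hx
    have h1 : |(x:ℝ)| ≤ |(x:ℝ) - T * a| + |T * a| := by
      have := abs_add_le ((x:ℝ) - T * a) (T * a)
      rwa [sub_add_cancel] at this
    rw [abs_mul, abs_of_pos hT0] at h1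
    have h2 : T * |a| ≤ T * A := by gcongr
    linarith
  refine ⟨(Fintype.piFinset fun i => S (T * w0 i) (w' i)) ×ˢ (Fintype.piFinset fun i => S (T * z0 i) (z' i)), ?_, ?_⟩
  · rw [Finset.card_product, Fintype.card_piFinset, Fintype.card_piFinset]
    push_cast
    have hp1 : (ε * T / D) ^ k ≤ ∏ i : Fin k, ((S (T * w0 i) (w' i)).card : ℝ) := by
      have := Finset.prod_le_prod (s := (Finset.univ : Finset (Fin k))) (f := fun _ => ε * T / D)
        (g := fun i => ((S (T * w0 i) (w' i)).card : ℝ)) (fun i _ => by positivity) (fun i _ => hS1 _ _)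
      rwa [Finset.prod_const, Finset.card_univ, Fintype.card_fin] at this
    have hp2 : (ε * T / D) ^ H ≤ ∏ i : Fin H, ((S (T * z0 i) (z' i)).card : ℝ) := by
      have := Finset.prod_le_prod (s := (Finset.univ : Finset (Fin H))) (f := fun _ => ε * T / D)
        (g := fun i => ((S (T * z0 i) (z' i)).card : ℝ)) (fun i _ => by positivity) (fun i _ => hS1 _ _)
      rwa [Finset.prod_const, Finset.card_univ, Fintype.card_fin] at this
    have hp3 := mul_le_mul hp1 hp2 (by positivity) (Finset.prod_nonneg fun i _ => by positivity)
    refine le_trans ?_ hp3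
    rw [← pow_add]
    have e : ε * T / D = (ε * δ / D) * B := by rw [hT]; ring
    rw [e, mul_pow]
    gcongr
    rw [← Real.rpow_natCast]
    apply Real.rpow_le_rpow_of_exponent_le hb7
    rw [hn]
    push_cast
    have : (0:ℝ) ≤ k := by positivity
    have : (0:ℝ) ≤ H := by positivity
    linarith
  · rintro ⟨w, z⟩ hwz
    rw [Finset.mem_product, Fintype.mem_piFinset, Fintype.mem_piFinset] at hwz
    obtain ⟨hw, hz⟩ := hwz
    dsimp only at hw hz ⊢
    have hw1 := fun i => (hS2 _ _ _ (hw i)).1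
    have hw2 := fun i => (hS2 _ _ _ (hw i)).2
    have hz1 := fun i => (hS2 _ _ _ (hz i)).1
    have hz2 := fun i => (hS2 _ _ _ (hz i)).2
    refine ⟨fun i => hsize _ _ ?_ (hw1 i), fun i => hsize _ _ ?_ (hz1 i), ?_, ?_⟩
    · have := norm_le_pi_norm w0 i
      rw [Real.norm_eq_abs] at this
      have := norm_nonneg z0
      linarith
    · have := norm_le_pi_norm z0 i
      rw [Real.norm_eq_abs] at this
      have := norm_nonneg w0
      linarith
    · have h1 := hreg1 ε T hε.le (min_le_left _ _) hT0 hb1 (fun i => (w i : ℝ)) (fun i => (z i : ℝ)) hw1 hz1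
      rw [← Gr_cast] at h1
      refine le_trans ?_ h1
      rw [div_le_iff₀ (by positivity)] at hb6
      have e : κ1 * T ^ 3 = (B * (κ1 * δ ^ 3)) * B ^ 2 := by rw [hT]; ring
      rw [e]
      nlinarith [sq_nonneg B]
    · have h4 := hreg4 ε T hε.le (min_le_right _ _) hT0 hb2 (fun i => (w i : ℝ)) (fun i => (z i : ℝ)) hw1 hz1
      rw [← Gr_cast] at h4
      have hbig : N0 ≤ ∑ i, w i * eval (Fin.cons 1 z) (q1 i) - (4 * M.det) * eval (Fin.cons 1 z) R := by
        have h5 : (N0 : ℝ) ≤ κ4 * T ^ 3 := by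
          rw [div_le_iff₀ hκ4] at hb4
          have h6 : T ≤ T ^ 3 := le_self_pow₀ hb5 (by norm_num)
          have := le_abs_self (N0:ℝ)
          nlinarith
        exact_mod_cast h5.trans h4
      have hpos4 : 0 < ∑ i, w i * eval (Fin.cons 1 z) (q1 i) - (4 * M.det) * eval (Fin.cons 1 z) R := by
        have : (0:ℝ) < κ4 * T ^ 3 := by positivity
        exact_mod_cast lt_of_lt_of_le this h4
      have hNr : N0 ≤ Nr M q0 q1 R w z := by
        unfold Nr
        have h7 := F_nonneg M hpos (M.adjugate.mulVec fun i => eval (Fin.cons 1 z) (q0 i))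
        have h8 : (∑ i, w i * eval (Fin.cons 1 z) (q1 i) - (4 * M.det) * eval (Fin.cons 1 z) R) ≤
          M.det * (∑ i, w i * eval (Fin.cons 1 z) (q1 i) - (4 * M.det) * eval (Fin.cons 1 z) R) :=
          le_mul_of_one_le_left hpos4.le (by omega)
        linarith
      obtain ⟨y, hy⟩ := hN0 _ hNr (Nr_congr M q0 q1 R w w' z z' D hw2 hz2)
      refine ⟨y - M.adjugate.mulVec (fun i : Fin r => eval (Fin.cons 1 z) (q0 i)), ?_⟩
      have hinv := inv_form M hdet (fun i => eval (Fin.cons 1 z) (q0 i))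
      change ((((y - M.adjugate.mulVec (fun i : Fin r => eval (Fin.cons 1 z) (q0 i))) + M.adjugate.mulVec
                  (fun i : Fin r => eval (Fin.cons 1 z) (q0 i)))
                ⬝ᵥ M.mulVec ((y - M.adjugate.mulVec (fun i : Fin r => eval (Fin.cons 1 z) (q0 i))) + M.adjugate.mulVec
                  (fun i : Fin r => eval (Fin.cons 1 z) (q0 i))) : ℤ) : ℚ) = _
      rw [sub_add_cancel, hy, mul_sub, hinv]
      unfold Nr
      push_cast
      ring
end

section
/- Let F₁,…,F_h be integral quadratic forms in m variables, Q_y(x) = Σ_{i=1}^h y_i F_i(x) with symmetric matrix M[y] = Σ_{i=1}^h y_i M_i, and let r be the rank of M[y] over the field ℚ(y₁,…,y_h); assume r ≥ 5. Suppose there do NOT exist a rational linear form l(y), an invertible rational m×m matrix P, and a definite symmetric rational r×r matrix N₁ such that Pᵀ M[y] P = l(y) · (N₁ ⊕ 0_{(m−r)×(m−r)}) identically in y. Let Δ(y) be an r×r minor of M[y] which is not the zero polynomial. Then there exists a nonempty open set U ⊆ ℝ^h such that for every y ∈ U one has Δ(y) ≠ 0, and the real quadratic form Q_y is indefinite, i.e.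 there exist u, v ∈ ℝ^m with Q_y(u) > 0 > Q_y(v). -/
open Matrix MvPolynomial

/-- Rank of the standard rank normal form. -/
lemma rank_normal_aux {L : Type*} [Field L] {m : Type*} [Fintype m] [DecidableEq m] {a b : ℕ}
    (e : m ≃ Fin a ⊕ Fin b) :
    ((Matrix.fromBlocks (1 : Matrix (Fin a) (Fin a) L) 0 0
      (0 : Matrix (Fin b) (Fin b) L)).submatrix e e).rank = a := by
  classical
  rw [Matrix.rank_submatrix, ← diagonal_one, ← diagonal_zero, fromBlocks_diagonal, rank_diagonal]
  rw [Fintype.card_subtype, Finset.card_filter, Fintype.sum_sum_type]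
  simp

/-- Rank is invariant under field extension. -/
lemma rank_map_aux {K L : Type*} [Field K] [Field L] (f : K →+* L) {m : Type*} [Fintype m]
    [DecidableEq m] (N : Matrix m m K) : (N.map f).rank = N.rank := by
  obtain ⟨V, U, e, hV, hU, hN⟩ := exists_rank_normal_form N
  have h1 : V.map f * N.map f * U.map f = (Matrix.fromBlocks 1 0 0 0).submatrix e e := by
    rw [← Matrix.map_mul, ← Matrix.map_mul, hN, ← Matrix.submatrix_map, Matrix.fromBlocks_map]
    simp
  have hV' : IsUnit (V.map f).det := by
    rw [← RingHom.mapMatrix_apply, ← RingHom.map_det]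
    exact ((isUnit_iff_isUnit_det _).1 hV).map f
  have hU' : IsUnit (U.map f).det := by
    rw [← RingHom.mapMatrix_apply, ← RingHom.map_det]
    exact ((isUnit_iff_isUnit_det _).1 hU).map f
  have := congrArg Matrix.rank h1
  rw [rank_mul_eq_left_of_isUnit_det _ _ hU', rank_mul_eq_right_of_isUnit_det _ _ hV',
    rank_normal_aux] at this
  exact this

/-- Splitting off the radical of a symmetric matrix. -/
lemma split_radical_aux {r k : ℕ} (N : Matrix (Fin (r + k)) (Fin (r + k)) ℚ) (hN : N.IsSymm)
    (hr : N.rank = r) :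
    ∃ (P : Matrix (Fin (r + k)) (Fin (r + k)) ℚ) (B : Matrix (Fin (r + k)) (Fin r) ℚ),
      IsUnit P.det ∧ (Bᵀ * N * B).det ≠ 0 ∧
      Pᵀ * N * P = (Matrix.fromBlocks (Bᵀ * N * B) 0 0 0).submatrix
        finSumFinEquiv.symm finSumFinEquiv.symm := by
  have key := exists_rank_normal_form N
  rw [hr, Fintype.card_fin, Nat.add_sub_cancel_left] at key
  obtain ⟨V, U, e, hV, hU, hVNU⟩ := key
  have hVd := (isUnit_iff_isUnit_det _).1 hV
  have hUd := (isUnit_iff_isUnit_det _).1 hU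
  have hNU : N * U = V⁻¹ * (Matrix.fromBlocks 1 0 0 0).submatrix e e := by
    rw [← hVNU, Matrix.mul_assoc V, Matrix.nonsing_inv_mul_cancel_left _ _ hVd]
  set W : Matrix (Fin r ⊕ Fin k) (Fin r ⊕ Fin k) ℚ := (Uᵀ * V⁻¹).submatrix e.symm e.symm with hW
  set T : Matrix (Fin r ⊕ Fin k) (Fin r ⊕ Fin k) ℚ := (Uᵀ * N * U).submatrix e.symm e.symm with hT
  have hWd : IsUnit W := by
    rw [isUnit_iff_isUnit_det, hW, det_submatrix_equiv_self, det_mul, det_transpose]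
    exact hUd.mul (by simpa using hVd)
  have hTW : T = W * Matrix.fromBlocks 1 0 0 0 := by
    rw [hT, Matrix.mul_assoc, hNU, ← Matrix.mul_assoc, hW]
    rw [← Matrix.submatrix_mul_equiv _ _ _ e.symm]
    simp
  have hTs : Tᵀ = T := by
    rw [hT, transpose_submatrix, transpose_mul, transpose_mul, transpose_transpose, hN.eq,
      Matrix.mul_assoc]
  have hTr : ∀ a j, T a (Sum.inr j) = 0 := by
    intro a j
    rw [hTW, Matrix.mul_apply, Fintype.sum_sum_type]
    simp
  have hTl : ∀ a j, T (Sum.inr j) a = 0 := by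
    intro a j
    rw [← hTs]; exact hTr a j
  set B : Matrix (Fin (r + k)) (Fin r) ℚ := U.submatrix id (fun i => e.symm (Sum.inl i)) with hB
  have hB1 : Bᵀ * N * B = T.toBlocks₁₁ := by
    ext i j
    simp [hB, hT, toBlocks₁₁, Matrix.mul_apply]
  have hTb : T = Matrix.fromBlocks (Bᵀ * N * B) 0 0 0 := by
    rw [hB1]
    ext (i | i) (j | j) <;> simp [toBlocks₁₁, hTr, hTl]
  refine ⟨U.submatrix id (finSumFinEquiv.symm.trans e.symm), B, ?_, ?_, ?_⟩
  · rw [← isUnit_iff_isUnit_det]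
    have : U.submatrix id (finSumFinEquiv.symm.trans e.symm) =
        U * (1 : Matrix _ _ ℚ).submatrix id (finSumFinEquiv.symm.trans e.symm) := by
      ext i j
      simp [Matrix.mul_apply, Matrix.one_apply]
    rw [this]
    refine hU.mul ?_
    rw [isUnit_iff_isUnit_det, Matrix.det_permute']
    simp
  · intro h0
    obtain ⟨v, hv, hv0⟩ := Matrix.exists_mulVec_eq_zero_iff.2 h0
    have h1 : T *ᵥ (Sum.elim v 0) = 0 := by
      rw [hTb, fromBlocks_mulVec]
      ext (i | i) <;> simp [hv0]
    rw [hTW, ← mulVec_mulVec] at h1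
    have h2 := Matrix.mulVec_injective_of_isUnit hWd (h1.trans (Matrix.mulVec_zero W).symm)
    rw [fromBlocks_mulVec] at h2
    apply hv
    ext i
    simpa using congrFun h2 (Sum.inl i)
  · rw [← hTb, hT]
    ext i j
    simp [Matrix.mul_apply]

/-- Semidefinite symmetric rational matrix of rank `r` is congruent to definite plus zero. -/
lemma split_posdef_aux {r k : ℕ} (N : Matrix (Fin (r + k)) (Fin (r + k)) ℚ) (hN : N.IsSymm)
    (hr : N.rank = r) (hpos : (N.map ((↑) : ℚ → ℝ)).PosSemidef) :
    ∃ (P : Matrix (Fin (r + k)) (Fin (r + k)) ℚ) (N₁ : Matrix (Fin r) (Fin r) ℚ),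
      IsUnit P.det ∧ N₁.IsSymm ∧ (N₁.map ((↑) : ℚ → ℝ)).PosDef ∧
      Pᵀ * N * P = (Matrix.fromBlocks N₁ 0 0 0).submatrix
        finSumFinEquiv.symm finSumFinEquiv.symm := by
  obtain ⟨P, B, hP, hd, hPN⟩ := split_radical_aux N hN hr
  refine ⟨P, Bᵀ * N * B, hP, ?_, ?_, hPN⟩
  · rw [Matrix.IsSymm, transpose_mul, transpose_mul, transpose_transpose, hN.eq, Matrix.mul_assoc]
  · have h1 : ((Bᵀ * N * B).map ((↑) : ℚ → ℝ)) =
        (B.map ((↑) : ℚ → ℝ))ᴴ * N.map ((↑) : ℚ → ℝ) * B.map ((↑) : ℚ → ℝ) := by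
      ext i j
      simp [Matrix.mul_apply]
    have h2 : ((Bᵀ * N * B).map ((↑) : ℚ → ℝ)).PosSemidef := by
      rw [h1]; exact hpos.conjTranspose_mul_mul_same _
    rw [h2.posDef_iff_det_ne_zero]
    have h3 : ((Bᵀ * N * B).map ((↑) : ℚ → ℝ)).det = (((Bᵀ * N * B).det : ℚ) : ℝ) := by
      have := RingHom.map_det (Rat.castHom ℝ) (Bᵀ * N * B)
      exact this.symm
    rw [h3]
    exact_mod_cast hd

/-- A nonzero rational polynomial does not vanish on a nonempty real open set. -/
lemma nonvanish_aux {h : ℕ} (p : MvPolynomial (Fin h) ℚ) (hp : p ≠ 0) (U : Set (Fin h → ℝ))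
    (hU : IsOpen U) (hne : U.Nonempty) :
    ∃ y ∈ U, MvPolynomial.eval₂ (algebraMap ℚ ℝ) y p ≠ 0 := by
  obtain ⟨y, hy⟩ := hne
  obtain ⟨ε, hε, hb⟩ := Metric.isOpen_iff.1 hU y hy
  by_contra! hcon
  apply hp
  have hinj := MvPolynomial.map_injective (σ := Fin h) (algebraMap ℚ ℝ) (algebraMap ℚ ℝ).injective
  apply hinj
  rw [map_zero]
  refine MvPolynomial.funext_set (fun i => Metric.ball (y i) ε) (fun i => ?_) (fun x hx => ?_)
  · rw [Real.ball_eq_Ioo]; exact Set.Ioo_infinite (by linarith)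
  · rw [map_zero, MvPolynomial.eval_map]
    apply hcon x (hb _)
    rw [Metric.mem_ball, dist_pi_lt_iff hε]
    intro i
    exact hx i (Set.mem_univ i)

/-- If the pencil `M[y]` of symmetric matrices of integral quadratic forms
has generic rank `r ≥ 5` and cannot be put (by an invertible change of `x`-variables) in the
shape `l(y)·(N₁ ⊕ 0)` with `N₁` definite of order `r`, then there is a nonempty open set
`U ⊆ ℝ^h` on which a chosen (generically nonzero) `r × r` minor is nonvanishing and the real
quadratic form `Q_y` is indefinite. (Here `m = r + k`.) -/
theorem stmt5 (h r k : ℕ) (hr5 : 5 ≤ r)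
    (M : Fin h → Matrix (Fin (r + k)) (Fin (r + k)) ℚ)
    (hsym : ∀ i, (M i).IsSymm)
    (hintoff : ∀ i a b, ∃ z : ℤ, (z : ℚ) = 2 * M i a b)
    (hintdiag : ∀ i a, ∃ z : ℤ, (z : ℚ) = M i a a)
    (hgenrank : Matrix.rank
      (Matrix.of fun a b =>
        algebraMap (MvPolynomial (Fin h) ℚ) (FractionRing (MvPolynomial (Fin h) ℚ))
          (∑ i, X i * C (M i a b)) :
        Matrix (Fin (r + k)) (Fin (r + k)) (FractionRing (MvPolynomial (Fin h) ℚ))) = r)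
    (hnohyp1 : ¬ ∃ (l : Fin h → ℚ) (P : Matrix (Fin (r + k)) (Fin (r + k)) ℚ)
        (N₁ : Matrix (Fin r) (Fin r) ℚ),
        IsUnit P.det ∧ N₁.IsSymm ∧
        ((N₁.map ((↑) : ℚ → ℝ)).PosDef ∨ ((-N₁).map ((↑) : ℚ → ℝ)).PosDef) ∧
        ∀ y : Fin h → ℚ, Pᵀ * (∑ i, y i • M i) * P =
          (∑ i, l i * y i) •
            ((Matrix.fromBlocks N₁ 0 0 0).submatrix finSumFinEquiv.symm finSumFinEquiv.symm))
    (ρ σ : Fin r → Fin (r + k)) (hρ : Function.Injective ρ) (hσ : Function.Injective σ)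
    (hminor : ((Matrix.of fun a b =>
        algebraMap (MvPolynomial (Fin h) ℚ) (FractionRing (MvPolynomial (Fin h) ℚ))
          (∑ i, X i * C (M i a b)) :
        Matrix (Fin (r + k)) (Fin (r + k)) (FractionRing (MvPolynomial (Fin h) ℚ))).submatrix
          ρ σ).det ≠ 0) :
    ∃ U : Set (Fin h → ℝ), IsOpen U ∧ U.Nonempty ∧ ∀ y ∈ U,
      ((∑ i, y i • (M i).map ((↑) : ℚ → ℝ)).submatrix ρ σ).det ≠ 0 ∧
      (∃ u : Fin (r + k) → ℝ, 0 < u ⬝ᵥ (∑ i, y i • (M i).map ((↑) : ℚ → ℝ)).mulVec u) ∧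
      (∃ u : Fin (r + k) → ℝ, u ⬝ᵥ (∑ i, y i • (M i).map ((↑) : ℚ → ℝ)).mulVec u < 0) := by
  classical
  set G : Matrix (Fin (r + k)) (Fin (r + k)) (MvPolynomial (Fin h) ℚ) :=
    Matrix.of fun a b => ∑ i, X i * C (M i a b) with hG
  set p : (MvPolynomial (Fin h) ℚ) := (G.submatrix ρ σ).det with hp
  set A : (Fin h → ℝ) → Matrix (Fin (r + k)) (Fin (r + k)) ℝ :=
    fun y => ∑ i, y i • (M i).map ((↑) : ℚ → ℝ) with hA
  have hAapp : ∀ y a b, A y a b = ∑ i, y i * (M i a b : ℝ) := by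
    intro y a b
    simp [hA, Matrix.sum_apply]
  have hp0 : p ≠ 0 := by
    intro h0
    apply hminor
    have := congrArg (algebraMap (MvPolynomial (Fin h) ℚ) (FractionRing (MvPolynomial (Fin h) ℚ))) h0
    rw [hp, RingHom.map_det, map_zero] at this
    exact this
  have hpe : ∀ y, MvPolynomial.eval₂ (algebraMap ℚ ℝ) y p = ((A y).submatrix ρ σ).det := by
    intro y
    rw [← MvPolynomial.coe_eval₂Hom, hp, RingHom.map_det]
    congr 1
    ext a b
    simp [hG, hAapp]
  have hAc : Continuous A := by
    apply continuous_matrix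
    intro a b
    simp only [hAapp]
    fun_prop
  have hAs : ∀ y, (A y).IsHermitian := by
    intro y
    ext a b
    simp only [conjTranspose_apply, hAapp, star_trivial]
    exact Finset.sum_congr rfl fun i _ => by rw [(hsym i).apply]
  by_contra hcon
  -- every member of the real pencil is semidefinite
  have hsemi : ∀ y, (A y).PosSemidef ∨ (-(A y)).PosSemidef := by
    intro y
    by_contra! hy
    obtain ⟨hy1, hy2⟩ := hy
    have h1 : ∃ u, u ⬝ᵥ (A y) *ᵥ u < 0 := by
      by_contra! hh
      exact hy1 (.of_dotProduct_mulVec_nonneg (hAs y) (by simpa using hh))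
    have h2 : ∃ u, 0 < u ⬝ᵥ (A y) *ᵥ u := by
      by_contra! hh
      exact hy2 (.of_dotProduct_mulVec_nonneg (hAs y).neg
        (by simpa [Matrix.neg_mulVec] using hh))
    obtain ⟨u, hu⟩ := h1
    obtain ⟨v, hv⟩ := h2
    have hq : ∀ u : Fin (r + k) → ℝ, Continuous fun y => u ⬝ᵥ (A y) *ᵥ u := by
      intro u
      fun_prop
    have hUo : IsOpen {y | u ⬝ᵥ (A y) *ᵥ u < 0 ∧ 0 < v ⬝ᵥ (A y) *ᵥ v} :=
      (isOpen_lt (hq u) continuous_const).inter (isOpen_lt continuous_const (hq v))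
    obtain ⟨z, hz, hzp⟩ := nonvanish_aux p hp0 _ hUo ⟨y, hu, hv⟩
    rw [hpe] at hzp
    have hdc : Continuous fun y => ((A y).submatrix ρ σ).det := by fun_prop
    apply hcon
    refine ⟨{y | u ⬝ᵥ (A y) *ᵥ u < 0 ∧ 0 < v ⬝ᵥ (A y) *ᵥ v} ∩ {y | ((A y).submatrix ρ σ).det ≠ 0},
      hUo.inter (isOpen_ne_fun hdc continuous_const), ⟨z, hz, hzp⟩, ?_⟩
    rintro w ⟨⟨hw1, hw2⟩, hw3⟩
    exact ⟨hw3, ⟨v, hw2⟩, ⟨u, hw1⟩⟩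
  have htr : ∀ y, (A y).trace = 0 → A y = 0 := by
    intro y hy
    rcases hsemi y with hs | hs
    · exact hs.trace_eq_zero_iff.1 hy
    · exact neg_eq_zero.1 (hs.trace_eq_zero_iff.1 (by rw [trace_neg, hy, neg_zero]))
  have hArat : ∀ y : Fin h → ℚ,
      A (fun i => (y i : ℝ)) = (∑ i, y i • M i).map ((↑) : ℚ → ℝ) := by
    intro y
    ext a b
    simp [hAapp, Matrix.sum_apply]
  have htrQ : ∀ y : Fin h → ℚ, (∑ i, y i • M i).trace = 0 → ∑ i, y i • M i = 0 := by
    intro y hy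
    have h1 := htr (fun i => (y i : ℝ)) (by
      rw [hArat]
      have : ((∑ i, y i • M i).map ((↑) : ℚ → ℝ)).trace = (((∑ i, y i • M i).trace : ℚ) : ℝ) := by
        simp [Matrix.trace]
      rw [this, hy, Rat.cast_zero])
    rw [hArat] at h1
    ext a b
    have h2 := congrFun (congrFun h1 a) b
    simpa only [Matrix.map_apply, Matrix.zero_apply, Rat.cast_eq_zero] using h2
  have hsing : ∀ j, ∑ i, (Pi.single j (1 : ℚ) : Fin h → ℚ) i • M i = M j := by
    intro j
    simp [Pi.single_apply]
  have hj : ∃ j, (M j).trace ≠ 0 := by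
    by_contra! hh
    have hM0 : ∀ j, M j = 0 := by
      intro j
      have := htrQ (Pi.single j 1) (by rw [hsing, hh])
      rwa [hsing] at this
    have : r = 0 := by
      rw [← hgenrank]
      have h1 : (Matrix.of fun a b =>
          algebraMap (MvPolynomial (Fin h) ℚ) (FractionRing (MvPolynomial (Fin h) ℚ))
            (∑ i, X i * C (M i a b)) : Matrix (Fin (r + k)) (Fin (r + k))
              (FractionRing (MvPolynomial (Fin h) ℚ))) = 0 := by
        ext a b
        simp [hM0]
      rw [h1, Matrix.rank_zero]
    omega
  obtain ⟨j, hj⟩ := hj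
  set N := M j with hN
  set c : Fin h → ℚ := fun i => (M i).trace / N.trace with hc
  have hMc : ∀ i, M i = c i • N := by
    intro i
    have h1 : ∑ t, ((Pi.single i (1 : ℚ) : Fin h → ℚ) - c i • (Pi.single j (1 : ℚ) : Fin h → ℚ) : Fin h → ℚ) t • M t
        = M i - c i • N := by
      simp only [Pi.sub_apply, Pi.smul_apply, sub_smul, Finset.sum_sub_distrib, smul_assoc,
        ← Finset.smul_sum, hsing, hN]
    have h2 := htrQ _ (by
      rw [h1, trace_sub, trace_smul, hc, smul_eq_mul, div_mul_cancel₀ _ hj, sub_self])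
    rw [h1] at h2
    exact sub_eq_zero.1 h2
  have hNrank : N.rank = r := by
    set F := FractionRing (MvPolynomial (Fin h) ℚ)
    set s : F := algebraMap (MvPolynomial (Fin h) ℚ) F (∑ i, X i * C (c i)) with hs
    have h1 : (Matrix.of fun a b => algebraMap (MvPolynomial (Fin h) ℚ) F (∑ i, X i * C (M i a b)) :
        Matrix (Fin (r + k)) (Fin (r + k)) F) = s • N.map ((algebraMap (MvPolynomial (Fin h) ℚ) F).comp C) := by
      ext a b
      rw [Matrix.smul_apply, Matrix.map_apply, Matrix.of_apply, hs, RingHom.comp_apply,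
        smul_eq_mul, ← map_mul, Finset.sum_mul]
      congr 1
      refine Finset.sum_congr rfl fun i _ => ?_
      rw [hMc i, Matrix.smul_apply, smul_eq_mul, C_mul, mul_assoc]
    rw [h1] at hgenrank
    have hs0 : s ≠ 0 := by
      intro h0
      rw [h0, zero_smul, Matrix.rank_zero] at hgenrank
      omega
    rw [rank_smul_of_mem_nonZeroDivisors _ (mem_nonZeroDivisors_of_ne_zero hs0),
      rank_map_aux] at hgenrank
    exact hgenrank
  have hsum : ∀ y : Fin h → ℚ, ∑ i, y i • M i = (∑ i, c i * y i) • N := by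
    intro y
    rw [Finset.sum_smul]
    refine Finset.sum_congr rfl fun i _ => ?_
    conv_lhs => rw [hMc i]
    rw [smul_smul, mul_comm]
  have hNA : A (fun i => ((Pi.single j (1 : ℚ) : Fin h → ℚ) i : ℝ)) = N.map ((↑) : ℚ → ℝ) := by
    rw [hArat, hsing]
  apply hnohyp1
  rcases hNA ▸ hsemi (fun i => ((Pi.single j (1 : ℚ) : Fin h → ℚ) i : ℝ)) with hs | hs
  · obtain ⟨P, N₁, hP, hN1, hpd, hPN⟩ := split_posdef_aux N (hsym j) hNrank hs
    refine ⟨c, P, N₁, hP, hN1, Or.inl hpd, fun y => ?_⟩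
    rw [hsum, Matrix.mul_smul, Matrix.smul_mul, hPN]
  · have hneg : (-N).map ((↑) : ℚ → ℝ) = -(N.map ((↑) : ℚ → ℝ)) := by
      ext a b; simp
    have hrn : (-N).rank = r := by
      have := rank_smul_of_mem_nonZeroDivisors (c := (-1 : ℚ)) N
        (mem_nonZeroDivisors_of_ne_zero (by norm_num))
      rwa [neg_one_smul, hNrank] at this
    obtain ⟨P, N₁, hP, hN1, hpd, hPN⟩ :=
      split_posdef_aux (-N) (hsym j).neg hrn (by rw [hneg]; exact hs)
    refine ⟨fun i => - c i, P, N₁, hP, hN1, Or.inl hpd, fun y => ?_⟩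
    rw [hsum, ← hPN]
    simp [Finset.sum_neg_distrib]
end
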